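/- arXiv:2003.14007 — 4 statements merged into one kernel-verified Lean document; each statement's English description precedes it below -/
import Mathlib

section
/- Let n ≥ 3 and d be positive integers such that d is odd and n divides d. Then s_{dℕ}(D_{2n}) = 2d + ⌊log₂ n⌋. -/
/-- `T` is a 1-product sequence: its terms can be ordered so that their product is `1`. -/
def IsOneProdSeq {G : Type*} [Group G] (T : Multiset G) : Prop :=
  ∃ l : List G, (l : Multiset G) = T ∧ l.prod = 1


/-!
A sequence with at least one reflection is a 1-product sequence precisely when it splits into two
parts with equal exponent sums and equally many reflections, so the problem becomes one about
signed sums in `ZMod n`.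

For the upper bound let `k = ⌊log₂ n⌋`. Two equal terms, or two mutually inverse rotations, form a
splittable pair, and unless there are many distinct reflections such pairs abound and serve to
adjust lengths. It is then enough to find a short splittable sequence of odd length, or one of
even length that misses at most `k + 1` terms of a given part of the sequence. If there are many
repeated reflections, the pigeonhole principle on the `2 ^ (k + 1) > n` subsets of `k + 1` terms
provides the steps of a greedy construction of one of the two. If there are few reflections, two of
them, `sr y₁` and `sr y₂`, together with rotations of exponents `T` split as soon as
`(y₂ - y₁ + ∑ T) / 2` is a subset sum of `T`. If this always fails, the subset sums of the rotations
miss some residue, so outside the stabilizer of the set of subset sums there are few rotations, and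
the Erdős–Ginzburg–Ziv theorem applies inside it. If more than `n / 2` distinct reflections occur,
every nonzero residue is a difference of two of them.

For the lower bound take `2 * d - 1` copies of one reflection and the rotations with exponents
`1, 2, …, 2 ^ (k - 1)`. As distinct sets of these powers have distinct sums below `n`, a 1-product
subsequence is an even number of copies of the reflection.
-/

open Multiset hiding map_add map_zero le_iff_exists_add
open DihedralGroup

namespace DihedralSequence

variable {n : ℕ} {α : Type*}

section Multiset

theorem exists_le_card_eq (S : Multiset α) {k : ℕ} (hk : k ≤ card S) : ∃ T ≤ S, card T = k := by
  obtain ⟨T, hT⟩ := card_pos_iff_exists_mem.1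
    ((card_powersetCard k S).symm ▸ Nat.choose_pos hk : 0 < card (powersetCard k S))
  exact ⟨T, mem_powersetCard.1 hT⟩

theorem exists_add_eq_of_le_add {T U V : Multiset α} (h : T ≤ U + V) :
    ∃ T₁ ≤ U, ∃ T₂ ≤ V, T₁ + T₂ = T := by
  classical
  exact ⟨T ∩ U, inter_le_right, T - U, Multiset.sub_le_iff_le_add'.2 h,
    add_comm (T ∩ U) _ ▸ sub_add_inter T U⟩

theorem exists_map_eq_of_le_map {β : Type*} {f : α → β} {S : Multiset α} {T : Multiset β}
    (h : T ≤ S.map f) : ∃ T' ≤ S, T'.map f = T := by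
  induction S using Quotient.inductionOn with | h l =>
  induction T using Quotient.inductionOn with | h t =>
  obtain ⟨t', ht', hsub⟩ := h
  obtain ⟨l', hl', rfl⟩ := List.sublist_map_iff.1 hsub
  exact ⟨l', hl'.subperm, Quotient.sound ht'⟩

theorem exists_nodup_add_self_add (S : Multiset α) :
    ∃ D P : Multiset α, D.Nodup ∧ S = D + (P + P) := by
  classical
  induction S using Multiset.induction with
  | empty => exact ⟨0, 0, nodup_zero, rfl⟩
  | cons a S ih =>
    obtain ⟨D, P, hD, rfl⟩ := ih
    by_cases ha : a ∈ D
    · obtain ⟨D, rfl⟩ := exists_cons_of_mem ha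
      exact ⟨D, a ::ₘ P, (nodup_cons.1 hD).2, by simp only [cons_add, add_cons]⟩
    · exact ⟨a ::ₘ D, P, nodup_cons.2 ⟨ha, hD⟩, by rw [cons_add]⟩

theorem exists_pair_le_of_not_nodup {S : Multiset α} (h : ¬S.Nodup) : ∃ a, {a} + {a} ≤ S := by
  simpa [nodup_iff_le] using h

theorem exists_half_le_of_add_self_le_add {Q A B : Multiset α} (h : Q + Q ≤ A + B) :
    ∃ Q' ≤ Q, card Q ≤ 2 * card Q' ∧ (Q' ≤ A ∨ Q' ≤ B) := by
  classical
  have hB : Q - A ≤ B := by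
    rw [Multiset.le_iff_count] at h ⊢
    intro a
    have := h a
    simp only [count_add, count_sub] at this ⊢
    omega
  have hcard : card (Q - A) + card (Q ∩ A) = card Q := by rw [← card_add, sub_add_inter]
  rcases le_total (card (Q - A)) (card (Q ∩ A)) with hle | hle
  · exact ⟨Q ∩ A, inter_le_left, by omega, .inl inter_le_right⟩
  · exact ⟨Q - A, Multiset.sub_le_self Q A, by omega, .inr hB⟩

end Multiset

section Split

/-- The sum of the exponents of a sequence, where `r i` and `sr i` both have exponent `i`. -/
def expSum : Multiset (DihedralGroup n) →+ ZMod n :=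
  sumAddMonoidHom.comp (mapAddMonoidHom fun | r i => i | sr i => i)

/-- The number of reflections in a sequence. -/
def reflCount : Multiset (DihedralGroup n) →+ ℕ :=
  sumAddMonoidHom.comp (mapAddMonoidHom fun | r _ => 0 | sr _ => 1)

@[simp] theorem expSum_singleton_r (i : ZMod n) : expSum {r i} = i := by simp [expSum]
@[simp] theorem expSum_singleton_sr (i : ZMod n) : expSum {sr i} = i := by simp [expSum]
@[simp] theorem reflCount_singleton_r (i : ZMod n) : reflCount {r i} = 0 := by simp [reflCount]
@[simp] theorem reflCount_singleton_sr (i : ZMod n) : reflCount {sr i} = 1 := by simp [reflCount]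

@[simp] theorem expSum_cons (g : DihedralGroup n) (T : Multiset (DihedralGroup n)) :
    expSum (g ::ₘ T) = expSum {g} + expSum T := by rw [← singleton_add, map_add]

@[simp] theorem reflCount_cons (g : DihedralGroup n) (T : Multiset (DihedralGroup n)) :
    reflCount (g ::ₘ T) = reflCount {g} + reflCount T := by rw [← singleton_add, map_add]

@[simp] theorem expSum_map_r (X : Multiset (ZMod n)) : expSum (X.map r) = X.sum := by
  simp [expSum]

@[simp] theorem expSum_map_sr (X : Multiset (ZMod n)) : expSum (X.map sr) = X.sum := by
  simp [expSum]

@[simp] theorem reflCount_map_r (X : Multiset (ZMod n)) : reflCount (X.map r) = 0 := by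
  simp [reflCount]

@[simp] theorem reflCount_map_sr (X : Multiset (ZMod n)) : reflCount (X.map sr) = card X := by
  simp [reflCount]

theorem exists_eq_map_r_add_map_sr (T : Multiset (DihedralGroup n)) :
    ∃ X Y : Multiset (ZMod n), T = X.map r + Y.map sr := by
  induction T using Multiset.induction with
  | empty => exact ⟨0, 0, rfl⟩
  | cons g T ih =>
    obtain ⟨X, Y, rfl⟩ := ih
    rcases g with i | i
    · exact ⟨i ::ₘ X, Y, by rw [map_cons, cons_add]⟩
    · exact ⟨X, i ::ₘ Y, by rw [map_cons, add_cons]⟩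

theorem reflCount_mono {S T : Multiset (DihedralGroup n)} (h : S ≤ T) :
    reflCount S ≤ reflCount T := by
  obtain ⟨C, rfl⟩ := le_iff_exists_add.1 h
  simp

theorem reflCount_le_card (T : Multiset (DihedralGroup n)) : reflCount T ≤ card T := by
  obtain ⟨X, Y, rfl⟩ := exists_eq_map_r_add_map_sr T
  simp

theorem reflCount_eq_card_of_le {S T : Multiset (DihedralGroup n)} (h : S ≤ T)
    (hT : reflCount T = card T) : reflCount S = card S := by
  obtain ⟨C, rfl⟩ := le_iff_exists_add.1 h
  have hS := reflCount_le_card S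
  have hC := reflCount_le_card C
  simp only [map_add, card_add] at hT
  omega

/-- A sequence is splittable if it is the union of two sequences with equal exponent sums and
equally many reflections. For sequences containing a reflection, this is the commutative
description of being a 1-product sequence: in a product, the sign with which an exponent counts
is governed by the parity of the number of reflections on one side of it. -/
def IsSplittable (T : Multiset (DihedralGroup n)) : Prop :=
  ∃ A B, A + B = T ∧ expSum A = expSum B ∧ reflCount A = reflCount B

namespace IsSplittable

variable {S T : Multiset (DihedralGroup n)}

theorem add (hS : IsSplittable S) (hT : IsSplittable T) : IsSplittable (S + T) := by
  obtain ⟨A, B, rfl, he, hr⟩ := hS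
  obtain ⟨A', B', rfl, he', hr'⟩ := hT
  exact ⟨A + A', B + B', add_add_add_comm .., by simp only [map_add, he, he'],
    by simp only [map_add, hr, hr']⟩

theorem add_self (P : Multiset (DihedralGroup n)) : IsSplittable (P + P) := ⟨P, P, rfl, rfl, rfl⟩

theorem even_reflCount (hT : IsSplittable T) : Even (reflCount T) := by
  obtain ⟨A, B, rfl, -, hr⟩ := hT
  exact ⟨reflCount B, by rw [map_add, hr]⟩

end IsSplittable

end Split

section Product

theorem exists_list_prod_eq_map_r (X : Multiset (ZMod n)) :
    ∃ l : List (DihedralGroup n), (l : Multiset _) = X.map r ∧ l.prod = r X.sum := by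
  induction X using Multiset.induction with
  | empty => exact ⟨[], rfl, by simp⟩
  | cons a X ih =>
    obtain ⟨l, hl, hprod⟩ := ih
    exact ⟨r a :: l, by rw [← cons_coe, hl, map_cons], by simp [hprod]⟩

theorem exists_list_prod_eq_map_sr {X Y : Multiset (ZMod n)} (h : card X = card Y) :
    ∃ l : List (DihedralGroup n), (l : Multiset _) = X.map sr + Y.map sr ∧
      l.prod = r (Y.sum - X.sum) := by
  induction X using Multiset.induction generalizing Y with
  | empty =>
    obtain rfl := card_eq_zero.1 h.symm
    exact ⟨[], rfl, by simp⟩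
  | cons a X ih =>
    obtain ⟨b, Y, rfl⟩ : ∃ b Y', Y = b ::ₘ Y' := by
      obtain ⟨b, hb⟩ := card_pos_iff_exists_mem.1 (by rw [← h, card_cons]; omega : 0 < card Y)
      exact ⟨b, exists_cons_of_mem hb⟩
    obtain ⟨l, hl, hprod⟩ := ih (Y := Y) (by simpa using h)
    refine ⟨sr a :: sr b :: l, ?_, ?_⟩
    · rw [← cons_coe, ← cons_coe, hl, map_cons, map_cons, cons_add, add_cons, cons_swap]
    · rw [List.prod_cons, List.prod_cons, hprod, ← mul_assoc, sr_mul_sr, r_mul_r, sum_cons,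
        sum_cons]
      congr 1
      ring

theorem isOneProdSeq_map_r {X : Multiset (ZMod n)} (h : X.sum = 0) :
    IsOneProdSeq (X.map (r : ZMod n → DihedralGroup n)) := by
  obtain ⟨l, hl, hprod⟩ := exists_list_prod_eq_map_r X
  exact ⟨l, hl, by rw [hprod, h, one_def]⟩

/-- If `A` and `B` have rotation parts `X`, `Z` and reflection parts `a ::ₘ Y`, `b ::ₘ W`, the
ordering used is `Z, sr a, X, sr b`, followed by the alternating product of `Y` and `W`. -/
theorem IsSplittable.isOneProdSeq {T : Multiset (DihedralGroup n)} (h : IsSplittable T)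
    (hr : reflCount T ≠ 0) : IsOneProdSeq T := by
  obtain ⟨A, B, rfl, hexp, hcount⟩ := h
  obtain ⟨X, Y, rfl⟩ := exists_eq_map_r_add_map_sr A
  obtain ⟨Z, W, rfl⟩ := exists_eq_map_r_add_map_sr B
  simp only [map_add, expSum_map_r, expSum_map_sr, reflCount_map_r, reflCount_map_sr,
    zero_add] at hexp hcount hr
  obtain ⟨a, ha⟩ := card_pos_iff_exists_mem.1 (by omega : 0 < card Y)
  obtain ⟨b, hb⟩ := card_pos_iff_exists_mem.1 (by omega : 0 < card W)
  obtain ⟨Y, rfl⟩ := exists_cons_of_mem ha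
  obtain ⟨W, rfl⟩ := exists_cons_of_mem hb
  obtain ⟨lX, hlX, hX⟩ := exists_list_prod_eq_map_r X
  obtain ⟨lZ, hlZ, hZ⟩ := exists_list_prod_eq_map_r Z
  obtain ⟨lYW, hlYW, hYW⟩ := exists_list_prod_eq_map_sr (X := Y) (Y := W) (by simpa using hcount)
  refine ⟨lZ ++ [sr a] ++ lX ++ [sr b] ++ lYW, ?_, ?_⟩
  · simp only [← coe_add, hlX, hlZ, hlYW, coe_singleton, ← singleton_add, Multiset.map_add,
      map_singleton]
    abel
  · simp only [List.prod_append, List.prod_singleton, hX, hZ, hYW, r_mul_sr, sr_mul_r, sr_mul_sr,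
      r_mul_r, one_def]
    rw [sum_cons, sum_cons] at hexp
    congr 1
    linear_combination -hexp

theorem exists_expSum_sub_of_prod (l : List (DihedralGroup n)) :
    ∃ A B, A + B = (l : Multiset _) ∧ l.prod =
      if Even (reflCount (l : Multiset (DihedralGroup n))) then r (expSum A - expSum B)
      else sr (expSum A - expSum B) := by
  induction l with
  | nil => exact ⟨0, 0, rfl, by simp⟩
  | cons g l ih =>
    obtain ⟨A, B, hAB, hprod⟩ := ih
    rw [List.prod_cons, hprod, ← cons_coe, reflCount_cons]
    by_cases he : Even (reflCount (l : Multiset (DihedralGroup n))) <;> rcases g with i | i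
    · exact ⟨r i ::ₘ A, B, by rw [cons_add, hAB], by simp [he]; ring⟩
    · exact ⟨sr i ::ₘ A, B, by rw [cons_add, hAB], by simp [he, Nat.even_add]; ring⟩
    · exact ⟨A, r i ::ₘ B, by rw [add_cons, hAB], by simp [he]; ring⟩
    · exact ⟨A, sr i ::ₘ B, by rw [add_cons, hAB], by simp [he, Nat.even_add]; ring⟩

theorem even_reflCount_and_exists_expSum_eq {T : Multiset (DihedralGroup n)}
    (h : IsOneProdSeq T) :
    Even (reflCount T) ∧ ∃ A B, A + B = T ∧ expSum A = expSum B := by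
  obtain ⟨l, rfl, hl⟩ := h
  obtain ⟨A, B, hAB, hprod⟩ := exists_expSum_sub_of_prod l
  rw [hl, one_def] at hprod
  split_ifs at hprod with he
  exact ⟨he, A, B, hAB, sub_eq_zero.1 (r.inj hprod).symm⟩

end Product

section Pairs

/-- `S` contains a nonempty 1-product subsequence of length divisible by `d`. -/
def HasDvdOneProd (d : ℕ) (S : Multiset (DihedralGroup n)) : Prop :=
  ∃ T ≤ S, T ≠ 0 ∧ d ∣ card T ∧ IsOneProdSeq T

/-- `S` contains a splittable subsequence of odd length at most `b` that has a reflection. -/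
def HasOddSplittable (b : ℕ) (S : Multiset (DihedralGroup n)) : Prop :=
  ∃ O ≤ S, IsSplittable O ∧ reflCount O ≠ 0 ∧ Odd (card O) ∧ card O ≤ b

/-- Every subsequence of `S` with more than `b` terms contains a splittable pair. -/
def HasPairsBeyond (b : ℕ) (S : Multiset (DihedralGroup n)) : Prop :=
  ∀ T ≤ S, b < card T → ∃ P ≤ T, card P = 2 ∧ IsSplittable P

variable {b c d j : ℕ} {S S' T : Multiset (DihedralGroup n)}

theorem IsSplittable.hasDvdOneProd (hT : IsSplittable T) (hTS : T ≤ S) (hr : reflCount T ≠ 0)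
    (hd : d ∣ card T) : HasDvdOneProd d S :=
  ⟨T, hTS, by rintro rfl; simp at hr, hd, hT.isOneProdSeq hr⟩

theorem hasDvdOneProd_of_sum_eq_zero {X Z : Multiset (ZMod n)} (hd : 0 < d) (hZ : Z.sum = 0)
    (hcard : card Z = d) (hZX : Z ≤ X) (hXS : X.map r ≤ S) : HasDvdOneProd d S := by
  refine ⟨Z.map r, (map_le_map hZX).trans hXS, ?_, by simp [hcard], isOneProdSeq_map_r hZ⟩
  rw [← card_pos, card_map, hcard]
  exact hd

theorem HasOddSplittable.mono (h : HasOddSplittable b S) (hbc : b ≤ c) (hS : S ≤ S') :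
    HasOddSplittable c S' := by
  obtain ⟨O, hOS, hO, hr, hodd, hcard⟩ := h
  exact ⟨O, hOS.trans hS, hO, hr, hodd, hcard.trans hbc⟩

theorem HasPairsBeyond.mono (h : HasPairsBeyond b S) (hbc : b ≤ c) (hS : S' ≤ S) :
    HasPairsBeyond c S' := fun T hT hcard ↦ h T (hT.trans hS) (hbc.trans_lt hcard)

theorem HasPairsBeyond.exists_fill (h : HasPairsBeyond b S) (hj : 2 * j + b ≤ card S + 1) :
    ∃ Q ≤ S, card Q = 2 * j ∧ ∀ i ≤ j, ∃ T ≤ Q, IsSplittable T ∧ card T = 2 * i := by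
  induction j with
  | zero => exact ⟨0, zero_le, rfl, fun i hi ↦ ⟨0, le_rfl, .add_self 0, by simp; omega⟩⟩
  | succ j ih =>
    obtain ⟨Q, hQS, hQ, hfill⟩ := ih (by omega)
    obtain ⟨R, rfl⟩ := le_iff_exists_add.1 hQS
    rw [card_add] at hj
    obtain ⟨P, hPR, hP, hsplit⟩ := h R (le_add_left R Q) (by omega)
    refine ⟨Q + P, add_le_add_right hPR Q, by rw [card_add]; omega, fun i hi ↦ ?_⟩
    rcases hi.lt_or_eq with hi | rfl
    · obtain ⟨T, hTQ, hT⟩ := hfill i (by omega)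
      exact ⟨T, hTQ.trans (le_add_right Q P), hT⟩
    · obtain ⟨T, hTQ, hT, hcard⟩ := hfill j le_rfl
      exact ⟨T + P, add_le_add_left hTQ P, hT.add hsplit, by rw [card_add]; omega⟩

theorem HasPairsBeyond.hasDvdOneProd (h : HasPairsBeyond b S) (hO : HasOddSplittable d S)
    (hd : Odd d) (hcard : b + d ≤ card S + 1) : HasDvdOneProd d S := by
  obtain ⟨O, hOS, hO, hr, hodd, hOd⟩ := hO
  obtain ⟨R, rfl⟩ := le_iff_exists_add.1 hOS
  obtain ⟨j, hj⟩ : ∃ j, d = card O + 2 * j := by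
    obtain ⟨p, hp⟩ := hd
    obtain ⟨q, hq⟩ := hodd
    exact ⟨p - q, by omega⟩
  rw [card_add] at hcard
  obtain ⟨Q, hQR, -, hfill⟩ := (h.mono le_rfl (le_add_left R O)).exists_fill (j := j) (by omega)
  obtain ⟨T, hTQ, hT, hTcard⟩ := hfill j le_rfl
  exact (hO.add hT).hasDvdOneProd (add_le_add_right (hTQ.trans hQR) O)
    (by rw [map_add]; omega) (by rw [card_add, hTcard, ← hj])

end Pairs

section Growth

variable {k : ℕ} {x : DihedralGroup n} {L : Finset (DihedralGroup n)}
  {E M Q : Multiset (DihedralGroup n)}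

theorem reflCount_lt_card_of_le {S T : Multiset (DihedralGroup n)} (h : S ≤ T)
    (hS : reflCount S < card S) : reflCount T < card T :=
  (reflCount_le_card T).lt_of_ne fun hT ↦ hS.ne (reflCount_eq_card_of_le h hT)

theorem exists_chain_add (Q : Multiset α) :
    ∃ C : ℕ → Multiset α, (∀ m ≤ card Q, card (C m) = m) ∧ (∀ m, C m ≤ Q) ∧ Monotone C := by
  induction Q using Quotient.inductionOn with | h l =>
  exact ⟨fun m ↦ (l.take m : List α), fun m hm ↦ by simpa using hm,
    fun m ↦ (List.take_sublist m l).subperm,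
    fun a b hab ↦ (List.take_sublist_take_left hab).subperm⟩

/-- Pigeonhole with one degree of freedom `U X` per subset `X ⊆ L` and one more for moving
reflections from `Q` across the splitting, `2 * expSum J` being the effect of moving `J`. -/
theorem exists_ne_expSum_add_eq [NeZero n] {U : Finset (DihedralGroup n) → Finset (DihedralGroup n)}
    {c : ℕ} (hL : n < 2 ^ L.card) (hQ : reflCount Q = card Q)
    (hU : ∀ X ⊆ L, ∃ m ≤ card Q, reflCount (U X).val + 2 * m = c) :
    ∃ X ⊆ L, ∃ Y ⊆ L, X ≠ Y ∧ ∃ J ≤ Q,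
      expSum ((U X).val + (J + J)) = expSum (U Y).val ∧
      reflCount ((U X).val + (J + J)) = reflCount (U Y).val := by
  obtain ⟨C, hcard, hCQ, hmono⟩ := exists_chain_add Q
  choose! m hmQ hmc using hU
  obtain ⟨X, hX, Y, hY, hne, heq⟩ : ∃ X ∈ L.powerset, ∃ Y ∈ L.powerset, X ≠ Y ∧
      expSum ((U X).val + (C (m X) + C (m X))) = expSum ((U Y).val + (C (m Y) + C (m Y))) :=
    Finset.exists_ne_map_eq_of_card_lt_of_maps_to (t := Finset.univ)
      (by rwa [Finset.card_univ, ZMod.card, Finset.card_powerset]) fun _ _ ↦ Finset.mem_univ _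
  rw [Finset.mem_powerset] at hX hY
  wlog hle : m Y ≤ m X generalizing X Y
  · exact this Y hY X hX hne.symm heq.symm (by omega)
  obtain ⟨J, hJ⟩ := le_iff_exists_add.1 (hmono hle)
  have hJQ : J ≤ Q := (le_add_left J _).trans (hJ ▸ hCQ (m X))
  have hJcard : card J + m Y = m X := by
    rw [← hcard _ (hmQ X hX), hJ, card_add, hcard _ (hmQ Y hY), add_comm]
  refine ⟨X, hX, Y, hY, hne, J, hJQ, ?_, ?_⟩
  · simp only [hJ, map_add] at heq ⊢
    linear_combination heq
  · have := hmc X hX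
    have := hmc Y hY
    have := reflCount_eq_card_of_le hJQ hQ
    simp only [map_add]
    omega

theorem exists_disjoint_of_ne {s t u : Finset α} (hs : s ⊆ u) (ht : t ⊆ u) (hne : s ≠ t) :
    ∃ A B C : Multiset α, s.val = A + C ∧ t.val = B + C ∧ A + B ≤ u.val ∧ A + B ≠ 0 := by
  classical
  refine ⟨s.val - t.val, t.val - s.val, s.val ∩ t.val, (sub_add_inter _ _).symm, ?_, ?_, ?_⟩
  · rw [inter_comm, sub_add_inter]
  · calc s.val - t.val + (t.val - s.val) ≤ s.val - t.val + t.val :=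
        add_le_add_right (Multiset.sub_le_self _ _) _
      _ = s.val ∪ t.val := rfl
      _ ≤ u.val := union_le (Finset.val_le_iff.2 hs) (Finset.val_le_iff.2 ht)
  · intro h
    obtain ⟨hst, hts⟩ := add_eq_zero.1 h
    rw [tsub_eq_zero_iff_le, Finset.val_le_iff] at hst hts
    exact hne (hst.antisymm hts)

theorem exists_erase_eq_reflCount_add_eq [DecidableEq (DihedralGroup n)]
    {X : Finset (DihedralGroup n)} (hxL : x ∉ L)
    (hx : reflCount {x} = 1 ∨ reflCount L.val = 0) (hX : X ⊆ L) :
    ∃ Y ⊆ insert x L, Y.erase x = X ∧ (x ∈ Y → reflCount {x} = 1) ∧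
      ∃ m, reflCount Y.val + 2 * m = reflCount L.val := by
  have hxX : x ∉ X := fun h ↦ hxL (hX h)
  have hle : reflCount X.val ≤ reflCount L.val := reflCount_mono (Finset.val_le_iff.2 hX)
  obtain ⟨m, hm | hm⟩ := Nat.even_or_odd' (reflCount L.val - reflCount X.val)
  · exact ⟨X, hX.trans (Finset.subset_insert x L), Finset.erase_eq_of_notMem hxX,
      fun h ↦ absurd h hxX, m, by omega⟩
  · refine ⟨insert x X, Finset.insert_subset_insert x hX, Finset.erase_insert hxX,
      fun _ ↦ by omega, m, ?_⟩
    rw [Finset.insert_val_of_notMem hxX, reflCount_cons]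
    omega

theorem exists_expSum_add_eq [NeZero n] (hL : n < 2 ^ L.card) (hxL : x ∉ L)
    (hx : reflCount {x} = 1 ∨ reflCount L.val = 0) (hQ : reflCount Q = card Q)
    (hLQ : reflCount L.val ≤ 2 * card Q + 1) :
    ∃ A B, A + B ≤ x ::ₘ L.val ∧ A + B ≠ 0 ∧ (x ∈ A + B → reflCount {x} = 1) ∧
      ∃ J ≤ Q, 2 * card J ≤ reflCount L.val ∧
        expSum (A + (J + J)) = expSum B ∧ reflCount (A + (J + J)) = reflCount B := by
  classical
  choose! U hUL herase hUx m hm using fun X ↦ exists_erase_eq_reflCount_add_eq hxL hx (X := X)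
  obtain ⟨X, hX, Y, hY, hne, J, hJQ, hexp, hrefl⟩ := exists_ne_expSum_add_eq hL hQ
    fun X hX ↦ ⟨m X, by have := hm X hX; omega, hm X hX⟩
  obtain ⟨A, B, C, hA, hB, hle, hAB⟩ := exists_disjoint_of_ne (hUL X hX) (hUL Y hY)
    fun h ↦ hne (by rw [← herase X hX, h, herase Y hY])
  refine ⟨A, B, by rwa [← Finset.insert_val_of_notMem hxL], hAB, fun h ↦ ?_, J, hJQ, ?_, ?_, ?_⟩
  · rcases Multiset.mem_add.1 h with h | h
    · exact hUx X hX (Finset.mem_def.2 (hA ▸ Multiset.mem_add.2 (.inl h)))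
    · exact hUx Y hY (Finset.mem_def.2 (hB ▸ Multiset.mem_add.2 (.inl h)))
  · have := hm Y hY
    have := reflCount_eq_card_of_le hJQ hQ
    simp only [map_add] at hrefl
    omega
  · simp only [hA, hB, map_add] at hexp ⊢
    linear_combination hexp
  · simp only [hA, hB, map_add] at hrefl ⊢
    omega

theorem exists_cons_reflCount_eq (hM : M ≠ 0) :
    ∃ x R, M = x ::ₘ R ∧ (reflCount {x} = 1 ∨ reflCount R = 0) := by
  obtain ⟨X, Y, rfl⟩ := exists_eq_map_r_add_map_sr M
  rcases empty_or_exists_mem Y with rfl | ⟨y, hy⟩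
  · obtain ⟨x, hx⟩ := exists_mem_of_ne_zero hM
    obtain ⟨R, hR⟩ := exists_cons_of_mem hx
    refine ⟨x, R, hR, .inr (Nat.eq_zero_of_le_zero ?_)⟩
    have := reflCount_mono (le_cons_self R x)
    rw [← hR] at this
    simpa using this
  · obtain ⟨Y, rfl⟩ := exists_cons_of_mem hy
    exact ⟨sr y, X.map r + Y.map sr, by rw [map_cons, add_cons], .inl (reflCount_singleton_sr y)⟩

theorem IsSplittable.hasOddSplittable_of_reflCount_eq_zero {K : Multiset (DihedralGroup n)}
    (hK : IsSplittable K) (hKr : reflCount K = 0) (hKodd : Odd (card K)) (hKk : card K ≤ k + 1)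
    (hKM : K ≤ M) (hk : 1 ≤ k) (hQ : Q ≠ 0) (hQr : reflCount Q = card Q) :
    HasOddSplittable (2 * k + 1) (M + (Q + Q)) := by
  obtain ⟨q, hq⟩ := exists_mem_of_ne_zero hQ
  have hqQ : {q} ≤ Q := singleton_le.2 hq
  have hqr : reflCount {q} = 1 := by
    simpa using reflCount_eq_card_of_le hqQ hQr
  have hcard : card (K + ({q} + {q})) = card K + 2 := card_add _ _
  obtain ⟨p, hp⟩ := hKodd
  refine ⟨K + ({q} + {q}), add_le_add hKM (add_le_add hqQ hqQ), hK.add (.add_self {q}), ?_,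
    ⟨p + 1, by omega⟩, by omega⟩
  rw [map_add, map_add reflCount {q}, hqr]
  omega

theorem hasOddSplittable_of_expSum_add_eq {A B J R : Multiset (DihedralGroup n)} (hk : 1 ≤ k)
    (hR : card R = k + 1) (hAB : A + B ≤ x ::ₘ R) (hodd : Odd (card (A + B)))
    (hx : x ∈ A + B → reflCount {x} = 1) (hQ : Q ≠ 0) (hQr : reflCount Q = card Q) (hJ : J ≤ Q)
    (hJR : 2 * card J ≤ reflCount R) (hexp : expSum (A + (J + J)) = expSum B)
    (hrefl : reflCount (A + (J + J)) = reflCount B) :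
    HasOddSplittable (2 * k + 1) (x ::ₘ R + (Q + Q)) := by
  have hJr : reflCount J = card J := reflCount_eq_card_of_le hJ hQr
  have hsplit : IsSplittable (A + B + (J + J)) :=
    ⟨A + (J + J), B, add_right_comm A _ B, hexp, hrefl⟩
  have hABle : card (A + B) ≤ k + 2 := by simpa [hR] using card_le_card hAB
  have hlt : reflCount (A + B) < card (A + B) := by
    have heven : Even (reflCount (A + B)) := by
      simpa [Nat.even_add] using hsplit.even_reflCount
    exact (reflCount_le_card _).lt_of_ne fun h ↦ Nat.not_even_iff_odd.2 hodd (h ▸ heven)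
  by_cases hO : reflCount (A + B) + card J = 0
  · have hxAB : x ∉ A + B := fun h ↦ by
      have := reflCount_mono (singleton_le.2 h)
      have := hx h
      omega
    have hABR : A + B ≤ R := (le_cons_of_notMem hxAB).1 hAB
    obtain rfl : J = 0 := card_eq_zero.1 (by omega)
    rw [add_zero, add_zero] at hsplit
    exact hsplit.hasOddSplittable_of_reflCount_eq_zero (by omega) hodd (hR ▸ card_le_card hABR)
      hAB hk hQ hQr
  · have hRk : reflCount R ≤ k := by
      by_cases hxAB : x ∈ A + B
      · have := reflCount_lt_card_of_le hAB hlt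
        rw [reflCount_cons, card_cons, hx hxAB] at this
        omega
      · have := reflCount_lt_card_of_le ((le_cons_of_notMem hxAB).1 hAB) hlt
        omega
    have hcard : card (A + B + (J + J)) = card (A + B) + 2 * card J := by
      rw [card_add _ (J + J), card_add J, two_mul]
    obtain ⟨p, hp⟩ := hodd
    refine ⟨A + B + (J + J), add_le_add hAB (add_le_add hJ hJ), hsplit, ?_,
      ⟨p + card J, by omega⟩, by omega⟩
    rw [map_add, map_add reflCount J, hJr]
    omega

/-- With `E + (Q + Q)` split as `A + B`, at least half of `Q` lies in the same part of the
splitting, and this is the supply of reflections that can be moved to the other part. -/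
theorem IsSplittable.exists_even_extension [NeZero n] (hk : 1 ≤ k) (hnk : n < 2 ^ (k + 1))
    (hQ : Q ≠ 0) (hQr : reflCount Q = card Q)
    (hMQ : ∀ L ≤ M, L.Nodup → card L = k + 1 → reflCount L ≤ card Q + 1)
    (hE : IsSplittable (E + (Q + Q))) (hM : card M = k + 2) :
    HasOddSplittable (2 * k + 1) (M + (Q + Q)) ∨
      ∃ K ≤ M, K ≠ 0 ∧ Even (card K) ∧ IsSplittable (K + (E + (Q + Q))) := by
  by_cases hnodup : M.Nodup
  swap
  · obtain ⟨g, hg⟩ := exists_pair_le_of_not_nodup hnodup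
    exact .inr ⟨{g} + {g}, hg, by simp, by simp, (add_self {g}).add hE⟩
  obtain ⟨x, R, rfl, hx⟩ := exists_cons_reflCount_eq (M := M) (by rintro rfl; simp at hM)
  obtain ⟨hxR, hRnodup⟩ := nodup_cons.1 hnodup
  rw [card_cons, Nat.add_right_cancel_iff] at hM
  obtain ⟨A₀, B₀, hAB₀, hexp₀, hrefl₀⟩ := hE
  wlog hQA : ∃ Q' ≤ Q, card Q ≤ 2 * card Q' ∧ Q' ≤ A₀ generalizing A₀ B₀
  · obtain ⟨Q', hQ', hcard, hA | hB⟩ :=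
      exists_half_le_of_add_self_le_add (hAB₀ ▸ le_add_left (Q + Q) E)
    · exact absurd ⟨Q', hQ', hcard, hA⟩ hQA
    · exact this B₀ A₀ (by rw [add_comm, hAB₀]) hexp₀.symm hrefl₀.symm ⟨Q', hQ', hcard, hB⟩
  obtain ⟨Q', hQ'Q, hhalf, hQ'A⟩ := hQA
  have hRle : reflCount R ≤ card Q + 1 := hMQ R (le_cons_self R x) hRnodup hM
  obtain ⟨A, B, hAB, hne, hxAB, J, hJ, hJR, hexp, hrefl⟩ :=
    exists_expSum_add_eq (L := ⟨R, hRnodup⟩) (Q := Q') (hnk.trans_eq (congrArg _ hM.symm)) hxR hx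
      (reflCount_eq_card_of_le hQ'Q hQr) (by simp only; omega)
  rcases Nat.even_or_odd (card (A + B)) with heven | hodd
  · obtain ⟨A₁, rfl⟩ := le_iff_exists_add.1 (hJ.trans hQ'A)
    refine .inr ⟨A + B, hAB, hne, heven, A₁ + B, B₀ + J + A, ?_, ?_, ?_⟩
    · rw [← hAB₀]
      abel
    · simp only [map_add] at hexp hexp₀ ⊢
      linear_combination hexp₀ - hexp
    · simp only [map_add] at hrefl hrefl₀ ⊢
      omega
  · exact .inl (hasOddSplittable_of_expSum_add_eq hk hM hAB hodd hxAB hQ hQr (hJ.trans hQ'Q) hJR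
      hexp hrefl)

theorem IsSplittable.exists_maximal_even_extension [NeZero n] (hk : 1 ≤ k)
    (hnk : n < 2 ^ (k + 1)) (hQ : Q ≠ 0) (hQr : reflCount Q = card Q)
    (hMQ : ∀ L ≤ M, L.Nodup → card L = k + 1 → reflCount L ≤ card Q + 1)
    (hE : IsSplittable (E + (Q + Q))) :
    HasOddSplittable (2 * k + 1) (M + (Q + Q)) ∨
      ∃ K ≤ M, Even (card K) ∧ IsSplittable (K + (E + (Q + Q))) ∧ card M ≤ card K + k + 1 := by
  induction hm : card M using Nat.strong_induction_on generalizing M E with | h m ih =>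
  by_cases hmk : m ≤ k + 1
  · exact .inr ⟨0, zero_le, by simp, by rwa [zero_add], by simp; omega⟩
  obtain ⟨L, hLM, hL⟩ := exists_le_card_eq M (k := k + 2) (by omega)
  rcases hE.exists_even_extension hk hnk hQ hQr (fun L' h ↦ hMQ L' (h.trans hLM)) hL with
    hodd | ⟨K, hKL, hK, heven, hsplit⟩
  · exact .inl (hodd.mono le_rfl (add_le_add_left hLM _))
  obtain ⟨R, rfl⟩ := le_iff_exists_add.1 (hKL.trans hLM)
  have hKpos := card_pos.2 hK
  rw [card_add] at hm
  rcases ih (card R) (by omega) (M := R) (E := K + E)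
    (fun L' h ↦ hMQ L' (h.trans (le_add_left R K))) (by rwa [add_assoc]) rfl with
    hodd | ⟨K', hK', heven', hsplit', hcard⟩
  · exact .inl (hodd.mono le_rfl (add_le_add_left (le_add_left R K) _))
  · refine .inr ⟨K + K', add_le_add_right hK' K, ?_, ?_, ?_⟩
    · rw [card_add]
      exact heven.add heven'
    · convert hsplit' using 1
      abel
    · rw [card_add]
      omega

end Growth

section ManyReflectionPairs

variable {b d k : ℕ} {Q S : Multiset (DihedralGroup n)}

theorem hasDvdOneProd_of_add_self_le [NeZero n] (hnk : n < 2 ^ (k + 1)) (hd : Odd d)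
    (hkd : 2 * k + 1 ≤ d) (hS : card S = 2 * d + k)
    (hQ : Q ≠ 0) (hQk : card Q ≤ k) (hQr : reflCount Q = card Q) (hQS : Q + Q ≤ S)
    (hSQ : ∀ L ≤ S, L.Nodup → card L = k + 1 → reflCount L ≤ card Q + 1)
    (hpairs : HasPairsBeyond (d + 1) S) : HasDvdOneProd d S := by
  obtain ⟨R, rfl⟩ := le_iff_exists_add.1 hQS
  have hRcard : card R + 2 * card Q = 2 * d + k := by
    rw [← hS, card_add, card_add Q]
    omega
  have hQpos := card_pos.2 hQ
  obtain ⟨F, hFR, hF, hfill⟩ :=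
    (hpairs.mono le_rfl (le_add_left R _)).exists_fill (j := (k + 1) / 2) (by omega)
  obtain ⟨M, rfl⟩ := le_iff_exists_add.1 hFR
  rw [card_add] at hRcard
  have hMS : M ≤ Q + Q + (F + M) := (le_add_left M F).trans (le_add_left _ _)
  rcases IsSplittable.exists_maximal_even_extension (E := 0) (M := M) (by omega) hnk hQ
    hQr (fun L h ↦ hSQ L (h.trans hMS)) (by rw [zero_add]; exact .add_self Q) with
    hodd | ⟨K, hKM, hKeven, hK, hMK⟩
  · refine hpairs.hasDvdOneProd (hodd.mono hkd ?_) hd (by omega)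
    rw [add_comm M]
    exact add_le_add_right (le_add_left M F) _
  have hKle := card_le_card hKM
  obtain ⟨p, hp⟩ := hKeven
  obtain ⟨T, hTF, hT, hTcard⟩ := hfill (d - p - card Q) (by omega)
  have hTle : K + (0 + (Q + Q)) + T ≤ Q + Q + (F + M) :=
    calc K + (0 + (Q + Q)) + T ≤ M + (0 + (Q + Q)) + F := by gcongr
      _ = Q + Q + (F + M) := by abel
  refine (hK.add hT).hasDvdOneProd hTle ?_ ⟨2, ?_⟩
  · simp only [map_add, hQr]
    omega
  · simp only [card_add, card_zero, hTcard]
    omega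

end ManyReflectionPairs

section PairBounds

theorem isSplittable_pair_of_natAbs_eq [NeZero n] {i j : ZMod n}
    (h : i.valMinAbs.natAbs = j.valMinAbs.natAbs) :
    IsSplittable ({r i, r j} : Multiset (DihedralGroup n)) := by
  rcases (ZMod.natAbs_valMinAbs_eq_natAbs_valMinAbs).1 h with rfl | rfl
  · exact .add_self {r i}
  · exact ⟨{r (-j), r j}, 0, add_zero _, by simp [insert_eq_cons], by simp [insert_eq_cons]⟩

theorem hasPairsBeyond_map_r_add_map_sr [NeZero n] (X Y : Multiset (ZMod n)) :
    HasPairsBeyond ((X.map fun i ↦ i.valMinAbs.natAbs).toFinset.card + Y.toFinset.card)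
      (X.map r + Y.map sr) := by
  intro T hT hcard
  obtain ⟨T₁, h₁, T₂, h₂, rfl⟩ := exists_add_eq_of_le_add hT
  obtain ⟨X', hX', rfl⟩ := exists_map_eq_of_le_map h₁
  obtain ⟨Y', hY', rfl⟩ := exists_map_eq_of_le_map h₂
  rw [card_add, card_map, card_map] at hcard
  by_cases hY : Y'.Nodup
  · have hY'card : card Y' ≤ Y.toFinset.card := card_le_card (le_dedup.2 ⟨hY', hY⟩)
    have hX : ¬(X'.map fun i ↦ i.valMinAbs.natAbs).Nodup := fun hnodup ↦ by
      have hX'card := card_le_card (le_dedup.2 ⟨map_le_map hX', hnodup⟩)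
      rw [card_map] at hX'card
      exact hcard.not_ge (add_le_add hX'card hY'card)
    obtain ⟨a, ha⟩ := exists_pair_le_of_not_nodup hX
    obtain ⟨P, hPX, hP⟩ := exists_map_eq_of_le_map ha
    obtain ⟨i, j, rfl⟩ := card_eq_two.1 (by simpa using congrArg card hP : card P = 2)
    obtain ⟨hi, hj⟩ : i.valMinAbs.natAbs = a ∧ j.valMinAbs.natAbs = a := by
      have hmem : ∀ x ∈ map (fun i : ZMod n ↦ i.valMinAbs.natAbs) {i, j}, x = a := by
        rw [hP]
        simp
      exact ⟨hmem _ (by simp), hmem _ (by simp)⟩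
    exact ⟨{r i, r j}, (map_le_map hPX).trans (le_add_right _ _), rfl,
      isSplittable_pair_of_natAbs_eq (hi.trans hj.symm)⟩
  · obtain ⟨y, hy⟩ := exists_pair_le_of_not_nodup hY
    exact ⟨{sr y} + {sr y}, (map_le_map hy).trans (le_add_left _ _), rfl, .add_self {sr y}⟩

theorem hasPairsBeyond_of_card_toFinset_lt [NeZero n] {X Y : Multiset (ZMod n)}
    (hY : 2 * Y.toFinset.card < n) : HasPairsBeyond n (X.map r + Y.map sr) := by
  refine (hasPairsBeyond_map_r_add_map_sr X Y).mono ?_ le_rfl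
  have hX : (X.map fun i ↦ i.valMinAbs.natAbs).toFinset ⊆ Finset.range (n / 2 + 1) := by
    intro a ha
    obtain ⟨i, -, rfl⟩ := mem_map.1 (mem_toFinset.1 ha)
    exact Finset.mem_range_succ_iff.2 i.natAbs_valMinAbs_le
  have hXcard := Finset.card_le_card hX
  rw [Finset.card_range] at hXcard
  omega

theorem hasPairsBeyond_of_forall_eq_zero [NeZero n] {X Y : Multiset (ZMod n)}
    (hX : ∀ x ∈ X, x = 0) : HasPairsBeyond (n + 1) (X.map r + Y.map sr) := by
  refine (hasPairsBeyond_map_r_add_map_sr X Y).mono ?_ le_rfl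
  have hXsub : (X.map fun i ↦ i.valMinAbs.natAbs).toFinset ⊆ {0} := by
    intro a ha
    obtain ⟨i, hi, rfl⟩ := mem_map.1 (mem_toFinset.1 ha)
    simp [hX i hi]
  have hXcard := Finset.card_le_card hXsub
  have hYcard := Finset.card_le_univ Y.toFinset
  rw [ZMod.card] at hYcard
  rw [Finset.card_singleton] at hXcard
  omega

end PairBounds

section SubsetSums

open scoped Pointwise

variable {G : Type*} [AddCommGroup G] [DecidableEq G]

/-- The set of sums of the subsequences of a sequence. -/
def subsetSums (X : Multiset G) : Finset G := (X.powerset.map sum).toFinset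

theorem mem_subsetSums {X : Multiset G} {g : G} : g ∈ subsetSums X ↔ ∃ V ≤ X, V.sum = g := by
  simp [subsetSums]

theorem subsetSums_zero : subsetSums (0 : Multiset G) = {0} := by
  simp [subsetSums]

theorem subsetSums_mono {X X' : Multiset G} (h : X ≤ X') : subsetSums X ⊆ subsetSums X' := by
  intro g hg
  obtain ⟨V, hV, rfl⟩ := mem_subsetSums.1 hg
  exact mem_subsetSums.2 ⟨V, hV.trans h, rfl⟩

theorem subsetSums_cons (x : G) (X : Multiset G) :
    subsetSums (x ::ₘ X) = subsetSums X ∪ (x +ᵥ subsetSums X) := by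
  simp [subsetSums, Finset.vadd_finset_def, Finset.image_toFinset]

theorem subsetSums_map {G' : Type*} [AddCommGroup G'] [DecidableEq G'] (f : G →+ G')
    (X : Multiset G) : subsetSums (X.map f) = (subsetSums X).image f := by
  induction X using Multiset.induction with
  | empty => simp [subsetSums_zero]
  | cons x X ih =>
    rw [map_cons, subsetSums_cons, subsetSums_cons, Finset.image_union, ih,
      Finset.image_vadd_distrib]

theorem subsetSums_cons_of_mem_stabilizer {x : G} {X : Multiset G}
    (hx : x ∈ AddAction.stabilizer G (subsetSums X)) :
    subsetSums (x ::ₘ X) = subsetSums X := by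
  rw [subsetSums_cons, AddAction.mem_stabilizer_iff.1 hx, Finset.union_self]

theorem card_subsetSums_lt_cons {x : G} {X : Multiset G}
    (hx : x ∉ AddAction.stabilizer G (subsetSums X)) :
    (subsetSums X).card < (subsetSums (x ::ₘ X)).card := by
  rw [AddAction.mem_stabilizer_finset_iff_vadd_finset_subset] at hx
  rw [subsetSums_cons]
  exact Finset.card_lt_card (Finset.ssubset_iff_subset_ne.2
    ⟨Finset.subset_union_left, fun h ↦ hx (Finset.union_eq_left.1 h.symm)⟩)

theorem exists_le_subsetSums_eq_or_lt_card (X : Multiset G) (m : ℕ) :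
    ∃ J ≤ X, card J ≤ m ∧
      (subsetSums J = subsetSums X ∧ card J < (subsetSums J).card ∨ m < (subsetSums J).card) := by
  induction X using Multiset.induction with
  | empty => exact ⟨0, le_rfl, by simp, .inl ⟨rfl, by simp [subsetSums_zero]⟩⟩
  | cons x X ih =>
    obtain ⟨J, hJX, hJm, ⟨hJ, hcard⟩ | hm⟩ := ih
    · by_cases hx : x ∈ AddAction.stabilizer G (subsetSums X)
      · rw [subsetSums_cons_of_mem_stabilizer hx]
        exact ⟨J, hJX.trans (le_cons_self X x), hJm, .inl ⟨hJ, hcard⟩⟩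
      · rcases hJm.lt_or_eq with hJm | rfl
        · refine ⟨x ::ₘ J, cons_le_cons x hJX, by rwa [card_cons], .inl ⟨?_, ?_⟩⟩
          · rw [subsetSums_cons, subsetSums_cons, hJ]
          · rw [card_cons]
            exact Nat.succ_le_of_lt hcard |>.trans_lt (card_subsetSums_lt_cons (hJ ▸ hx))
        · exact ⟨J, hJX.trans (le_cons_self X x), le_rfl, .inr hcard⟩
    · exact ⟨J, hJX.trans (le_cons_self X x), hJm, .inr hm⟩

theorem card_filter_ne_zero_lt_card_subsetSums {X : Multiset G}
    (hX : AddAction.stabilizer G (subsetSums X) = ⊥) :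
    card (X.filter (· ≠ 0)) < (subsetSums X).card := by
  induction X using Multiset.induction with
  | empty => simp [subsetSums_zero]
  | cons x X ih =>
    have hX' : AddAction.stabilizer G (subsetSums X) = ⊥ := by
      refine eq_bot_iff.2 fun g hg ↦ hX ▸ ?_
      rw [AddAction.mem_stabilizer_iff] at hg ⊢
      rw [subsetSums_cons, Finset.vadd_finset_union, vadd_comm g x, hg]
    by_cases hx : x = 0
    · rw [filter_cons_of_neg X (not_not.2 hx),
        subsetSums_cons_of_mem_stabilizer (hx ▸ zero_mem _)]
      exact ih hX'
    · rw [filter_cons_of_pos X hx, card_cons]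
      exact Nat.succ_le_of_lt (ih hX') |>.trans_lt
        (card_subsetSums_lt_cons (by rwa [hX', AddSubgroup.mem_bot]))

theorem card_filter_notMem_stabilizer_lt (X : Multiset G) {H : AddSubgroup G}
    [DecidableEq (G ⧸ H)] [DecidablePred (· ∈ H)]
    (hH : H = AddAction.stabilizer G (subsetSums X : Set G)) :
    card (X.filter (· ∉ H)) < ((subsetSums X).image (QuotientAddGroup.mk' H)).card := by
  have hstab : AddAction.stabilizer (G ⧸ H) (subsetSums (X.map (QuotientAddGroup.mk' H))) = ⊥ := by
    rw [subsetSums_map, ← AddAction.stabilizer_coe_finset, Finset.coe_image]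
    subst hH
    exact AddAction.stabilizer_image_coe_quotient (subsetSums X : Set G)
  have hlt := card_filter_ne_zero_lt_card_subsetSums hstab
  rw [subsetSums_map, filter_map, card_map] at hlt
  convert hlt using 5
  simp

/-- The image in `G ⧸ H` misses a class because `subsetSums X` is a union of cosets of its
stabilizer `H`. -/
theorem card_filter_notMem_stabilizer_add_two_le [Finite G] {X : Multiset G} {H : AddSubgroup G}
    [DecidablePred (· ∈ H)] (hH : H = AddAction.stabilizer G (subsetSums X : Set G)) {g : G}
    (hg : g ∉ subsetSums X) :
    card (X.filter (· ∉ H)) + 2 ≤ H.index := by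
  classical
  have := Fintype.ofFinite (G ⧸ H)
  have hmiss : (QuotientAddGroup.mk' H g) ∉ (subsetSums X).image (QuotientAddGroup.mk' H) := by
    intro h
    obtain ⟨s, hs, hsg⟩ := Finset.mem_image.1 h
    have hmem : -s + g ∈ H := QuotientAddGroup.eq.1 hsg
    rw [hH, AddAction.stabilizer_coe_finset, AddAction.mem_stabilizer_finset] at hmem
    have := (hmem s).2 hs
    rw [vadd_eq_add, neg_add_cancel_comm] at this
    exact hg this
  calc card (X.filter (· ∉ H)) + 2
    _ ≤ ((subsetSums X).image (QuotientAddGroup.mk' H)).card + 1 :=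
      Nat.succ_le_succ (card_filter_notMem_stabilizer_lt X hH)
    _ ≤ H.index := by
      rw [AddSubgroup.index, Nat.card_eq_fintype_card]
      exact Finset.card_lt_univ_of_notMem hmiss

end SubsetSums

section ErdosGinzburgZiv

theorem exists_le_sum_eq_zero_of_mul_add_le_card (c : ℕ) {m : ℕ} (hm : 0 < m)
    {X : Multiset (ZMod m)} (hX : c * m + m - 1 ≤ card X) :
    ∃ Z ≤ X, card Z = c * m ∧ Z.sum = 0 := by
  induction c generalizing X with
  | zero => exact ⟨0, zero_le, by simp⟩
  | succ c ih =>
    rw [add_one_mul] at hX ⊢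
    obtain ⟨Z, hZX, hZ, hsum⟩ := ih (X := X) (by omega)
    obtain ⟨R, rfl⟩ := le_iff_exists_add.1 hZX
    rw [card_add] at hX
    obtain ⟨W, hWR, hW, hWsum⟩ := ZMod.erdos_ginzburg_ziv_multiset R (by omega)
    exact ⟨Z + W, add_le_add_right hWR Z, by rw [card_add, hZ, hW], by
      rw [sum_add, hsum, hWsum, add_zero]⟩

theorem exists_le_sum_eq_zero_of_mem_addSubgroup {G : Type*} [AddCommGroup G] {H : AddSubgroup G}
    [IsAddCyclic H] [Finite H] {d : ℕ} (hd : Nat.card H ∣ d) {X : Multiset G}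
    (hX : ∀ x ∈ X, x ∈ H) (hcard : d + Nat.card H ≤ card X + 1) :
    ∃ Z ≤ X, card Z = d ∧ Z.sum = 0 := by
  obtain ⟨c, rfl⟩ := hd
  lift X to Multiset H using hX
  let e := zmodAddCyclicAddEquiv (G := H) inferInstance
  rw [card_map, mul_comm] at hcard
  obtain ⟨Z', hZ', hcardZ, hsum⟩ := exists_le_sum_eq_zero_of_mul_add_le_card c Nat.card_pos
    (X := X.map e.symm) (by rw [card_map]; omega)
  obtain ⟨Z, hZX, rfl⟩ := exists_map_eq_of_le_map hZ'
  refine ⟨Z.map (↑), map_le_map hZX, by simpa [mul_comm] using hcardZ, ?_⟩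
  have hZ : Z.sum = 0 := by
    rw [← map_multiset_sum] at hsum
    exact (map_eq_zero_iff e.symm e.symm.injective).1 hsum
  simpa [hZ] using (map_multiset_sum H.subtype Z).symm

end ErdosGinzburgZiv

section Cosets

open scoped Pointwise

variable {d : ℕ} {X Y : Multiset (ZMod n)}

theorem isUnit_two_of_odd (hn : Odd n) : IsUnit (2 : ZMod n) := by
  exact_mod_cast (ZMod.isUnit_iff_coprime 2 n).2 (Nat.coprime_two_left.2 hn)

theorem three_le_of_odd_of_ne (hn : Odd n) {a b : ZMod n} (hab : a ≠ b) : 3 ≤ n := by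
  have : NeZero n := ⟨hn.pos.ne'⟩
  have hcard := Fintype.one_lt_card_iff.2 ⟨a, b, hab⟩
  rw [ZMod.card] at hcard
  obtain ⟨m, hm⟩ := hn
  omega

theorem isSplittable_pair_add_map_r {T V : Multiset (ZMod n)} {y₁ y₂ : ZMod n} (hV : V ≤ T)
    (hsum : 2 * V.sum = y₂ - y₁ + T.sum) :
    IsSplittable ({sr y₁, sr y₂} + T.map r : Multiset (DihedralGroup n)) := by
  obtain ⟨W, rfl⟩ := le_iff_exists_add.1 hV
  refine ⟨{sr y₁} + V.map r, {sr y₂} + W.map r, ?_, ?_, by simp⟩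
  · rw [Multiset.map_add, insert_eq_cons, ← singleton_add]
    abel
  · simp only [map_add, expSum_singleton_sr, expSum_map_r]
    rw [sum_add] at hsum
    linear_combination hsum

theorem hasDvdOneProd_of_mem_subsetSums {T : Multiset (ZMod n)} {y₁ y₂ s : ZMod n} (hT : T ≤ X)
    (hTd : card T + 2 = d) (hY : {y₁, y₂} ≤ Y) (hs : s ∈ subsetSums T)
    (hsum : 2 * s = y₂ - y₁ + T.sum) : HasDvdOneProd d (X.map r + Y.map sr) := by
  obtain ⟨V, hV, rfl⟩ := mem_subsetSums.1 hs
  refine (isSplittable_pair_add_map_r hV hsum).hasDvdOneProd ?_ (by simp [insert_eq_cons])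
    (by rw [← hTd, card_add, card_map, add_comm]; rfl)
  rw [add_comm]
  exact add_le_add (map_le_map hT) (map_le_map (f := sr) hY)

theorem pair_le_of_mem {y₁ y₂ : α} {Y : Multiset α} (h₁ : y₁ ∈ Y) (h₂ : y₂ ∈ Y) (hne : y₁ ≠ y₂) :
    {y₁, y₂} ≤ Y :=
  (le_iff_subset (by simpa using hne)).2 (by simp [insert_eq_cons, subset_iff, h₁, h₂])

theorem exists_forall_notMem_subsetSums (hn : Odd n) (hnd : n ≤ d) (hXd : d ≤ card X + 2)
    {y y' : ZMod n} (hy : y ∈ Y) (hy' : y' ∈ Y) (hne : y ≠ y')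
    (hS : ¬HasDvdOneProd d (X.map r + Y.map sr)) :
    ∃ c, ∀ y₁ y₂ s, {y₁, y₂} ≤ Y → 2 * s = y₂ - y₁ + c → s ∉ subsetSums X := by
  have : NeZero n := ⟨hn.pos.ne'⟩
  have htwo := isUnit_two_of_odd hn
  have hn3 := three_le_of_odd_of_ne hn hne
  obtain ⟨J, hJX, hJn, hJ⟩ := exists_le_subsetSums_eq_or_lt_card X (n - 2)
  obtain ⟨R, rfl⟩ := le_iff_exists_add.1 hJX
  rw [card_add] at hXd
  obtain ⟨R', hR', hR'card⟩ := exists_le_card_eq R (k := d - 2 - card J) (by omega)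
  have hmiss (y₁ y₂ s) (hY : {y₁, y₂} ≤ Y) (hs : 2 * s = y₂ - y₁ + (J + R').sum) :
      s ∉ subsetSums (J + R') := fun hmem ↦
    hS (hasDvdOneProd_of_mem_subsetSums (add_le_add_right hR' J) (by rw [card_add]; omega) hY
      hmem hs)
  have hJR := subsetSums_mono (le_add_right J R')
  rcases hJ with ⟨hJ, -⟩ | hJ
  · exact ⟨(J + R').sum, fun y₁ y₂ s hY hs hmem ↦ hmiss y₁ y₂ s hY hs (hJR (hJ ▸ hmem))⟩
  · exfalso
    obtain ⟨s, hs⟩ := htwo.dvd (a := y' - y + (J + R').sum)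
    obtain ⟨s', hs'⟩ := htwo.dvd (a := y - y' + (J + R').sum)
    have hss' : s ≠ s' := by
      rintro rfl
      refine hne (htwo.mul_left_cancel ?_)
      linear_combination hs' - hs
    have hsub : subsetSums (J + R') ⊆ (Finset.univ.erase s').erase s := fun g hg ↦ by
      simp only [Finset.mem_erase, Finset.mem_univ, and_true]
      exact ⟨by rintro rfl; exact hmiss _ _ _ (pair_le_of_mem hy hy' hne) hs.symm hg,
        by rintro rfl; exact hmiss _ _ _ (pair_le_of_mem hy' hy hne.symm) hs'.symm hg⟩
    have hcard := Finset.card_le_card hsub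
    rw [Finset.card_erase_of_mem (by simp [hss']), Finset.card_erase_of_mem (Finset.mem_univ _),
      Finset.card_univ, ZMod.card] at hcard
    have := Finset.card_le_card hJR
    omega

theorem exists_le_sum_eq_zero_of_stabilizer_ne_bot (hn : Odd n) (hnd : n ∣ d)
    (hX : 3 * d + n ≤ 3 * card X) {g : ZMod n} (hg : g ∉ subsetSums X)
    (hH : AddAction.stabilizer (ZMod n) (subsetSums X) ≠ ⊥) :
    ∃ Z ≤ X, card Z = d ∧ Z.sum = 0 := by
  classical
  have : NeZero n := ⟨hn.pos.ne'⟩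
  set H := AddAction.stabilizer (ZMod n) (subsetSums X) with hHdef
  have hfilter := card_filter_notMem_stabilizer_add_two_le (H := H)
    (by rw [hHdef, AddAction.stabilizer_coe_finset]) hg
  have hprod : H.index * Nat.card H = n := by rw [H.index_mul_card, Nat.card_zmod]
  have hsplit : card (X.filter (· ∈ H)) + card (X.filter (· ∉ H)) = card X := by
    rw [← card_add, filter_add_not]
  have hindex : 3 ≤ H.index := by
    obtain ⟨a, ha⟩ := hn.of_dvd_nat (Dvd.intro _ hprod)
    omega
  have hcard : 3 ≤ Nat.card H := by
    obtain ⟨a, ha⟩ := hn.of_dvd_nat (Dvd.intro_left _ hprod)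
    have := (AddSubgroup.card_eq_one (H := H)).not.2 hH
    omega
  obtain ⟨Z, hZ, hZd⟩ := exists_le_sum_eq_zero_of_mem_addSubgroup (H := H) (d := d)
    (X := X.filter (· ∈ H)) ((Dvd.intro_left _ hprod).trans hnd) (fun x hx ↦ (mem_filter.1 hx).2)
    (by nlinarith)
  exact ⟨Z, hZ.trans (filter_le _ X), hZd⟩

theorem hasOddSplittable_of_zero_mem (hX : 0 ∈ X) (hY : ¬Y.Nodup) :
    HasOddSplittable 3 (X.map r + Y.map sr) := by
  obtain ⟨y, hy⟩ := exists_pair_le_of_not_nodup hY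
  have hsplit : IsSplittable ({r 0} + {sr y, sr y} : Multiset (DihedralGroup n)) :=
    ⟨{r 0} + {sr y}, {sr y}, add_assoc .., by
      rw [map_add, expSum_singleton_r, zero_add], by
      rw [map_add, reflCount_singleton_r, zero_add]⟩
  refine ⟨_, add_le_add ?_ (map_le_map (f := sr) hy), hsplit, by simp,
    ⟨1, rfl⟩, le_rfl⟩
  exact singleton_le.2 (mem_map_of_mem r hX)

theorem HasPairsBeyond.hasDvdOneProd_of_zero_mem (hd : Odd d) (hd3 : 3 ≤ d)
    (h : HasPairsBeyond (d + 1) (X.map r + Y.map sr)) (hX : 0 ∈ X)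
    (hY : Y.Nodup → d ≤ X.count 0) (hcard : 2 * d ≤ card X + card Y) :
    HasDvdOneProd d (X.map r + Y.map sr) := by
  by_cases hnodup : Y.Nodup
  · exact hasDvdOneProd_of_sum_eq_zero (Z := replicate d 0) (by omega) (by simp) (card_replicate ..)
      (le_count_iff_replicate_le.1 (hY hnodup)) (le_add_right _ _)
  · exact h.hasDvdOneProd ((hasOddSplittable_of_zero_mem hX hnodup).mono hd3 le_rfl) hd
      (by rw [card_add, card_map, card_map]; omega)

theorem card_subsetSums_add_card_le_of_nodup (hn : Odd n) {c : ZMod n}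
    (hc : ∀ s ∈ subsetSums X, 2 * s + c ∉ Y) (hY : Y.Nodup) :
    (subsetSums X).card + card Y ≤ n := by
  have : NeZero n := ⟨hn.pos.ne'⟩
  have hinj : Function.Injective fun s : ZMod n ↦ 2 * s + c := fun s t h ↦
    (isUnit_two_of_odd hn).mul_left_cancel (add_right_cancel h)
  have hdisj : Disjoint ((subsetSums X).image fun s ↦ 2 * s + c) Y.toFinset := by
    simpa [Finset.disjoint_left] using hc
  have hle := Finset.card_le_univ (((subsetSums X).image fun s ↦ 2 * s + c) ∪ Y.toFinset)
  rwa [Finset.card_union_of_disjoint hdisj, Finset.card_image_of_injective _ hinj,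
    toFinset_card_of_nodup hY, ZMod.card] at hle

theorem hasDvdOneProd_of_ne (hd : Odd d) (hnd : n ∣ d) {y y' : ZMod n} (hy : y ∈ Y)
    (hy' : y' ∈ Y) (hne : y ≠ y') (hX : 3 * d + n ≤ 3 * card X)
    (hcard : 2 * d ≤ card X + card Y) (hpairs : HasPairsBeyond (d + 1) (X.map r + Y.map sr)) :
    HasDvdOneProd d (X.map r + Y.map sr) := by
  by_contra hS
  have hn := hd.of_dvd_nat hnd
  have hn3 := three_le_of_odd_of_ne hn hne
  have hnd' := Nat.le_of_dvd hd.pos hnd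
  obtain ⟨c, hc⟩ := exists_forall_notMem_subsetSums hn hnd' (by omega) hy hy' hne hS
  obtain ⟨s, hs⟩ := (isUnit_two_of_odd hn).dvd (a := y' - y + c)
  have hsX := hc _ _ s (pair_le_of_mem hy hy' hne) hs.symm
  by_cases hH : AddAction.stabilizer (ZMod n) (subsetSums X) = ⊥
  · have hfilter := card_filter_ne_zero_lt_card_subsetSums hH
    have hcount : X.count 0 + card (X.filter (· ≠ 0)) = card X := by
      rw [← card_replicate (X.count 0) (0 : ZMod n), ← filter_eq', ← card_add, filter_add_not]
    have hYe (hY : Y.Nodup) : (subsetSums X).card + card (Y.erase y) ≤ n :=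
      card_subsetSums_add_card_le_of_nodup hn (c := y - c) (fun s hs hmem ↦
        hc y _ s (by
          rw [← cons_erase hy]
          exact cons_le_cons y (singleton_le.2 hmem)) (by ring) hs) (hY.erase y)
    refine hS (hpairs.hasDvdOneProd_of_zero_mem hd (by omega) ?_ (fun hY ↦ ?_) (by omega))
    · have : NeZero n := ⟨hn.pos.ne'⟩
      have hle := Finset.card_le_univ (subsetSums X)
      rw [ZMod.card] at hle
      exact count_pos.1 (by omega)
    · have hle := hYe hY
      have := card_erase_add_one hy
      omega
  · obtain ⟨Z, hZX, hZd, hZ⟩ := exists_le_sum_eq_zero_of_stabilizer_ne_bot hn hnd hX hsX hH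
    exact hS (hasDvdOneProd_of_sum_eq_zero hd.pos hZ hZd hZX (le_add_right _ _))

end Cosets

section ManyReflections

theorem exists_mem_sub_eq_of_lt_two_mul_card [NeZero n] {D : Finset (ZMod n)}
    (hD : n < 2 * D.card) (c : ZMod n) : ∃ p ∈ D, ∃ q ∈ D, q - p = c := by
  obtain ⟨q, hq⟩ := Finset.inter_nonempty_of_card_lt_card_add_card
    (Finset.subset_univ (D.image (· + c))) (Finset.subset_univ D)
    (by rw [Finset.card_univ, ZMod.card, Finset.card_image_of_injective _ (add_left_injective c)]
        omega)
  obtain ⟨hqc, hqD⟩ := Finset.mem_inter.1 hq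
  obtain ⟨p, hp, rfl⟩ := Finset.mem_image.1 hqc
  exact ⟨p, hp, _, hqD, add_sub_cancel_left p c⟩

/-- Since `n` is odd, moving `r x` from one part to the other changes the difference of the
exponent sums, so this difference can be made nonzero. -/
theorem exists_isSplittable_of_lt_two_mul_card (hn : Odd n) {D : Finset (ZMod n)}
    (hD : n < 2 * D.card) {x : ZMod n} (hx : x ≠ 0) {A B : Multiset (DihedralGroup n)}
    (hAB : reflCount A = reflCount B) :
    ∃ p ∈ D, ∃ q ∈ D, p ≠ q ∧ IsSplittable ({sr p, sr q} + {r x} + (A + B)) := by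
  have : NeZero n := ⟨hn.pos.ne'⟩
  by_cases hc : expSum A - expSum B + x = 0
  · have hc' : expSum A - expSum B - x ≠ 0 := fun h ↦ hx <|
      (isUnit_two_of_odd hn).mul_left_cancel (by linear_combination hc - h)
    obtain ⟨p, hp, q, hq, hpq⟩ :=
      exists_mem_sub_eq_of_lt_two_mul_card hD (expSum A - expSum B - x)
    refine ⟨p, hp, q, hq, fun h ↦ hc' (by rw [← hpq, h, sub_self]), {sr p} + A,
      {sr q} + {r x} + B, ?_, ?_, by simp [hAB]⟩
    · rw [insert_eq_cons, ← singleton_add]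
      abel
    · simp only [map_add, expSum_singleton_r, expSum_singleton_sr]
      linear_combination -hpq
  · obtain ⟨p, hp, q, hq, hpq⟩ := exists_mem_sub_eq_of_lt_two_mul_card hD (expSum A - expSum B + x)
    refine ⟨p, hp, q, hq, fun h ↦ hc (by rw [← hpq, h, sub_self]), {sr p} + {r x} + A,
      {sr q} + B, ?_, ?_, by simp [hAB]⟩
    · rw [insert_eq_cons, ← singleton_add]
      abel
    · simp only [map_add, expSum_singleton_r, expSum_singleton_sr]
      linear_combination -hpq

theorem exists_add_le_reflCount_eq {m : ℕ} (hm : Even m) {S : Multiset (DihedralGroup n)}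
    (hS : m < card S) :
    ∃ A B, A + B ≤ S ∧ card (A + B) = m ∧ reflCount A = reflCount B := by
  obtain ⟨X, Y, rfl⟩ := exists_eq_map_r_add_map_sr S
  rw [card_add, card_map, card_map] at hS
  obtain ⟨j, rfl⟩ := hm
  obtain ⟨Y', hY', hYcard⟩ := exists_le_card_eq Y (k := 2 * min j (card Y / 2)) (by omega)
  obtain ⟨X', hX', hXcard⟩ := exists_le_card_eq X (k := j + j - card Y') (by omega)
  obtain ⟨Z, hZ, hZcard⟩ := exists_le_card_eq Y' (k := min j (card Y / 2)) (by omega)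
  obtain ⟨W, rfl⟩ := le_iff_exists_add.1 hZ
  rw [card_add] at hXcard hYcard
  refine ⟨X'.map r + Z.map sr, W.map sr, ?_, by simp; omega, by simp; omega⟩
  rw [add_assoc, ← Multiset.map_add]
  exact add_le_add (map_le_map hX') (map_le_map hY')

theorem hasDvdOneProd_of_lt_two_mul_card {d : ℕ} {X Y : Multiset (ZMod n)} (hn : Odd n)
    (hd : Odd d) (hnd : n ≤ d) (hcard : 2 * d ≤ card X + card Y) {x : ZMod n}
    (hxX : x ∈ X) (hx : x ≠ 0) (hY : n < 2 * Y.toFinset.card) :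
    HasDvdOneProd d (X.map r + Y.map sr) := by
  have hn3 := three_le_of_odd_of_ne hn hx
  have hmod := Nat.odd_iff.1 hn
  obtain ⟨D, hDY, hD⟩ := exists_le_card_eq Y.dedup (k := (n + 1) / 2)
    (by rw [← card_toFinset]; omega)
  have hnodup : D.Nodup := nodup_of_le hDY (nodup_dedup Y)
  obtain ⟨Y, rfl⟩ := le_iff_exists_add.1 (hDY.trans (dedup_le Y))
  obtain ⟨X, rfl⟩ := exists_cons_of_mem hxX
  rw [card_cons, card_add] at hcard
  obtain ⟨A, B, hAB, hABcard, hrefl⟩ := exists_add_le_reflCount_eq (m := d - 3)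
    (Nat.Odd.sub_odd hd (by decide)) (S := X.map r + Y.map sr)
    (by rw [card_add, card_map, card_map]; omega)
  obtain ⟨p, hp, q, hq, hpq, hsplit⟩ := exists_isSplittable_of_lt_two_mul_card hn
    (D := D.toFinset) (by rw [toFinset_card_of_nodup hnodup, hD]; omega) hx hrefl
  have hpqD := pair_le_of_mem (mem_toFinset.1 hp) (mem_toFinset.1 hq) hpq
  refine hsplit.hasDvdOneProd ?_ (by simp [insert_eq_cons]) ?_
  · calc {sr p, sr q} + {r x} + (A + B)
      _ ≤ D.map sr + {r x} + (X.map r + Y.map sr) :=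
        add_le_add (add_le_add_left (map_le_map (f := sr) hpqD) _) hAB
      _ = (x ::ₘ X).map r + (D + Y).map sr := by
        rw [map_cons, Multiset.map_add, ← singleton_add]
        abel
  · rw [card_add, hABcard, card_add, card_pair, card_singleton]
    exact dvd_of_eq (by omega)

end ManyReflections

section UpperBound

variable {d k : ℕ} {X Y : Multiset (ZMod n)}

theorem hasDvdOneProd_of_forall_eq_zero [NeZero n] (hd : Odd d) (hd3 : 3 ≤ d) (hnd : n ≤ d)
    (hX : ∀ x ∈ X, x = 0) (hX0 : X ≠ 0) (hcard : 2 * d ≤ card X + card Y) :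
    HasDvdOneProd d (X.map r + Y.map sr) := by
  obtain ⟨x, hx⟩ := exists_mem_of_ne_zero hX0
  have hpairs := (hasPairsBeyond_of_forall_eq_zero (Y := Y) hX).mono
    (Nat.succ_le_succ hnd) le_rfl
  refine hpairs.hasDvdOneProd_of_zero_mem hd hd3 (hX x hx ▸ hx) (fun hY ↦ ?_) hcard
  have hYcard := Finset.card_le_univ Y.toFinset
  rw [toFinset_card_of_nodup hY, ZMod.card] at hYcard
  rw [count_eq_card.2 fun x hx ↦ (hX x hx).symm]
  omega

theorem hasDvdOneProd_of_le_card_map_r [NeZero n] (hd : 0 < d) (hnd : n ∣ d)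
    (hX : d + n ≤ card X + 1) : HasDvdOneProd d (X.map r + Y.map sr) := by
  have htop : Nat.card (⊤ : AddSubgroup (ZMod n)) = n := by
    rw [AddSubgroup.card_top, Nat.card_zmod]
  obtain ⟨Z, hZX, hZd, hZ⟩ := exists_le_sum_eq_zero_of_mem_addSubgroup (d := d) (X := X)
    (H := ⊤) (by rwa [htop]) (fun x _ ↦ AddSubgroup.mem_top x) (by rwa [htop])
  exact hasDvdOneProd_of_sum_eq_zero hd hZ hZd hZX (le_add_right _ _)

theorem reflCount_le_card_toFinset_of_nodup {L : Multiset (DihedralGroup n)}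
    (hL : L ≤ X.map r + Y.map sr) (hnodup : L.Nodup) : reflCount L ≤ Y.toFinset.card := by
  obtain ⟨L₁, h₁, L₂, h₂, rfl⟩ := exists_add_eq_of_le_add hL
  obtain ⟨X', -, rfl⟩ := exists_map_eq_of_le_map h₁
  obtain ⟨Y', hY', rfl⟩ := exists_map_eq_of_le_map h₂
  rw [map_add, reflCount_map_r, reflCount_map_sr, zero_add, card_toFinset]
  exact card_le_card (le_dedup.2 ⟨hY', (nodup_of_le (le_add_left _ _) hnodup).of_map⟩)

theorem hasDvdOneProd_of_add_self_le_map_sr [NeZero n] (hnk : n < 2 ^ (k + 1)) (hd : Odd d)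
    (hkd : 2 * k + 1 ≤ d) (hcard : card X + card Y = 2 * d + k)
    {P : Multiset (ZMod n)} (hP0 : P ≠ 0) (hPk : card P ≤ k) (hPY : P + P ≤ Y)
    (hP : card P = k ∨ Y.toFinset.card ≤ card P + 1)
    (hpairs : HasPairsBeyond (d + 1) (X.map r + Y.map sr)) :
    HasDvdOneProd d (X.map r + Y.map sr) := by
  refine hasDvdOneProd_of_add_self_le (Q := P.map sr) hnk hd hkd (by simpa using hcard)
    (by simpa using hP0) (by simpa using hPk) (by simp) ?_
    (fun L hL hnodup hLk ↦ ?_) hpairs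
  · rw [← Multiset.map_add]
    exact (map_le_map hPY).trans (le_add_left _ _)
  · rw [card_map]
    rcases hP with rfl | hP
    · exact hLk ▸ reflCount_le_card L
    · exact (reflCount_le_card_toFinset_of_nodup hL hnodup).trans hP

theorem hasDvdOneProd_of_card_toFinset_le_one [NeZero n] (hk : 1 ≤ k) (hnk : n < 2 ^ (k + 1))
    (hd : Odd d) (hkd : 2 * k + 1 ≤ d) (hnd : n ∣ d) (hcard : card X + card Y = 2 * d + k)
    (hY : Y.toFinset.card ≤ 1) (hpairs : HasPairsBeyond (d + 1) (X.map r + Y.map sr)) :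
    HasDvdOneProd d (X.map r + Y.map sr) := by
  have hnd' := Nat.le_of_dvd hd.pos hnd
  by_cases hnodup : Y.Nodup
  · rw [toFinset_card_of_nodup hnodup] at hY
    exact hasDvdOneProd_of_le_card_map_r hd.pos hnd (by omega)
  · obtain ⟨y, hy⟩ := exists_pair_le_of_not_nodup hnodup
    exact hasDvdOneProd_of_add_self_le_map_sr hnk hd hkd hcard (singleton_ne_zero y)
      (by simpa using hk) hy (.inr (hY.trans (by simp))) hpairs

theorem six_mul_le_two_pow_add (k : ℕ) : 6 * k ≤ 2 ^ k + 13 := by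
  rcases lt_or_ge k 2 with hk | hk
  · exact (by omega : 6 * k ≤ 13).trans (Nat.le_add_left ..)
  · obtain ⟨j, rfl⟩ := Nat.exists_eq_add_of_le hk
    have hj : 2 * j ≤ 2 ^ j := Nat.mul_le_pow (by decide) j
    rw [pow_add]
    omega

theorem card_le_card_toFinset_add_two_mul (Y : Multiset (ZMod n)) :
    ∃ P, P + P ≤ Y ∧ card Y ≤ Y.toFinset.card + 2 * card P := by
  obtain ⟨D, P, hD, rfl⟩ := exists_nodup_add_self_add Y
  refine ⟨P, le_add_left _ _, ?_⟩
  have hDcard := card_le_card (le_dedup.2 ⟨le_add_right D (P + P), hD⟩)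
  rw [card_add, card_add, card_toFinset]
  omega

theorem hasDvdOneProd_of_card_eq (hd : Odd d) (hnd : n ∣ d) (hkn : 2 ^ k < n)
    (hnk : n < 2 ^ (k + 1)) {S : Multiset (DihedralGroup n)} (hS : card S = 2 * d + k) :
    HasDvdOneProd d S := by
  have hn := hd.of_dvd_nat hnd
  have : NeZero n := ⟨hn.pos.ne'⟩
  have hnd' := Nat.le_of_dvd hd.pos hnd
  have hk : 1 ≤ k := Nat.pos_of_ne_zero (by rintro rfl; omega)
  have hkd : 2 * k + 1 ≤ d := by
    have : 2 * k ≤ 2 ^ k := Nat.mul_le_pow (by decide) k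
    omega
  obtain ⟨X, Y, rfl⟩ := exists_eq_map_r_add_map_sr S
  rw [card_add, card_map, card_map] at hS
  by_cases hwide : (∃ x ∈ X, x ≠ 0) ∧ n < 2 * Y.toFinset.card
  · obtain ⟨⟨x, hxX, hx⟩, hY⟩ := hwide
    exact hasDvdOneProd_of_lt_two_mul_card hn hd hnd' (by omega) hxX hx hY
  have hpairs : HasPairsBeyond (d + 1) (X.map r + Y.map sr) := by
    rw [not_and_or, not_exists] at hwide
    rcases hwide with hX | hY
    · exact (hasPairsBeyond_of_forall_eq_zero (by simpa using hX)).mono (by omega) le_rfl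
    · exact (hasPairsBeyond_of_card_toFinset_lt (by have := Nat.odd_iff.1 hn; omega)).mono
        (by omega) le_rfl
  obtain ⟨P, hPY, hP⟩ := card_le_card_toFinset_add_two_mul Y
  by_cases hPk : k ≤ card P
  · obtain ⟨P', hP', hP'k⟩ := exists_le_card_eq P hPk
    exact hasDvdOneProd_of_add_self_le_map_sr hnk hd hkd hS
      (by rw [← card_pos, hP'k]; exact hk) hP'k.le ((add_le_add hP' hP').trans hPY)
      (.inl hP'k) hpairs
  by_cases hY : Y.toFinset.card ≤ 1
  · exact hasDvdOneProd_of_card_toFinset_le_one hk hnk hd hkd hnd hS hY hpairs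
  obtain ⟨y, hy, y', hy', hne⟩ := Finset.one_lt_card.1 (not_le.1 hY)
  by_cases hX : ∀ x ∈ X, x = 0
  · have hYn := Finset.card_le_univ Y.toFinset
    rw [ZMod.card] at hYn
    exact hasDvdOneProd_of_forall_eq_zero hd (by omega) hnd' hX (by rw [← card_pos]; omega)
      (by omega)
  · push Not at hX
    have hYn := not_lt.1 fun h ↦ hwide ⟨hX, h⟩
    have hk6 := six_mul_le_two_pow_add k
    exact hasDvdOneProd_of_ne hd hnd (mem_toFinset.1 hy) (mem_toFinset.1 hy') hne
      (by omega) (by omega) hpairs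

end UpperBound

section LowerBound

theorem sum_map_two_pow_lt {k : ℕ} {X : Multiset ℕ} (hX : X ≤ Multiset.range k) :
    (X.map (2 ^ ·)).sum < 2 ^ k := by
  have hgeom : ((Multiset.range k).map (2 ^ ·)).sum = 2 ^ k - 1 := by
    simpa using! Nat.geomSum_eq (m := 2) le_rfl k
  obtain ⟨Y, hY⟩ := le_iff_exists_add.1 hX
  rw [hY, Multiset.map_add, sum_add] at hgeom
  have := Nat.two_pow_pos k
  omega

theorem eq_zero_of_sum_map_two_pow_eq {I J : Multiset ℕ} (hIJ : (I + J).Nodup)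
    (h : (I.map (2 ^ ·)).sum = (J.map (2 ^ ·)).sum) : I + J = 0 := by
  obtain ⟨hI, hJ, hdisj⟩ := nodup_add.1 hIJ
  obtain rfl : I = J := congrArg Finset.val (Finset.geomSum_injective (n := 2) le_rfl
    (a₁ := ⟨I, hI⟩) (a₂ := ⟨J, hJ⟩) h)
  rw [eq_zero_of_forall_notMem fun i hi ↦ disjoint_left.1 hdisj hi hi, add_zero]

theorem expSum_map_r_two_pow (I : Multiset ℕ) :
    expSum (I.map fun i ↦ (r (2 ^ i) : DihedralGroup n)) = ((I.map (2 ^ ·)).sum : ℕ) := by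
  induction I using Multiset.induction with
  | empty => simp
  | cons i I ih => simp [ih]

theorem expSum_eq_zero_of_le_replicate {m : ℕ} {T : Multiset (DihedralGroup n)}
    (hT : T ≤ replicate m (sr 0)) : expSum T = 0 := by
  obtain ⟨j, -, rfl⟩ := le_replicate_iff.1 hT
  rw [← map_replicate, expSum_map_sr, sum_replicate, nsmul_zero]

theorem exists_eq_replicate_of_isOneProdSeq {k m : ℕ} (hkn : 2 ^ k ≤ n)
    {T : Multiset (DihedralGroup n)}
    (hT : T ≤ replicate m (sr 0) + (Multiset.range k).map fun i ↦ r (2 ^ i))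
    (h : IsOneProdSeq T) : ∃ j ≤ m, Even j ∧ T = replicate j (sr 0) := by
  obtain ⟨heven, A, B, hAB, hexp⟩ := even_reflCount_and_exists_expSum_eq h
  obtain ⟨T₁, hT₁, T₂, hT₂, rfl⟩ := exists_add_eq_of_le_add hT
  obtain ⟨K, hK, rfl⟩ := exists_map_eq_of_le_map hT₂
  obtain ⟨A₁, hA₁, A₂, hA₂, rfl⟩ := exists_add_eq_of_le_add ((le_add_right A B).trans_eq hAB)
  obtain ⟨I, hI, rfl⟩ := exists_map_eq_of_le_map hA₂
  obtain ⟨J, rfl⟩ := le_iff_exists_add.1 hI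
  obtain ⟨B₁, rfl⟩ := le_iff_exists_add.1 hA₁
  obtain rfl : B = B₁ + J.map fun i ↦ r (2 ^ i) := by
    rw [Multiset.map_add, add_add_add_comm] at hAB
    exact add_left_cancel hAB
  have hIJ : I + J = 0 := by
    refine eq_zero_of_sum_map_two_pow_eq (nodup_of_le hK (nodup_range k)) ?_
    rw [map_add, map_add, expSum_eq_zero_of_le_replicate ((le_add_right A₁ B₁).trans hT₁),
      expSum_eq_zero_of_le_replicate ((le_add_left B₁ A₁).trans hT₁), zero_add, zero_add,
      expSum_map_r_two_pow, expSum_map_r_two_pow, ZMod.natCast_eq_natCast_iff] at hexp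
    exact hexp.eq_of_lt_of_lt ((sum_map_two_pow_lt (hI.trans hK)).trans_le hkn)
      ((sum_map_two_pow_lt ((le_add_left J I).trans hK)).trans_le hkn)
  rw [hIJ, Multiset.map_zero, add_zero] at heven ⊢
  obtain ⟨j, hj, hT₁j⟩ := le_replicate_iff.1 hT₁
  refine ⟨j, hj, ?_, hT₁j⟩
  rwa [hT₁j, ← map_replicate, reflCount_map_sr, card_replicate] at heven

theorem exists_card_eq_not_hasDvdOneProd {d k : ℕ} (hd : Odd d) (hkn : 2 ^ k ≤ n) :
    ∃ S : Multiset (DihedralGroup n), card S = 2 * d - 1 + k ∧ ¬HasDvdOneProd d S := by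
  refine ⟨replicate (2 * d - 1) (sr 0) + (Multiset.range k).map fun i ↦ r (2 ^ i), by simp, ?_⟩
  rintro ⟨T, hTS, hT0, hdT, hT⟩
  obtain ⟨j, hj, heven, rfl⟩ := exists_eq_replicate_of_isOneProdSeq hkn hTS hT
  rw [card_replicate] at hdT
  have hj0 : 0 < j := by rwa [← card_pos, card_replicate] at hT0
  have hle := Nat.le_of_dvd hj0 (hd.coprime_two_left.mul_dvd_of_dvd_of_dvd heven.two_dvd hdT)
  have := hd.pos
  omega

end LowerBound

end DihedralSequence

/-- Let `n ≥ 3` and `d` be positive integers with `d` odd and `n ∣ d`.  Then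
`s_{dℕ}(D_{2n}) = 2d + ⌊log₂ n⌋`. -/
theorem stmt3 (n d : ℕ) (hn : 3 ≤ n) (hd : 0 < d) (hodd : Odd d) (hnd : n ∣ d) :
    IsLeast {ℓ : ℕ | ∀ S : Multiset (DihedralGroup n), ℓ ≤ Multiset.card S →
        ∃ T, T ≤ S ∧ T ≠ 0 ∧ d ∣ Multiset.card T ∧ IsOneProdSeq T}
      (2 * d + Nat.log 2 n) := by
  have hpow : 2 ^ Nat.log 2 n ≤ n := Nat.pow_log_le_self 2 (by omega)
  refine ⟨fun S hS ↦ ?_, fun ℓ hℓ ↦ ?_⟩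
  · have hlog : 1 ≤ Nat.log 2 n := Nat.log_pos (by decide) (by omega)
    have hne : 2 ^ Nat.log 2 n ≠ n := fun h ↦ Nat.not_even_iff_odd.2 (hodd.of_dvd_nat hnd)
      (h ▸ (Nat.even_pow.2 ⟨even_two, by omega⟩))
    obtain ⟨S', hS'S, hS'⟩ := DihedralSequence.exists_le_card_eq S hS
    obtain ⟨T, hTS', hT⟩ := DihedralSequence.hasDvdOneProd_of_card_eq hodd hnd
      (hpow.lt_of_ne hne) (Nat.lt_pow_succ_log_self (by decide) n) hS'
    exact ⟨T, hTS'.trans hS'S, hT⟩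
  · by_contra! hlt
    obtain ⟨S, hScard, hS⟩ := DihedralSequence.exists_card_eq_not_hasDvdOneProd hodd hpow
    exact hS (hℓ S (by omega))
end

section
/- Let n ≥ 3 and d be positive integers with gcd(n, d) = 1. Then s_{dℕ}(D_{2n}) = nd + 1. -/
/-!
Lower bound: if `a` has order `n` coprime to `d` and `b ∉ ⟨a⟩`, a 1-product subsequence of
`b, a, …, a` must avoid `b`, and a power `a ^ k = 1` with `d ∣ k` forces `n * d ∣ k`.

Upper bound: let `H` be the rotation subgroup, so that a product lies in `H` as soon as it has an
even number of factors outside `H`. Unless `d` is odd and there are fewer than `n` rotations, one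
can cut `n` disjoint blocks of length `d` with product in `H` out of the sequence, and since
`|H| = n`, consecutive blocks among them multiply to `1`. In the remaining case there are many
reflections: for `d ≥ 3` they contain `d` pairs of equal ones, and for `d = 1` one compares the
products of an initial segment of the rotations with one reflection.
-/

open Multiset (card replicate)

section OneProd

variable {G : Type*} [Group G] {a b : G} {d k : ℕ} {S T : Multiset G} {H : Subgroup G}

namespace IsOneProdSeq

theorem add (hS : IsOneProdSeq S) (hT : IsOneProdSeq T) : IsOneProdSeq (S + T) := by
  obtain ⟨l, rfl, hl⟩ := hS
  obtain ⟨m, rfl, hm⟩ := hT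
  exact ⟨l ++ m, rfl, by rw [List.prod_append, hl, hm, mul_one]⟩

theorem two_nsmul (hT : ∀ t ∈ T, t * t = 1) : IsOneProdSeq (2 • T) := by
  induction T using Multiset.induction with
  | empty => exact ⟨[], rfl, rfl⟩
  | cons a T ih =>
    rw [← Multiset.singleton_add, nsmul_add]
    have ha : IsOneProdSeq (2 • {a}) := ⟨[a, a], rfl, by simpa using hT a (by simp)⟩
    exact ha.add (ih fun t ht => hT t (Multiset.mem_cons_of_mem ht))

theorem pow_eq_one (h : IsOneProdSeq (replicate k a)) : a ^ k = 1 := by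
  obtain ⟨l, hl, hprod⟩ := h
  rw [← Multiset.coe_replicate, Multiset.coe_eq_coe, List.perm_replicate] at hl
  rwa [hl, List.prod_replicate] at hprod

theorem mem_of_cons (h : IsOneProdSeq (b ::ₘ T)) (hT : ∀ t ∈ T, t ∈ H) : b ∈ H := by
  obtain ⟨l, hl, hprod⟩ := h
  obtain ⟨l₁, l₂, rfl⟩ := List.append_of_mem (Multiset.mem_coe.1 (hl ▸ Multiset.mem_cons_self b T))
  have hrest : ((l₁ ++ l₂ : List G) : Multiset G) = T := by
    rw [← Multiset.cons_inj_right b, ← hl, Multiset.cons_coe, Multiset.coe_eq_coe]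
    exact List.perm_middle.symm
  have hmem : ∀ t ∈ l₁ ++ l₂, t ∈ H := fun t ht => hT t (hrest ▸ Multiset.mem_coe.2 ht)
  have h₁ : l₁.prod ∈ H := H.list_prod_mem fun t ht => hmem t (List.mem_append_left _ ht)
  have h₂ : l₂.prod ∈ H := H.list_prod_mem fun t ht => hmem t (List.mem_append_right _ ht)
  rw [List.prod_append, List.prod_cons] at hprod
  rw [← H.mul_mem_cancel_right h₂, ← H.mul_mem_cancel_left h₁, hprod]
  exact H.one_mem

end IsOneProdSeq

/-- The sequence `S` has a nonempty 1-product subsequence whose length is a multiple of `d`;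
`s_{dℕ}(G)` is the least length from which on all sequences over `G` have this property. -/
def HasOneProdSubseq (d : ℕ) (S : Multiset G) : Prop :=
  ∃ T, T ≤ S ∧ T ≠ 0 ∧ d ∣ card T ∧ IsOneProdSeq T

theorem HasOneProdSubseq.mono (h : HasOneProdSubseq d S) (hST : S ≤ T) : HasOneProdSubseq d T :=
  h.imp fun _ hR => ⟨hR.1.trans hST, hR.2⟩

theorem hasOneProdSubseq_coe {l : List G} (hl : l ≠ []) (hd : d ∣ l.length) (hprod : l.prod = 1) :
    HasOneProdSubseq d (l : Multiset G) :=
  ⟨l, le_rfl, by simpa using hl, by simpa using hd, l, rfl, hprod⟩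

theorem not_hasOneProdSubseq_cons_replicate (hb : b ∉ Subgroup.zpowers a)
    (hd : (orderOf a).Coprime d) :
    ¬HasOneProdSubseq d (b ::ₘ replicate (orderOf a * d - 1) a) := by
  rintro ⟨T, hT, hT0, hdT, hprod⟩
  by_cases hbT : b ∈ T
  · obtain ⟨R, rfl⟩ := Multiset.exists_cons_of_mem hbT
    rw [Multiset.cons_le_cons_iff] at hT
    refine hb (hprod.mem_of_cons fun t ht => ?_)
    rw [Multiset.eq_of_mem_replicate (Multiset.mem_of_le hT ht)]
    exact Subgroup.mem_zpowers a
  · rw [Multiset.le_cons_of_notMem hbT, Multiset.le_replicate_iff] at hT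
    obtain ⟨k, hk, rfl⟩ := hT
    rw [Multiset.card_replicate] at hdT
    have hdvd : orderOf a * d ∣ k :=
      hd.mul_dvd_of_dvd_of_dvd (orderOf_dvd_of_pow_eq_one hprod.pow_eq_one) hdT
    have hk0 : 0 < k := Nat.pos_of_ne_zero fun h => hT0 (by rw [h, Multiset.replicate_zero])
    have := Nat.le_of_dvd hk0 hdvd
    omega

end OneProd

section Multiset

variable {α : Type*}

theorem exists_add_eq_card_eq {m : ℕ} {A : Multiset α} (h : m ≤ card A) :
    ∃ C D, C + D = A ∧ card C = m := by
  refine Quotient.inductionOn A (fun l hl => ⟨l.take m, l.drop m, ?_, ?_⟩) h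
  · simp [Multiset.coe_add]
  · simpa using hl

theorem exists_eq_cons_cons_of_ncard_lt {s : Set α} {B : Multiset α} (hs : s.Finite)
    (hB : ∀ b ∈ B, b ∈ s) (hcard : s.ncard < card B) : ∃ a C, B = a ::ₘ a ::ₘ C := by
  by_contra! hne
  have hnodup : B.Nodup := Multiset.nodup_iff_ne_cons_cons.2 hne
  have := Set.ncard_le_ncard (s := ((⟨B, hnodup⟩ : Finset α) : Set α)) hB hs
  rw [Set.ncard_coe_finset, Finset.card_mk] at this
  omega

theorem exists_two_nsmul_le {s : Set α} (hs : s.Finite) (k : ℕ) {B : Multiset α}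
    (hB : ∀ b ∈ B, b ∈ s) (hcard : s.ncard + 2 * k ≤ card B + 1) :
    ∃ C, card C = k ∧ 2 • C ≤ B := by
  induction k generalizing B with
  | zero => exact ⟨0, by simp⟩
  | succ k ih =>
    obtain ⟨a, B, rfl⟩ := exists_eq_cons_cons_of_ncard_lt hs hB (by omega)
    simp only [Multiset.card_cons] at hcard
    obtain ⟨C, hC, hCB⟩ := ih (B := B) (fun b hb => hB b (by simp [hb])) (by omega)
    refine ⟨a ::ₘ C, by rw [Multiset.card_cons, hC], ?_⟩
    calc 2 • (a ::ₘ C) = a ::ₘ a ::ₘ 2 • C := by simp [two_nsmul]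
      _ ≤ a ::ₘ a ::ₘ B := Multiset.cons_le_cons _ (Multiset.cons_le_cons _ hCB)

end Multiset

section Pigeonhole

variable {G : Type*} [Group G] {d : ℕ} {H : Subgroup G}

theorem prod_mul_mem_of_forall_mul_mem {s : Set G} {l : List G}
    (hl : ∀ g ∈ l, ∀ x ∈ s, g * x ∈ s) {b : G} (hb : b ∈ s) : l.prod * b ∈ s := by
  induction l with
  | nil => simpa using hb
  | cons g l ih =>
    rw [List.prod_cons, mul_assoc]
    exact hl g (by simp) _ (ih fun x hx => hl x (List.mem_cons_of_mem g hx))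

theorem exists_infix_prod_mul_eq {s : Set G} {l : List G} {B : Finset G} (hs : s.Finite)
    (hl : ∀ g ∈ l, ∀ x ∈ s, g * x ∈ s) (hB : ∀ b ∈ B, b ∈ s)
    (hcard : s.ncard < (l.length + 1) * B.card) :
    ∃ m, m <:+: l ∧ ∃ b ∈ B, ∃ c ∈ B, m.prod * c = b ∧ (m = [] → b ≠ c) := by
  obtain ⟨⟨i, b⟩, hib, ⟨j, c⟩, hjc, hne, heq⟩ :=
    Set.exists_ne_map_eq_of_ncard_lt_of_maps_to
      (s := ((Finset.range (l.length + 1) ×ˢ B : Finset (ℕ × G)) : Set (ℕ × G))) (t := s)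
      (f := fun p : ℕ × G => (l.take p.1).prod * p.2)
      (by rwa [Set.ncard_coe_finset, Finset.card_product, Finset.card_range])
      (fun p hp => prod_mul_mem_of_forall_mul_mem (fun g hg => hl g (List.mem_of_mem_take hg))
        (hB _ (Finset.mem_product.1 hp).2)) hs
  wlog hij : i ≤ j generalizing i j b c
  · exact this j c hjc i b hib hne.symm heq.symm (by omega)
  simp only [Finset.coe_product, Finset.coe_range, Set.mem_prod, Set.mem_Iio,
    Finset.mem_coe] at hib hjc
  have hsplit : l.take j = l.take i ++ (l.take j).drop i := by
    conv_lhs => rw [← List.take_append_drop i (l.take j), List.take_take, min_eq_left hij]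
  refine ⟨(l.take j).drop i, (List.drop_suffix _ _).isInfix.trans (List.take_prefix _ _).isInfix,
    b, hib.2, c, hjc.2, ?_, fun hnil hbc => hne ?_⟩
  · rw [hsplit, List.prod_append, mul_assoc] at heq
    exact (mul_left_cancel heq).symm
  · have := congrArg List.length hnil
    simp only [List.length_drop, List.length_take, List.length_nil] at this
    exact Prod.ext (by simp only; omega) hbc

theorem exists_infix_prod_eq_one [Finite H] {l : List G} (hl : ∀ g ∈ l, g ∈ H)
    (hcard : Nat.card H ≤ l.length) : ∃ m, m <:+: l ∧ m ≠ [] ∧ m.prod = 1 := by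
  obtain ⟨m, hm, b, hb, c, hc, hmul, hne⟩ :=
    exists_infix_prod_mul_eq (s := (H : Set G)) (B := {1}) (Set.toFinite _)
      (fun g hg x hx => H.mul_mem (hl g hg) hx) (by simp [H.one_mem])
      (by simpa [← Nat.card_coe_set_eq] using Nat.lt_succ_of_le hcard)
  obtain rfl := Finset.mem_singleton.1 hb
  obtain rfl := Finset.mem_singleton.1 hc
  exact ⟨m, hm, fun hnil => hne hnil rfl, by simpa using hmul⟩

theorem hasOneProdSubseq_flatten [Finite H] {L : List (List G)} (hL : Nat.card H ≤ L.length)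
    (hne : ∀ l ∈ L, l ≠ []) (hdvd : ∀ l ∈ L, d ∣ l.length) (hprod : ∀ l ∈ L, l.prod ∈ H) :
    HasOneProdSubseq d (L.flatten : Multiset G) := by
  obtain ⟨m, hm, hm0, hm1⟩ := exists_infix_prod_eq_one (l := L.map List.prod)
    (List.forall_mem_map.2 hprod) (by rwa [List.length_map])
  obtain ⟨M, hM, rfl⟩ := List.infix_map_iff.1 hm
  obtain ⟨l, hl⟩ := List.exists_mem_of_ne_nil M (by simpa using hm0)
  have hflat : HasOneProdSubseq d (M.flatten : Multiset G) := by
    refine hasOneProdSubseq_coe (fun h => hne l (hM.subset hl) (List.flatten_eq_nil_iff.1 h l hl))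
      ?_ (by rw [List.prod_flatten, hm1])
    rw [List.length_flatten]
    exact List.dvd_sum (List.forall_mem_map.2 fun l hl => hdvd l (hM.subset hl))
  exact hflat.mono (Multiset.coe_le.2 hM.sublist.flatten.subperm)

end Pigeonhole

section IndexTwo

variable {G : Type*} [Group G] {d k : ℕ} {H : Subgroup G} {A B : Multiset G}

theorem prod_mem_iff_even_length (hH : H.index = 2) {l : List G} (hl : ∀ g ∈ l, g ∉ H) :
    l.prod ∈ H ↔ Even l.length := by
  induction l with
  | nil => simp [H.one_mem]
  | cons g l ih =>
    rw [List.prod_cons, Subgroup.mul_mem_iff_of_index_two hH, List.length_cons, Nat.even_add_one,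
      ih fun x hx => hl x (List.mem_cons_of_mem g hx)]
    simp [hl g (by simp)]

theorem exists_list_prod_mem (hH : H.index = 2) (hA : ∀ a ∈ A, a ∈ H) (hB : ∀ b ∈ B, b ∉ H)
    (heven : Even (card B)) : ∃ l : List G, (l : Multiset G) = A + B ∧ l.prod ∈ H := by
  refine ⟨A.toList ++ B.toList, by rw [← Multiset.coe_add, A.coe_toList, B.coe_toList], ?_⟩
  rw [List.prod_append]
  refine H.mul_mem (H.list_prod_mem (by simpa using hA)) ?_
  rwa [prod_mem_iff_even_length hH (by simpa using hB), Multiset.length_toList]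

theorem exists_blocks_prod_mem (hH : H.index = 2) (hd : 0 < d) (hA : ∀ a ∈ A, a ∈ H)
    (hB : ∀ b ∈ B, b ∉ H) (hcard : k * d < card A + card B) (hodd : Odd d → k ≤ card A) :
    ∃ L : List (List G), L.length = k ∧ (∀ l ∈ L, l.length = d ∧ l.prod ∈ H) ∧
      (L.flatten : Multiset G) ≤ A + B := by
  induction k generalizing A B with
  | zero => exact ⟨[], rfl, by simp, by simp⟩
  | succ k ih =>
    have hkd : k ≤ k * d := Nat.le_mul_of_pos_right k hd
    rw [Nat.succ_mul] at hcard
    rw [Nat.odd_iff] at hodd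
    -- Greedily use up the elements outside `H`, in order to spare those of `H` when `d` is odd.
    obtain ⟨e, he⟩ : ∃ e, e = min (d - d % 2) (card B - card B % 2) := ⟨_, rfl⟩
    obtain ⟨C, A', rfl, hC⟩ := exists_add_eq_card_eq (m := d - e) (A := A) (by omega)
    obtain ⟨D, B', rfl, hD⟩ := exists_add_eq_card_eq (m := e) (A := B) (by omega)
    simp only [Multiset.mem_add, or_imp, forall_and] at hA hB
    simp only [Multiset.card_add] at hcard hodd he
    obtain ⟨l, hl, hprod⟩ := exists_list_prod_mem hH hA.1 hB.1 (by rw [Nat.even_iff]; omega)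
    have hlen : l.length = d := by
      rw [← Multiset.coe_card, hl, Multiset.card_add]
      omega
    obtain ⟨L, hLk, hL, hLle⟩ := ih hA.2 hB.2 (by omega) (by rw [Nat.odd_iff]; omega)
    refine ⟨l :: L, by rw [List.length_cons, hLk], List.forall_mem_cons.2 ⟨⟨hlen, hprod⟩, hL⟩, ?_⟩
    calc ((l :: L).flatten : Multiset G) = (C + D) + L.flatten := by
          rw [List.flatten_cons, ← Multiset.coe_add, hl]
      _ ≤ (C + D) + (A' + B') := by gcongr
      _ = (C + A') + (D + B') := add_add_add_comm ..

end IndexTwo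

section GeneralizedDihedral

-- The hypotheses `H.index = 2` and `∀ g ∉ H, g * g = 1` express that `G` is a generalized dihedral
-- group over `H`, as conjugation by an element outside `H` then inverts `H`.

variable {G : Type*} [Group G] [Finite G] {d : ℕ} {H : Subgroup G} {A B : Multiset G}

theorem ncard_compl_of_index_two (hH : H.index = 2) : ((H : Set G)ᶜ).ncard = Nat.card H := by
  have h₁ := Set.ncard_add_ncard_compl (H : Set G)
  have h₂ := H.card_mul_index
  rw [← Nat.card_coe_set_eq, SetLike.coe_sort_coe] at h₁
  rw [hH] at h₂
  omega

theorem hasOneProdSubseq_one_add (hH : H.index = 2) (hinv : ∀ g ∉ H, g * g = 1)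
    (hA : ∀ a ∈ A, a ∈ H) (hB : ∀ b ∈ B, b ∉ H) (hB0 : B ≠ 0)
    (hcard : Nat.card H < card A + card B) : HasOneProdSubseq 1 (A + B) := by
  by_cases hnodup : B.Nodup
  · have hpairs : Nat.card H < (card A + 1) * card B := by
      have := Multiset.card_pos.2 hB0
      nlinarith
    obtain ⟨m, hm, b, hb, c, hc, hmul, hne⟩ :=
      exists_infix_prod_mul_eq (s := (H : Set G)ᶜ) (l := A.toList) (B := ⟨B, hnodup⟩)
        (Set.toFinite _)
        (fun a ha x hx => (H.mul_mem_cancel_left (hA a (Multiset.mem_toList.1 ha))).not.2 hx) hB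
        (by rwa [ncard_compl_of_index_two hH, Multiset.length_toList, Finset.card_mk])
    have hmA : (m : Multiset G) ≤ A := by
      simpa using Multiset.coe_le.2 hm.sublist.subperm
    by_cases hbc : b = c
    · have hm1 : m.prod = 1 := by simpa [hbc] using hmul
      exact (hasOneProdSubseq_coe (fun h => hne h hbc) (one_dvd _) hm1).mono
        (hmA.trans (Multiset.le_add_right A B))
    · have hprod : (m ++ [c, b]).prod = 1 := by
        simpa [← mul_assoc, hmul] using hinv b (hB b hb)
      have hcb : (([c, b] : List G) : Multiset G) ≤ B :=
        (Multiset.le_iff_subset (by simp [Ne.symm hbc])).2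
          (by simpa [Multiset.subset_iff] using And.intro hc hb)
      refine (hasOneProdSubseq_coe (by simp) (one_dvd _) hprod).mono ?_
      rw [← Multiset.coe_add]
      exact add_le_add hmA hcb
  · obtain ⟨b, C, rfl⟩ : ∃ b C, B = b ::ₘ b ::ₘ C := by
      simpa [Multiset.nodup_iff_ne_cons_cons] using hnodup
    have hprod : [b, b].prod = 1 := by simpa using hinv b (hB b (by simp))
    refine (hasOneProdSubseq_coe (by simp) (one_dvd _) hprod).mono
      (le_trans ?_ (Multiset.le_add_left _ A))
    exact Multiset.cons_le_cons b (Multiset.cons_le_cons b (Multiset.zero_le C))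

theorem hasOneProdSubseq_of_two_mul_le_card (hH : H.index = 2) (hinv : ∀ g ∉ H, g * g = 1)
    (hd : 0 < d) (hB : ∀ b ∈ B, b ∉ H) (hcard : Nat.card H + 2 * d ≤ card B + 1) :
    HasOneProdSubseq d B := by
  obtain ⟨C, hC, hCB⟩ := exists_two_nsmul_le (Set.toFinite (H : Set G)ᶜ) d hB
    (by rwa [ncard_compl_of_index_two hH])
  have hcard2 : card (2 • C) = 2 * d := by rw [Multiset.card_nsmul, hC]
  refine ⟨2 • C, hCB, Multiset.card_pos.1 (by omega), hcard2 ▸ dvd_mul_left d 2, .two_nsmul ?_⟩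
  exact fun c hc => hinv c (hB c (Multiset.mem_of_le hCB (by simpa using hc)))

theorem hasOneProdSubseq_of_card_mul_lt (hH : H.index = 2) (hinv : ∀ g ∉ H, g * g = 1)
    (hH3 : 3 ≤ Nat.card H) (hd : 0 < d) {S : Multiset G} (hS : Nat.card H * d < card S) :
    HasOneProdSubseq d S := by
  classical
  obtain ⟨A, B, rfl, hA, hB⟩ : ∃ A B, A + B = S ∧ (∀ a ∈ A, a ∈ H) ∧ ∀ b ∈ B, b ∉ H :=
    ⟨S.filter (· ∈ H), S.filter (· ∉ H), Multiset.filter_add_not _ S,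
      fun _ => Multiset.of_mem_filter, fun _ => Multiset.of_mem_filter⟩
  rw [Multiset.card_add] at hS
  by_cases hodd : Odd d → Nat.card H ≤ card A
  · obtain ⟨L, hLcard, hL, hLle⟩ := exists_blocks_prod_mem hH hd hA hB hS hodd
    refine (hasOneProdSubseq_flatten (H := H) hLcard.ge ?_ ?_ ?_).mono hLle
    · exact fun l hl => List.ne_nil_of_length_pos ((hL l hl).1 ▸ hd)
    · exact fun l hl => (hL l hl).1.symm.dvd
    · exact fun l hl => (hL l hl).2
  · obtain ⟨hdodd, hAcard⟩ : Odd d ∧ card A < Nat.card H := by simpa using hodd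
    obtain rfl | hd3 : d = 1 ∨ 3 ≤ d := by
      have := Nat.odd_iff.1 hdodd
      omega
    · rw [mul_one] at hS
      exact hasOneProdSubseq_one_add hH hinv hA hB (Multiset.card_pos.1 (by omega)) hS
    · -- This is the inequality `(|H| - 2) * (d - 2) ≥ 1`.
      have hBcard : Nat.card H + 2 * d ≤ card B + 1 := by nlinarith
      exact (hasOneProdSubseq_of_two_mul_le_card hH hinv hd hB hBcard).mono
        (Multiset.le_add_left B A)

end GeneralizedDihedral


section Dihedral

open DihedralGroup Subgroup

variable {n : ℕ}

theorem r_mem_zpowers_r_one (i : ZMod n) : r i ∈ zpowers (r 1 : DihedralGroup n) := by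
  obtain ⟨k, rfl⟩ := ZMod.intCast_surjective i
  exact ⟨k, r_one_zpow k⟩

theorem sr_notMem_zpowers_r_one (i : ZMod n) : sr i ∉ zpowers (r 1 : DihedralGroup n) := by
  rintro ⟨k, hk⟩
  simp at hk

theorem card_zpowers_r_one : Nat.card (zpowers (r 1 : DihedralGroup n)) = n := by
  rw [Nat.card_zpowers, orderOf_r_one]

theorem index_zpowers_r_one : (zpowers (r 1 : DihedralGroup n)).index = 2 := by
  refine index_eq_two_iff.2 ⟨sr 0, ?_⟩
  rintro (i | i) <;> simp [Xor, r_mem_zpowers_r_one, sr_notMem_zpowers_r_one]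

theorem mul_self_of_notMem_zpowers_r_one {g : DihedralGroup n} (hg : g ∉ zpowers (r 1)) :
    g * g = 1 := by
  cases g with
  | r i => exact absurd (r_mem_zpowers_r_one i) hg
  | sr i => exact sr_mul_self i

end Dihedral

/-- Let `n ≥ 3` and `d` be positive integers with `gcd(n, d) = 1`.  Then
`s_{dℕ}(D_{2n}) = nd + 1`. -/
theorem stmt4 (n d : ℕ) (hn : 3 ≤ n) (hd : 0 < d) (hgcd : Nat.gcd n d = 1) :
    IsLeast {ℓ : ℕ | ∀ S : Multiset (DihedralGroup n), ℓ ≤ Multiset.card S →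
        ∃ T, T ≤ S ∧ T ≠ 0 ∧ d ∣ Multiset.card T ∧ IsOneProdSeq T}
      (n * d + 1) := by
  have : NeZero n := ⟨by omega⟩
  constructor
  · intro S hS
    exact hasOneProdSubseq_of_card_mul_lt index_zpowers_r_one
      (fun _ => mul_self_of_notMem_zpowers_r_one) (by rwa [card_zpowers_r_one]) hd
      (by rwa [card_zpowers_r_one])
  · intro ℓ hℓ
    have horder : orderOf (DihedralGroup.r 1 : DihedralGroup n) = n := DihedralGroup.orderOf_r_one
    have hnot := not_hasOneProdSubseq_cons_replicate (d := d)
      (sr_notMem_zpowers_r_one (n := n) 0) (by rwa [horder])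
    by_contra! hlt
    refine hnot (hℓ _ ?_)
    rw [horder, Multiset.card_cons, Multiset.card_replicate]
    omega
end

section
/- Let p and q be primes with p ≥ 3 and p | q − 1, let s be an integer whose multiplicative order modulo q equals p, and let G_{pq} = ⟨x, y : x^p = y^q = 1, yx = xy^s⟩ be the corresponding nonabelian metacyclic group of order pq. Then for every positive integer k, s_{kpℕ}(G_{pq}) = lcm(kp, q) + p − 2 + gcd(kp, q). -/
/-!
Write the elements of `G` as `x ^ a * y ^ b` with coordinates `a` in `ZMod p` and `b` in `ZMod q`.
A sequence with total `a`-coordinate zero has its product in `⟨y⟩`, whatever the ordering, and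
swapping noncommuting neighbours changes the `b`-coordinate of that product. Choosing one term
from each of `p - 1` pairs with distinct `a`-coordinates makes the total `a`-coordinate zero, and
`q - 1` pairs of noncommuting terms make every `b`-coordinate reachable; both are instances of the
Cauchy–Davenport theorem. Hence `p * q + p + q - 2` terms contain a 1-product subsequence of
length `p * q`: the pairs are missing only for sequences concentrated on a single element, on
`⟨y⟩`, on another coset of it, or on a centralizer, where direct arguments apply.

This gives the upper bound when `q ∣ k`. Otherwise `gcd(kp, q) = 1`, and it comes from extracting
blocks of length `p` with product in `⟨y⟩` and then using the Davenport constant of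
`ZMod k × ZMod q`. The lower bound is the sequence with `gcd(kp, q) - 1` terms `1`,
`lcm(kp, q) - 1` terms `y` and `p - 1` terms `x`.
-/

section Multiset

variable {ι κ : Type*}

theorem countP_le_countP {S : Multiset ι} {P Q : ι → Prop} [DecidablePred P] [DecidablePred Q]
    (h : ∀ x ∈ S, P x → Q x) : S.countP P ≤ S.countP Q := by
  simp only [Multiset.countP_eq_card_filter]
  refine Multiset.card_le_card (Multiset.le_filter.2 ⟨Multiset.filter_le _ _, fun x hx => ?_⟩)
  exact h x (Multiset.mem_of_mem_filter hx) (Multiset.of_mem_filter hx)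

theorem countP_le_countP_add_countP {P Q R : ι → Prop} [DecidablePred P] [DecidablePred Q]
    [DecidablePred R] {S : Multiset ι} (h : ∀ x ∈ S, P x → Q x ∨ R x) :
    S.countP P ≤ S.countP Q + S.countP R := by
  induction S using Multiset.induction with
  | empty => exact le_rfl
  | cons x S ih =>
    rw [Multiset.forall_mem_cons] at h
    have := ih h.2
    have := h.1
    simp only [Multiset.countP_cons]
    split_ifs <;> first | omega | tauto

theorem countP_add_countP_le_card {S : Multiset ι} {P Q : ι → Prop} [DecidablePred P]
    [DecidablePred Q] (h : ∀ x ∈ S, P x → ¬ Q x) : S.countP P + S.countP Q ≤ S.card := by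
  rw [S.card_eq_countP_add_countP Q, Nat.add_comm]
  exact Nat.add_le_add_left (countP_le_countP h) _

theorem replicate_count_add_filter_ne [DecidableEq ι] (i : ι) (S : Multiset ι) :
    Multiset.replicate (S.count i) i + S.filter (· ≠ i) = S := by
  rw [← Multiset.filter_eq']
  exact Multiset.filter_add_not _ S

theorem exists_le_le_eq_add_of_le_add {A B T : Multiset ι} (h : T ≤ A + B) :
    ∃ A' ≤ A, ∃ B' ≤ B, T = A' + B' := by
  classical
  exact ⟨T - B, tsub_le_iff_right.2 h, T ∩ B, Multiset.inter_le_right,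
    (Multiset.sub_add_inter T B).symm⟩

theorem sum_le_sum_of_le {A B : Multiset (Multiset ι)} (h : A ≤ B) : A.sum ≤ B.sum := by
  obtain ⟨R, rfl⟩ := Multiset.le_iff_exists_add.1 h
  rw [Multiset.sum_add]
  exact Multiset.le_add_right _ _

theorem exists_le_card_eq {S : Multiset ι} {n : ℕ} (h : n ≤ S.card) : ∃ T ≤ S, T.card = n := by
  have hpos : 0 < (S.powersetCard n).card := by
    rw [Multiset.card_powersetCard]
    exact Nat.choose_pos h
  obtain ⟨T, hT⟩ := Multiset.card_pos_iff_exists_mem.1 hpos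
  exact ⟨T, Multiset.mem_powersetCard.1 hT⟩

theorem exists_le_card_eq_forall {S : Multiset ι} {P : ι → Prop} [DecidablePred P] {n : ℕ}
    (h : n ≤ S.countP P) : ∃ T ≤ S, T.card = n ∧ ∀ x ∈ T, P x := by
  rw [Multiset.countP_eq_card_filter] at h
  obtain ⟨T, hT, hTn⟩ := exists_le_card_eq h
  exact ⟨T, hT.trans (Multiset.filter_le _ _), hTn,
    fun x hx => Multiset.of_mem_filter (Multiset.mem_of_le hT hx)⟩

theorem exists_le_le_card_eq {A S : Multiset ι} {n : ℕ} (hAS : A ≤ S) (hA : A.card ≤ n)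
    (hS : n ≤ S.card) : ∃ T, A ≤ T ∧ T ≤ S ∧ T.card = n := by
  obtain ⟨R, rfl⟩ := Multiset.le_iff_exists_add.1 hAS
  rw [Multiset.card_add] at hS
  obtain ⟨T, hT, hTn⟩ := exists_le_card_eq (Nat.sub_le_of_le_add (Nat.add_comm _ _ ▸ hS) :
    n - A.card ≤ R.card)
  exact ⟨A + T, Multiset.le_add_right _ _, by gcongr, by rw [Multiset.card_add]; omega⟩

theorem exists_add_le_of_forall_or {S : Multiset ι} {P Q : ι → Prop} [DecidablePred P]
    [DecidablePred Q] {m n : ℕ} (h : ∀ x ∈ S, P x ∨ Q x) (hm : m ≤ S.countP P)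
    (hn : n ≤ S.countP Q) (hmn : m + n ≤ S.card) :
    ∃ A B, A + B ≤ S ∧ A.card = m ∧ B.card = n ∧ (∀ x ∈ A, P x) ∧ ∀ x ∈ B, Q x := by
  have hnotQ : ∀ x ∈ S.filter (¬ Q ·), P x := fun x hx =>
    (h x (Multiset.mem_of_mem_filter hx)).resolve_right (Multiset.mem_filter.1 hx).2
  rcases le_total m (S.filter (¬ Q ·)).card with hle | hle
  · obtain ⟨A, hA, hAm⟩ := exists_le_card_eq hle
    rw [Multiset.countP_eq_card_filter] at hn
    obtain ⟨B, hB, hBn⟩ := exists_le_card_eq hn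
    refine ⟨A, B, ?_, hAm, hBn, fun x hx => hnotQ x (Multiset.mem_of_le hA hx),
      fun x hx => Multiset.of_mem_filter (Multiset.mem_of_le hB hx)⟩
    rw [← Multiset.filter_add_not Q S, add_comm]
    exact add_le_add hB hA
  · rw [Multiset.countP_eq_card_filter] at hm
    obtain ⟨A, hA, hAS, rfl⟩ := exists_le_le_card_eq
      (Multiset.le_filter.2 ⟨Multiset.filter_le _ _, hnotQ⟩) hle hm
    obtain ⟨R, rfl⟩ := Multiset.le_iff_exists_add.1 (hAS.trans (Multiset.filter_le _ _))
    have hR : R.countP (¬ Q ·) = 0 := by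
      have hcard := Multiset.countP_le_of_le (¬ Q ·) hA
      rw [Multiset.countP_filter, Multiset.countP_add] at hcard
      simp only [and_self] at hcard
      omega
    obtain ⟨B, hB, hBn⟩ := exists_le_card_eq (S := R) (n := n) (by
      rw [Multiset.card_add] at hmn; omega)
    exact ⟨A, B, by gcongr, rfl, hBn,
      fun x hx => Multiset.of_mem_filter (Multiset.mem_of_le hAS hx),
      fun x hx => not_not.1 (Multiset.countP_eq_zero.1 hR x (Multiset.mem_of_le hB hx))⟩

/-- The sequence of all terms of a sequence of pairs. -/
def pairTerms (M : Multiset (ι × ι)) : Multiset ι :=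
  M.map Prod.fst + M.map Prod.snd

@[simp]
theorem pairTerms_zero : pairTerms (0 : Multiset (ι × ι)) = 0 := rfl

theorem pairTerms_cons (m : ι × ι) (M : Multiset (ι × ι)) :
    pairTerms (m ::ₘ M) = {m.1, m.2} + pairTerms M := by
  rw [pairTerms, Multiset.map_cons, Multiset.map_cons]
  simp only [pairTerms, Multiset.insert_eq_cons, ← Multiset.singleton_add]
  abel

theorem card_pairTerms (M : Multiset (ι × ι)) : (pairTerms M).card = 2 * M.card := by
  rw [pairTerms, Multiset.card_add, Multiset.card_map, Multiset.card_map, two_mul]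

theorem fst_mem_pairTerms {M : Multiset (ι × ι)} {m : ι × ι} (hm : m ∈ M) :
    m.1 ∈ pairTerms M :=
  Multiset.mem_add.2 (Or.inl (Multiset.mem_map_of_mem _ hm))

theorem snd_mem_pairTerms {M : Multiset (ι × ι)} {m : ι × ι} (hm : m ∈ M) :
    m.2 ∈ pairTerms M :=
  Multiset.mem_add.2 (Or.inr (Multiset.mem_map_of_mem _ hm))

theorem pairTerms_map_mk (S : Multiset ι) (i : ι) :
    pairTerms (S.map (·, i)) = S + Multiset.replicate S.card i := by
  simp only [pairTerms, Multiset.map_map, Function.comp_def, Multiset.map_id', Multiset.map_const']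

theorem exists_pairTerms_eq_add {A B : Multiset ι} (h : A.card = B.card) :
    ∃ M, M.card = A.card ∧ pairTerms M = A + B ∧ ∀ m ∈ M, m.1 ∈ A ∧ m.2 ∈ B := by
  induction A using Multiset.induction generalizing B with
  | empty => exact ⟨0, by simp [Multiset.card_eq_zero.1 h.symm]⟩
  | cons a A ih =>
    obtain ⟨b, hb⟩ := Multiset.card_pos_iff_exists_mem.1
      (h ▸ Multiset.card_cons a A ▸ Nat.succ_pos _ : 0 < B.card)
    obtain ⟨B, rfl⟩ := Multiset.exists_cons_of_mem hb
    obtain ⟨M, hMA, hM, hmem⟩ := ih (B := B) (by simpa using h)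
    refine ⟨(a, b) ::ₘ M, by simp [hMA], ?_, ?_⟩
    · rw [pairTerms_cons, hM]
      simp only [Multiset.insert_eq_cons, ← Multiset.singleton_add]
      abel
    · simp only [Multiset.forall_mem_cons, Multiset.mem_cons_self, and_self, true_and]
      exact fun m hm => ⟨Multiset.mem_cons_of_mem (hmem m hm).1,
        Multiset.mem_cons_of_mem (hmem m hm).2⟩

theorem countP_eq_add_le_card_of_cons_cons [DecidableEq κ] {f : ι → κ} {u v : ι} {R : Multiset ι}
    {r : ℕ} (hr : 2 * r ≤ R.card) (hvu : f v ≠ f u)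
    (hu : ∀ w ∈ u ::ₘ v ::ₘ R,
      (u ::ₘ v ::ₘ R).countP (f · = f w) ≤ (u ::ₘ v ::ₘ R).countP (f · = f u))
    (hf : ∀ c, (u ::ₘ v ::ₘ R).countP (f · = c) + (r + 1) ≤ (u ::ₘ v ::ₘ R).card) (c : κ) :
    R.countP (f · = c) + r ≤ R.card := by
  have hfc := hf c
  simp only [Multiset.countP_cons, Multiset.card_cons] at hu hfc
  by_cases hc0 : R.countP (f · = c) = 0
  · omega
  obtain ⟨w, hw, rfl⟩ := Multiset.countP_pos.1 (Nat.pos_of_ne_zero hc0)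
  by_cases hwuv : f u = f w ∨ f v = f w
  · rcases hwuv with h | h <;> simp only [h, if_true] at hfc <;> omega
  · obtain ⟨huw, hvw⟩ := not_or.1 hwuv
    have hcount := hu w (by simp [hw])
    have hdisj : R.countP (f · = f w) + R.countP (f · = f u) ≤ R.card :=
      countP_add_countP_le_card fun x _ hxw hxu => huw (hxu.symm.trans hxw)
    simp only [huw, hvw, hvu, if_true, if_false] at hcount
    omega

-- Pair off greedily, always using a term from a largest fibre of `f`.
theorem exists_pairs_ne [DecidableEq κ] (f : ι → κ) {S : Multiset ι} {r : ℕ}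
    (hr : 2 * r ≤ S.card) (hf : ∀ c, S.countP (f · = c) + r ≤ S.card) :
    ∃ M : Multiset (ι × ι), M.card = r ∧ pairTerms M ≤ S ∧ ∀ m ∈ M, f m.1 ≠ f m.2 := by
  induction r generalizing S with
  | zero => exact ⟨0, by simp⟩
  | succ r ih =>
    obtain ⟨u, huS, hu⟩ : ∃ u ∈ S, ∀ v ∈ S, S.countP (f · = f v) ≤ S.countP (f · = f u) := by
      classical
      obtain ⟨u, hu⟩ := Multiset.card_pos_iff_exists_mem.1 (by omega : 0 < S.card)
      simpa using S.toFinset.exists_max_image (fun v => S.countP (f · = f v))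
        ⟨u, Multiset.mem_toFinset.2 hu⟩
    obtain ⟨v, hvS, hvu⟩ : ∃ v ∈ S, f v ≠ f u := by
      by_contra! hall
      have hfu := hf (f u)
      rw [Multiset.countP_eq_card.2 hall] at hfu
      omega
    obtain ⟨R, rfl⟩ := Multiset.exists_cons_of_mem huS
    obtain ⟨R, rfl⟩ := Multiset.exists_cons_of_mem
      ((Multiset.mem_cons.1 hvS).resolve_left fun h => hvu (congrArg f h))
    have hrR : 2 * r ≤ R.card := by
      simp only [Multiset.card_cons] at hr
      omega
    obtain ⟨M, hMr, hMR, hM⟩ := ih hrR (countP_eq_add_le_card_of_cons_cons hrR hvu hu hf)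
    refine ⟨(u, v) ::ₘ M, by rw [Multiset.card_cons, hMr], ?_, ?_⟩
    · rw [pairTerms_cons]
      simpa [Multiset.cons_add] using hMR
    · exact Multiset.forall_mem_cons.2 ⟨hvu.symm, hM⟩

theorem exists_le_card_le_sum_map_eq_zero {A : Type*} [AddCommGroup A] [Fintype A] (f : ι → A)
    {S : Multiset ι} (h : Fintype.card A ≤ S.card) :
    ∃ U ≤ S, U ≠ 0 ∧ U.card ≤ Fintype.card A ∧ (U.map f).sum = 0 := by
  obtain ⟨S', hS', hc⟩ := exists_le_card_eq h
  obtain ⟨l, rfl⟩ := Quot.exists_rep S'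
  have hl : l.length = Fintype.card A := hc
  obtain ⟨i, j, hij, he⟩ : ∃ i j, i < j ∧ j ≤ l.length ∧
      ((l.take i).map f).sum = ((l.take j).map f).sum := by
    obtain ⟨i, j, hne, he⟩ := Fintype.exists_ne_map_eq_of_card_lt
      (fun i : Fin (l.length + 1) => ((l.take i).map f).sum) (by simp [hl])
    rcases lt_or_gt_of_ne hne with hlt | hlt
    · exact ⟨i, j, hlt, Nat.lt_succ_iff.1 j.2, he⟩
    · exact ⟨j, i, hlt, Nat.lt_succ_iff.1 i.2, he.symm⟩
  obtain ⟨hj, he⟩ := he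
  have hsub : ((l.take j).drop i).Sublist l :=
    (List.drop_sublist _ _).trans (List.take_sublist _ _)
  have hle : ((l.take j).drop i : Multiset ι) ≤ l := hsub.subperm
  refine ⟨((l.take j).drop i : List ι), hle.trans hS', fun h0 => ?_, ?_, ?_⟩
  · have hlen := congrArg Multiset.card h0
    simp only [Multiset.coe_card, List.length_drop, List.length_take, Multiset.card_zero] at hlen
    omega
  · exact hsub.length_le.trans_eq hl
  · have hsplit : l.take j = l.take i ++ (l.take j).drop i := by
      conv_lhs => rw [← List.take_append_drop i (l.take j), List.take_take, min_eq_left hij.le]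
    rw [hsplit, List.map_append, List.sum_append, left_eq_add] at he
    simpa using he

theorem exists_le_card_mem_Ico {P : Multiset ι → Prop} {D : ℕ} (h0 : P 0)
    (hadd : ∀ A B, P A → P B → P (A + B))
    (hD : ∀ S : Multiset ι, D ≤ S.card → ∃ U ≤ S, U ≠ 0 ∧ U.card ≤ D ∧ P U)
    {S : Multiset ι} {L : ℕ} (hS : L + D ≤ S.card + 1) :
    ∃ T ≤ S, P T ∧ T.card ∈ Set.Ico L (L + D) := by
  induction L with
  | zero =>
    have hDpos : 0 < D := by
      by_contra! hD0
      obtain ⟨U, hU, hU0, -⟩ := hD 0 hD0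
      exact hU0 (Multiset.le_zero.1 hU)
    exact ⟨0, Multiset.zero_le _, h0, by simpa using hDpos⟩
  | succ L ih =>
    obtain ⟨T, hT, hPT, hLT, hTD⟩ := ih (by omega)
    by_cases h : L + 1 ≤ T.card
    · exact ⟨T, hT, hPT, h, by omega⟩
    · obtain ⟨R, rfl⟩ := Multiset.le_iff_exists_add.1 hT
      rw [Multiset.card_add] at hS
      obtain ⟨U, hU, hU0, hUD, hPU⟩ := hD R (by omega)
      have hUpos := Multiset.card_pos.2 hU0
      refine ⟨T + U, by gcongr, hadd _ _ hPT hPU, ?_, ?_⟩ <;> rw [Multiset.card_add] <;> omega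

theorem exists_disjoint_blocks {P : Multiset ι → Prop} {N n : ℕ}
    (h : ∀ S : Multiset ι, N ≤ S.card → ∃ T ≤ S, T.card = n ∧ P T) {r : ℕ} {S : Multiset ι}
    (hS : r * n + N ≤ S.card + n) :
    ∃ B : Multiset (Multiset ι), B.card = r ∧ B.sum ≤ S ∧ ∀ b ∈ B, b.card = n ∧ P b := by
  induction r generalizing S with
  | zero => exact ⟨0, by simp⟩
  | succ r ih =>
    rw [Nat.succ_mul] at hS
    obtain ⟨T, hT, hTn, hPT⟩ := h S (by omega)
    obtain ⟨R, rfl⟩ := Multiset.le_iff_exists_add.1 hT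
    rw [Multiset.card_add, hTn] at hS
    obtain ⟨B, hBr, hBR, hB⟩ := ih (S := R) (by omega)
    exact ⟨T ::ₘ B, by rw [Multiset.card_cons, hBr], by rw [Multiset.sum_cons]; gcongr,
      Multiset.forall_mem_cons.2 ⟨⟨hTn, hPT⟩, hB⟩⟩

theorem card_sum_of_forall_card_eq {B : Multiset (Multiset ι)} {n : ℕ}
    (h : ∀ b ∈ B, b.card = n) : B.sum.card = B.card * n := by
  rw [← Multiset.join, Multiset.card_join, Multiset.map_congr rfl h, Multiset.map_const',
    Multiset.sum_replicate, smul_eq_mul]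

theorem exists_le_card_eq_sum_map_eq_zero {n : ℕ} (f : ι → ZMod n) {S : Multiset ι}
    (h : 2 * n - 1 ≤ S.card) : ∃ T ≤ S, T.card = n ∧ (T.map f).sum = 0 := by
  classical
  obtain ⟨t, hts, ht⟩ := ZMod.erdos_ginzburg_ziv (s := S.toEnumFinset) (fun i => f i.1)
    (by simpa using h)
  exact ⟨t.1.map Prod.fst, Multiset.map_fst_le_of_subset_toEnumFinset hts, by simpa using ht⟩

theorem exists_blocks_sum_map_eq_zero {n : ℕ} (f : ι → ZMod n) {r : ℕ}
    {S : Multiset ι} (hS : r * n + n ≤ S.card + 1) :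
    ∃ B : Multiset (Multiset ι), B.card = r ∧ B.sum ≤ S ∧
      ∀ b ∈ B, b.card = n ∧ (b.map f).sum = 0 :=
  exists_disjoint_blocks (fun _ => exists_le_card_eq_sum_map_eq_zero f) <| by
    rcases n with _ | n
    · simp
    · omega

theorem exists_le_card_eq_mul_sum_map_eq_zero {n : ℕ} (f : ι → ZMod n) {r : ℕ}
    {S : Multiset ι} (hS : r * n + n ≤ S.card + 1) :
    ∃ T ≤ S, T.card = r * n ∧ (T.map f).sum = 0 := by
  obtain ⟨B, rfl, hBS, hB⟩ := exists_blocks_sum_map_eq_zero f hS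
  refine ⟨B.sum, hBS, card_sum_of_forall_card_eq fun b hb => (hB b hb).1, ?_⟩
  exact Multiset.sum_induction (fun T : Multiset ι => (T.map f).sum = 0) B
    (fun T U hT hU => by rw [Multiset.map_add, Multiset.sum_add, hT, hU, add_zero])
    (by rw [Multiset.map_zero, Multiset.sum_zero]) fun b hb => (hB b hb).2

end Multiset

section CauchyDavenport

variable {ι : Type*} {p : ℕ} [Fact p.Prime]

open Pointwise in
theorem min_le_card_of_add_mem {X Y Z : Finset (ZMod p)} {m n : ℕ} (hX : min p (m + 1) ≤ X.card)
    (hY : min p (n + 1) ≤ Y.card) (h : ∀ x ∈ X, ∀ y ∈ Y, x + y ∈ Z) :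
    min p (m + n + 1) ≤ Z.card := by
  have hp := (Fact.out : p.Prime).pos
  have hcd := ZMod.cauchy_davenport Fact.out (Finset.card_pos.1 (by omega) : X.Nonempty)
    (Finset.card_pos.1 (by omega) : Y.Nonempty)
  have hZ : (X + Y).card ≤ Z.card := Finset.card_le_card (Finset.add_subset_iff.2 h)
  omega

theorem eq_univ_of_le_card {X : Finset (ZMod p)} (h : p ≤ X.card) : X = Finset.univ :=
  (Finset.card_eq_iff_eq_univ X).1 (le_antisymm X.card_le_univ (by rwa [ZMod.card]))

theorem exists_min_le_card_selection_sums (f : ι → ZMod p) {M : Multiset (ι × ι)}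
    (hM : ∀ m ∈ M, f m.1 ≠ f m.2) :
    ∃ X : Finset (ZMod p), min p (M.card + 1) ≤ X.card ∧
      ∀ t ∈ X, ∃ T ≤ pairTerms M, T.card = M.card ∧ (T.map f).sum = t := by
  induction M using Multiset.induction with
  | empty => exact ⟨{0}, by simp⟩
  | cons m M ih =>
    rw [Multiset.forall_mem_cons] at hM
    classical
    obtain ⟨X, hX, hsum⟩ := ih hM.2
    refine ⟨Finset.univ.filter fun t => ∃ T ≤ pairTerms (m ::ₘ M),
      T.card = (m ::ₘ M).card ∧ (T.map f).sum = t, ?_,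
      fun t ht => (Finset.mem_filter.1 ht).2⟩
    rw [Multiset.card_cons]
    refine min_le_card_of_add_mem hX (Y := {f m.1, f m.2}) (n := 1) ?_ fun x hx y hy => ?_
    · rw [Finset.card_pair hM.1]
      exact min_le_right _ _
    · obtain ⟨T, hT, hTM, rfl⟩ := hsum x hx
      obtain ⟨i, hi, rfl⟩ : ∃ i, ({i} : Multiset ι) ≤ {m.1, m.2} ∧ f i = y := by
        rcases Finset.mem_insert.1 hy with rfl | hy
        · exact ⟨m.1, by simp, rfl⟩
        · exact ⟨m.2, by simp, (Finset.mem_singleton.1 hy).symm⟩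
      refine Finset.mem_filter.2 ⟨Finset.mem_univ _, {i} + T, ?_, ?_, ?_⟩
      · rw [pairTerms_cons]
        exact add_le_add hi hT
      · rw [Multiset.singleton_add, Multiset.card_cons, hTM]
      · rw [Multiset.singleton_add, Multiset.map_cons, Multiset.sum_cons, add_comm]

theorem exists_selection_sum_eq (f : ι → ZMod p) {M : Multiset (ι × ι)} (hpM : p ≤ M.card + 1)
    (hM : ∀ m ∈ M, f m.1 ≠ f m.2) (t : ZMod p) :
    ∃ T ≤ pairTerms M, T.card = M.card ∧ (T.map f).sum = t := by
  obtain ⟨X, hX, hsum⟩ := exists_min_le_card_selection_sums f hM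
  refine hsum t ?_
  rw [eq_univ_of_le_card (le_trans (le_min le_rfl hpM) hX)]
  exact Finset.mem_univ t

end CauchyDavenport

section OneProd

variable {G : Type*} [Group G]

theorem isOneProdSeq_zero : IsOneProdSeq (0 : Multiset G) := ⟨[], rfl, rfl⟩

theorem IsOneProdSeq.add_s5 {A B : Multiset G} (hA : IsOneProdSeq A) (hB : IsOneProdSeq B) :
    IsOneProdSeq (A + B) := by
  obtain ⟨l, rfl, hl⟩ := hA
  obtain ⟨l', rfl, hl'⟩ := hB
  exact ⟨l ++ l', rfl, by rw [List.prod_append, hl, hl', mul_one]⟩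

theorem isOneProdSeq_replicate {g : G} {n : ℕ} (h : g ^ n = 1) :
    IsOneProdSeq (Multiset.replicate n g) :=
  ⟨List.replicate n g, rfl, by rw [List.prod_replicate, h]⟩

theorem exists_coe_eq_sum_of_map_prod_eq {B : Multiset (Multiset G)} {l : List G}
    (h : B.map (·.toList.prod) = l) :
    ∃ l' : List G, (l' : Multiset G) = B.sum ∧ l'.prod = l.prod := by
  classical
  induction l generalizing B with
  | nil =>
    rw [Multiset.coe_nil, Multiset.map_eq_zero] at h
    exact ⟨[], by rw [h, Multiset.sum_zero, Multiset.coe_nil], rfl⟩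
  | cons g l ih =>
    rw [← Multiset.cons_coe] at h
    obtain ⟨b, hb, rfl, hl⟩ := (Multiset.map_eq_cons _ _ _ _).2 h
    obtain ⟨l', hl', hprod⟩ := ih hl
    refine ⟨b.toList ++ l', ?_, by rw [List.prod_append, List.prod_cons, hprod]⟩
    rw [← Multiset.coe_add, Multiset.coe_toList, hl', Multiset.sum_erase hb]

theorem IsOneProdSeq.sum_of_map_prod {B : Multiset (Multiset G)}
    (h : IsOneProdSeq (B.map (·.toList.prod))) : IsOneProdSeq B.sum := by
  obtain ⟨l, hl, hl1⟩ := h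
  obtain ⟨l', hl', hprod⟩ := exists_coe_eq_sum_of_map_prod_eq hl.symm
  exact ⟨l', hl', hprod.trans hl1⟩

/-- `S` has a 1-product subsequence of length `n`. -/
def HasOneProdOfCard (n : ℕ) (S : Multiset G) : Prop :=
  ∃ T ≤ S, T.card = n ∧ IsOneProdSeq T

theorem HasOneProdOfCard.mono {n : ℕ} {S S' : Multiset G} (hS : S ≤ S')
    (h : HasOneProdOfCard n S) : HasOneProdOfCard n S' :=
  let ⟨T, hT, h⟩ := h
  ⟨T, hT.trans hS, h⟩

theorem hasOneProdOfCard_of_le_count [DecidableEq G] {g : G} {n : ℕ} {S : Multiset G}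
    (hg : g ^ n = 1) (h : n ≤ S.count g) : HasOneProdOfCard n S :=
  ⟨_, Multiset.le_count_iff_replicate_le.1 h, Multiset.card_replicate _ _,
    isOneProdSeq_replicate hg⟩

-- Collect short 1-product subsequences avoiding `1` until the length falls just short of `n`,
-- and fill up with `1`s.
theorem hasOneProdOfCard_of_le_count_one [DecidableEq G] {D n : ℕ}
    (hD : ∀ S : Multiset G, D ≤ S.card → ∃ U ≤ S, U ≠ 0 ∧ U.card ≤ D ∧ IsOneProdSeq U)
    {S : Multiset G} (h1 : D ≤ S.count 1 + 1) (hS : n + D ≤ S.card + 1) :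
    HasOneProdOfCard n S := by
  rcases le_total n (S.count 1) with hn | hn
  · exact hasOneProdOfCard_of_le_count (one_pow n) hn
  · have hsplit := replicate_count_add_filter_ne 1 S
    have hcard := congrArg Multiset.card hsplit
    rw [Multiset.card_add, Multiset.card_replicate] at hcard
    obtain ⟨T, hT, hT1, hTL, hTD⟩ := exists_le_card_mem_Ico isOneProdSeq_zero
      (fun _ _ => IsOneProdSeq.add_s5) hD
      (by omega : n - S.count 1 + D ≤ (S.filter (· ≠ 1)).card + 1)
    refine ⟨Multiset.replicate (n - T.card) 1 + T, ?_, ?_,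
      (isOneProdSeq_replicate (one_pow _)).add_s5 hT1⟩
    · rw [← hsplit]
      exact add_le_add (Multiset.replicate_le_replicate _ |>.2 (by omega)) hT
    · rw [Multiset.card_add, Multiset.card_replicate]
      omega

/-- `S` has no nonempty 1-product subsequence. -/
def IsOneProdFree (S : Multiset G) : Prop :=
  ∀ T ≤ S, IsOneProdSeq T → T = 0

theorem IsOneProdFree.mono {S S' : Multiset G} (hS : S ≤ S') (h : IsOneProdFree S') :
    IsOneProdFree S :=
  fun T hT => h T (hT.trans hS)

end OneProd

/-- Coordinates on a group `G` like `G_{pq}`: `a g` and `b g` stand for the exponents of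
`g = x ^ a y ^ b`, and conjugation by `x ^ u` acts on the powers of `y` through the faithful
character `σ u = s ^ u`. -/
structure MetacyclicCoord (p q : ℕ) (G : Type*) [Group G] where
  a : G → ZMod p
  b : G → ZMod q
  σ : AddChar (ZMod p) (ZMod q)
  a_mul : ∀ g h, a (g * h) = a g + a h
  b_mul : ∀ g h, b (g * h) = b g * σ (a h) + b h
  σ_injective : Function.Injective σ
  eq_one : ∀ g, a g = 0 → b g = 0 → g = 1

namespace MetacyclicCoord

open scoped Classical

section Basic

variable {p q : ℕ} {G : Type*} [Group G] (C : MetacyclicCoord p q G)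

theorem a_one : C.a 1 = 0 := by
  simpa using C.a_mul 1 1

theorem b_one : C.b 1 = 0 := by
  simpa [C.a_one] using C.b_mul 1 1

theorem a_pow (g : G) (n : ℕ) : C.a (g ^ n) = n * C.a g := by
  induction n with
  | zero => simp [C.a_one]
  | succ n ih => rw [pow_succ, C.a_mul, ih, Nat.cast_succ, add_one_mul]

/-- The sum of the `a`-coordinates of the terms of `T`. -/
def aSum (T : Multiset G) : ZMod p := (T.map C.a).sum

theorem aSum_add (S T : Multiset G) : C.aSum (S + T) = C.aSum S + C.aSum T := by
  rw [aSum, Multiset.map_add, Multiset.sum_add, aSum, aSum]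

theorem aSum_eq_zero {T : Multiset G} (h : ∀ g ∈ T, C.a g = 0) : C.aSum T = 0 :=
  Multiset.sum_eq_zero (Multiset.forall_mem_map_iff.2 h)

theorem a_list_prod (l : List G) : C.a l.prod = C.aSum (l : Multiset G) := by
  induction l with
  | nil => exact C.a_one
  | cons g l ih => rw [List.prod_cons, C.a_mul, ih, aSum, aSum, ← Multiset.cons_coe,
      Multiset.map_cons, Multiset.sum_cons]

theorem b_list_prod {l : List G} (h : ∀ g ∈ l, C.a g = 0) : C.b l.prod = (l.map C.b).sum := by
  induction l with
  | nil => exact C.b_one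
  | cons g l ih =>
    rw [List.forall_mem_cons] at h
    rw [List.prod_cons, C.b_mul, C.a_list_prod, C.aSum_eq_zero h.2, ih h.2, AddChar.map_zero_eq_one,
      mul_one, List.map_cons, List.sum_cons]

theorem isOneProdSeq_of_a_eq_zero {T : Multiset G} (ha : ∀ g ∈ T, C.a g = 0)
    (hb : (T.map C.b).sum = 0) : IsOneProdSeq T := by
  obtain ⟨l, rfl⟩ := Quot.exists_rep T
  refine ⟨l, rfl, C.eq_one _ ?_ ?_⟩
  · exact (C.a_list_prod l).trans (C.aSum_eq_zero ha)
  · exact (C.b_list_prod ha).trans hb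

theorem exists_minimal_aSum_eq_zero [NeZero p] {S : Multiset G} (hS : p ≤ S.card) :
    ∃ U ≤ S, Minimal (fun U => U ≠ 0 ∧ C.aSum U = 0) U := by
  obtain ⟨U, hU, hU0, -, hsum⟩ :=
    exists_le_card_le_sum_map_eq_zero C.a ((ZMod.card p).trans_le hS)
  obtain ⟨V, hVU, hV⟩ :=
    exists_minimal_le_of_wellFoundedLT (fun U => U ≠ 0 ∧ C.aSum U = 0) U ⟨hU0, hsum⟩
  exact ⟨V, hVU.trans hU, hV⟩

theorem aSum_drop_ne {l : List G} (hl : Minimal (fun U => U ≠ 0 ∧ C.aSum U = 0) (l : Multiset G))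
    {i j : ℕ} (hij : i < j) (hj : j < l.length) :
    C.aSum (l.drop i : List G) ≠ C.aSum (l.drop j : List G) := by
  intro h
  have hsplit : (l.drop i).take (j - i) ++ l.drop j = l.drop i := by
    conv_rhs => rw [← List.take_append_drop (j - i) (l.drop i), List.drop_drop,
      Nat.add_sub_cancel' hij.le]
  have hlen : ((l.drop i).take (j - i)).length = j - i := by
    rw [List.length_take, List.length_drop]
    omega
  have hsub : (((l.drop i).take (j - i) : List G) : Multiset G) ≤ l :=
    ((List.take_sublist _ _).trans (List.drop_sublist _ _)).subperm
  rw [← hsplit, ← Multiset.coe_add, C.aSum_add, add_eq_right] at h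
  have hle := Multiset.card_le_card (hl.2 ⟨fun h0 => ?_, h⟩ hsub)
  · rw [Multiset.coe_card, Multiset.coe_card, hlen] at hle
    omega
  · rw [Multiset.coe_eq_zero, ← List.length_eq_zero_iff, hlen] at h0
    omega

theorem aSum_eq_zero_of_forall_eq {T : Multiset G} {c : ZMod p} (hT : T.card = p * q)
    (h : ∀ g ∈ T, C.a g = c) : C.aSum T = 0 := by
  rw [aSum, Multiset.map_congr rfl h, Multiset.map_const', Multiset.sum_replicate, hT, mul_smul,
    nsmul_eq_mul, ZMod.natCast_self, zero_mul]

theorem exists_le_aSum_eq_zero_card_mem_Ico [NeZero p] {S : Multiset G} {L : ℕ}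
    (hS : L + p ≤ S.card + 1) :
    ∃ T ≤ S, C.aSum T = 0 ∧ T.card ∈ Set.Ico L (L + p) := by
  refine exists_le_card_mem_Ico (P := fun T => C.aSum T = 0) (C.aSum_eq_zero (by simp))
    (fun A B hA hB => by rw [C.aSum_add, hA, hB, add_zero]) (fun S hS => ?_) hS
  have h := exists_le_card_le_sum_map_eq_zero C.a ((ZMod.card p).trans_le hS)
  rwa [ZMod.card] at h

theorem hasOneProdOfCard_of_le_countP_a_eq_zero [NeZero q] {S : Multiset G}
    (h : p * q + q ≤ S.countP (C.a · = 0) + 1) : HasOneProdOfCard (p * q) S := by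
  rw [Multiset.countP_eq_card_filter] at h
  obtain ⟨T, hT, hcard, hb⟩ := exists_le_card_eq_mul_sum_map_eq_zero C.b h
  rw [Multiset.le_filter] at hT
  exact ⟨T, hT.1, hcard, C.isOneProdSeq_of_a_eq_zero hT.2 hb⟩

end Basic

section Commute

variable {p q : ℕ} [Fact q.Prime] {G : Type*} [Group G] (C : MetacyclicCoord p q G)

theorem σ_ne_zero (u : ZMod p) : C.σ u ≠ 0 := (C.σ.val_isUnit u).ne_zero

theorem σ_sub_one_ne_zero {u : ZMod p} (hu : u ≠ 0) : C.σ u - 1 ≠ 0 := fun h =>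
  hu (C.σ_injective ((sub_eq_zero.1 h).trans C.σ.map_zero_eq_one.symm))

theorem ext {g h : G} (ha : C.a g = C.a h) (hb : C.b g = C.b h) : g = h := by
  refine mul_inv_eq_one.1 (C.eq_one _ ?_ ?_)
  · simpa [ha] using C.a_mul (g * h⁻¹) h
  · simpa [hb, C.σ_ne_zero] using C.b_mul (g * h⁻¹) h

theorem commute_iff {g h : G} :
    Commute g h ↔ C.b g * (C.σ (C.a h) - 1) = C.b h * (C.σ (C.a g) - 1) := by
  constructor
  · intro hgh
    have hb := congrArg C.b hgh.eq
    rw [C.b_mul, C.b_mul] at hb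
    linear_combination hb
  · intro hb
    refine C.ext (by rw [C.a_mul, C.a_mul, add_comm]) ?_
    rw [C.b_mul, C.b_mul]
    linear_combination hb

theorem eq_one_of_commute {g h : G} (hgh : Commute h g) (hg : C.a g ≠ 0) (hh : C.a h = 0) :
    h = 1 := by
  rw [C.commute_iff, hh, AddChar.map_zero_eq_one, sub_self, mul_zero] at hgh
  exact C.eq_one h hh ((mul_eq_zero.1 hgh).resolve_right (C.σ_sub_one_ne_zero hg))

theorem eq_of_commute {g h k : G} (hk : C.a k ≠ 0) (hgk : Commute g k) (hhk : Commute h k)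
    (ha : C.a g = C.a h) : g = h :=
  mul_inv_eq_one.1 (C.eq_one_of_commute (hgk.mul_left hhk.inv_left) hk
    (by simpa [ha] using C.a_mul (g * h⁻¹) h))

theorem commute_trans (C : MetacyclicCoord p q G) {f g k : G} (hg : g ≠ 1)
    (hfg : Commute f g) (hgk : Commute g k) : Commute f k := by
  rw [C.commute_iff] at hfg hgk ⊢
  by_cases ha : C.a g = 0
  · have hb : C.b g ≠ 0 := fun hb => hg (C.eq_one g ha hb)
    rw [ha, AddChar.map_zero_eq_one, sub_self, mul_zero] at hfg hgk
    rw [(mul_eq_zero.1 hfg.symm).resolve_left hb, (mul_eq_zero.1 hgk).resolve_left hb,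
      mul_zero, mul_zero]
  · apply mul_right_cancel₀ (C.σ_sub_one_ne_zero ha)
    linear_combination (C.σ (C.a k) - 1) * hfg + (C.σ (C.a f) - 1) * hgk

theorem pow_eq_one {g : G} (hg : C.a g ≠ 0) : g ^ p = 1 :=
  C.eq_one_of_commute ((Commute.refl g).pow_left p) hg
    (by rw [C.a_pow, ZMod.natCast_self, zero_mul])

theorem isOneProdSeq_of_commute {T : Multiset G} {g : G} (hg : C.a g ≠ 0)
    (h : ∀ x ∈ T, Commute x g) (ha : C.aSum T = 0) : IsOneProdSeq T := by
  obtain ⟨l, rfl⟩ := Quot.exists_rep T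
  exact ⟨l, rfl, C.eq_one_of_commute (Commute.list_prod_left l g h) hg
    ((C.a_list_prod l).trans ha)⟩

/-- The `b`-coordinates of the products of all orderings of `T`. -/
noncomputable def bProds (T : Multiset G) : Finset (ZMod q) :=
  Finset.univ.filter fun b => ∃ l : List G, (l : Multiset G) = T ∧ C.b l.prod = b

theorem mem_bProds {T : Multiset G} {b : ZMod q} :
    b ∈ C.bProds T ↔ ∃ l : List G, (l : Multiset G) = T ∧ C.b l.prod = b := by
  rw [bProds, Finset.mem_filter, and_iff_right (Finset.mem_univ b)]

theorem b_list_prod_mem_bProds (l : List G) : C.b l.prod ∈ C.bProds (l : Multiset G) :=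
  C.mem_bProds.2 ⟨l, rfl, rfl⟩

theorem one_le_card_bProds (T : Multiset G) : 1 ≤ (C.bProds T).card := by
  obtain ⟨l, rfl⟩ := Quot.exists_rep T
  exact Finset.card_pos.2 ⟨_, C.b_list_prod_mem_bProds l⟩

theorem min_le_card_bProds_add {A B : Multiset G} {m n : ℕ}
    (hA : min q (m + 1) ≤ (C.bProds A).card) (hB : min q (n + 1) ≤ (C.bProds B).card) :
    min q (m + n + 1) ≤ (C.bProds (A + B)).card := by
  have hinj : Function.Injective (· * C.σ (C.aSum B)) := mul_left_injective₀ (C.σ_ne_zero _)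
  rw [← Finset.card_image_of_injective _ hinj] at hA
  refine min_le_card_of_add_mem hA hB fun x hx y hy => ?_
  obtain ⟨x', hx', rfl⟩ := Finset.mem_image.1 hx
  obtain ⟨l, rfl, rfl⟩ := C.mem_bProds.1 hx'
  obtain ⟨l', rfl, rfl⟩ := C.mem_bProds.1 hy
  rw [← C.a_list_prod, ← C.b_mul, ← List.prod_append, Multiset.coe_add]
  exact C.b_list_prod_mem_bProds _

theorem min_le_card_bProds_mono {A T : Multiset G} (h : A ≤ T) {m : ℕ}
    (hA : min q (m + 1) ≤ (C.bProds A).card) : min q (m + 1) ≤ (C.bProds T).card := by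
  obtain ⟨B, rfl⟩ := Multiset.le_iff_exists_add.1 h
  exact C.min_le_card_bProds_add (n := 0) hA ((min_le_right _ _).trans (C.one_le_card_bProds B))

theorem isOneProdSeq_of_zero_mem_bProds {T : Multiset G} (hb : 0 ∈ C.bProds T)
    (ha : C.aSum T = 0) : IsOneProdSeq T := by
  obtain ⟨l, rfl, hl⟩ := C.mem_bProds.1 hb
  exact ⟨l, rfl, C.eq_one _ ((C.a_list_prod l).trans ha) hl⟩

theorem isOneProdSeq_of_le {A T : Multiset G} {m : ℕ} (hA : min q (m + 1) ≤ (C.bProds A).card)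
    (hm : q ≤ m + 1) (hAT : A ≤ T) (ha : C.aSum T = 0) : IsOneProdSeq T := by
  have hT := C.min_le_card_bProds_mono hAT hA
  rw [min_eq_left hm] at hT
  refine C.isOneProdSeq_of_zero_mem_bProds ?_ ha
  rw [eq_univ_of_le_card hT]
  exact Finset.mem_univ 0

theorem min_le_card_bProds_pairTerms {M : Multiset (G × G)} (h : ∀ m ∈ M, ¬ Commute m.1 m.2) :
    min q (M.card + 1) ≤ (C.bProds (pairTerms M)).card := by
  induction M using Multiset.induction with
  | empty => exact (min_le_right _ _).trans (C.one_le_card_bProds _)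
  | cons m M ih =>
    rw [Multiset.forall_mem_cons] at h
    have hne : C.b (m.1 * m.2) ≠ C.b (m.2 * m.1) := fun hb =>
      h.1 (C.ext (by rw [C.a_mul, C.a_mul, add_comm]) hb)
    have hm : {C.b (m.1 * m.2), C.b (m.2 * m.1)} ⊆ C.bProds {m.1, m.2} := by
      simp only [Finset.insert_subset_iff, Finset.singleton_subset_iff, mem_bProds]
      exact ⟨⟨[m.1, m.2], rfl, by simp⟩, ⟨[m.2, m.1], Multiset.pair_comm _ _, by simp⟩⟩
    have hm2 : min q (1 + 1) ≤ (C.bProds {m.1, m.2}).card :=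
      (min_le_right _ _).trans ((Finset.card_pair hne).symm.trans_le (Finset.card_le_card hm))
    rw [pairTerms_cons, Multiset.card_cons, add_comm M.card]
    exact C.min_le_card_bProds_add hm2 (ih h.2)

theorem min_le_card_bProds_cons {v : G} (hv : C.a v ≠ 0) {E : Multiset G}
    (hE : ∀ n ∈ E, C.a n = 0 ∧ n ≠ 1) : min q (E.card + 1) ≤ (C.bProds (v ::ₘ E)).card := by
  induction E using Multiset.induction with
  | empty => exact (min_le_right _ _).trans (C.one_le_card_bProds _)
  | cons n E ih =>
    rw [Multiset.forall_mem_cons] at hE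
    obtain ⟨⟨hn, hn1⟩, hE⟩ := hE
    have haSum : C.aSum (v ::ₘ E) = C.a v := by
      rw [aSum, Multiset.map_cons, Multiset.sum_cons, ← aSum,
        C.aSum_eq_zero fun g hg => (hE g hg).1, add_zero]
    have hne : C.b n ≠ C.b n * C.σ (C.a v) := fun hb => C.σ_sub_one_ne_zero hv
      (mul_left_cancel₀ (fun hb0 => hn1 (C.eq_one n hn hb0)) (by linear_combination -hb))
    rw [Multiset.card_cons]
    refine min_le_card_of_add_mem (ih hE) (Y := {C.b n, C.b n * C.σ (C.a v)}) (n := 1)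
      ((min_le_right _ _).trans_eq (Finset.card_pair hne).symm) fun x hx y hy => ?_
    obtain ⟨l, hl, rfl⟩ := C.mem_bProds.1 hx
    rw [Multiset.cons_swap, ← hl, C.mem_bProds]
    rcases Finset.mem_insert.1 hy with rfl | hy
    · refine ⟨l ++ [n], Multiset.coe_eq_coe.2 List.perm_append_comm, ?_⟩
      rw [List.prod_append, List.prod_singleton, C.b_mul, hn, AddChar.map_zero_eq_one, mul_one]
    · refine ⟨n :: l, rfl, ?_⟩
      rw [List.prod_cons, C.b_mul, C.a_list_prod, hl, haSum, Finset.mem_singleton.1 hy, add_comm]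

theorem exists_pairTerms_add_eq (C : MetacyclicCoord p q G) {k : G} {S : Multiset G} {r : ℕ}
    (hF : r ≤ S.countP (¬ Commute · k))
    (hK : r ≤ S.countP fun x => Commute x k ∧ x ≠ 1) :
    ∃ M R, pairTerms M + R = S ∧ M.card = r ∧ (∀ m ∈ M, ¬ Commute m.1 m.2) ∧
      R.countP (¬ Commute · k) + r = S.countP (¬ Commute · k) := by
  obtain ⟨A, hAS, hAcard, hA⟩ := exists_le_card_eq_forall hF
  obtain ⟨B, hBS, hBcard, hB⟩ := exists_le_card_eq_forall hK
  obtain ⟨M, hMA, hM, hmem⟩ := exists_pairTerms_eq_add (hAcard.trans hBcard.symm)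
  have hAB : pairTerms M ≤ S := by
    rw [hM, ← Multiset.filter_add_not (Commute · k) S, add_comm]
    exact add_le_add (Multiset.le_filter.2 ⟨hBS, fun x hx => (hB x hx).1⟩)
      (Multiset.le_filter.2 ⟨hAS, hA⟩)
  obtain ⟨R, hR⟩ := Multiset.le_iff_exists_add.1 hAB
  refine ⟨M, R, hR.symm, hMA.trans hAcard, fun m hm hcomm => ?_, ?_⟩
  · obtain ⟨h1, h2⟩ := hmem m hm
    exact hA _ h1 (C.commute_trans (hB _ h2).2 hcomm (hB _ h2).1)
  · have hBzero : B.countP (¬ Commute · k) = 0 :=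
      Multiset.countP_eq_zero.2 fun x hx => not_not.2 (hB x hx).1
    rw [hR, hM, Multiset.countP_add, Multiset.countP_add, Multiset.countP_eq_card.2 hA, hBzero,
      hAcard, add_zero, add_comm]

theorem exists_pairTerms_le_or (C : MetacyclicCoord p q G) {S : Multiset G} {r : ℕ}
    (hS : 2 * r ≤ S.countP (· ≠ 1)) :
    (∃ M, M.card = r ∧ pairTerms M ≤ S ∧ ∀ m ∈ M, ¬ Commute m.1 m.2) ∨
      ∃ k ≠ 1, S.countP (¬ Commute · k) < r := by
  rw [Multiset.countP_eq_card_filter] at hS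
  by_cases hcen : ∀ H : Subgroup G,
      (S.filter (· ≠ 1)).countP (fun g => Subgroup.centralizer {g} = H) + r ≤
        (S.filter (· ≠ 1)).card
  · obtain ⟨M, hMcard, hM, hne⟩ := exists_pairs_ne (fun g => Subgroup.centralizer {g}) hS hcen
    refine .inl ⟨M, hMcard, hM.trans (Multiset.filter_le _ S), fun m hm hcomm => hne m hm ?_⟩
    have h1 := (Multiset.mem_filter.1 (Multiset.mem_of_le hM (fst_mem_pairTerms hm))).2
    have h2 := (Multiset.mem_filter.1 (Multiset.mem_of_le hM (snd_mem_pairTerms hm))).2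
    ext x
    rw [Subgroup.mem_centralizer_singleton_iff, Subgroup.mem_centralizer_singleton_iff]
    exact ⟨fun hx => C.commute_trans h1 hx hcomm, fun hx => C.commute_trans h2 hx hcomm.symm⟩
  · push Not at hcen
    obtain ⟨H, hH⟩ := hcen
    have hcard := Multiset.card_eq_countP_add_countP (fun g => Subgroup.centralizer {g} = H)
      (S.filter (· ≠ 1))
    obtain ⟨k, hkS, rfl⟩ := Multiset.countP_pos.1 (by omega :
      0 < (S.filter (· ≠ 1)).countP fun g => Subgroup.centralizer {g} = H)
    refine .inr ⟨k, (Multiset.mem_filter.1 hkS).2, lt_of_le_of_lt ?_ (by omega :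
      (S.filter (· ≠ 1)).countP (fun g => ¬ Subgroup.centralizer {g} = Subgroup.centralizer {k}) <
        r)⟩
    rw [Multiset.countP_filter]
    refine countP_le_countP fun x _ hx => ⟨fun h => hx ?_, fun h => hx (h ▸ Commute.one_left k)⟩
    exact Subgroup.mem_centralizer_singleton_iff.1
      (h ▸ Subgroup.mem_centralizer_singleton_iff.2 rfl)

end Commute

section Davenport

variable {p q : ℕ} [Fact p.Prime] [Fact q.Prime] {G : Type*} [Group G] (C : MetacyclicCoord p q G)

/-- The `b`-coordinates of the products of subsequences of `T`, in any order, whose product has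
`a`-coordinate `0`. -/
noncomputable def bSubprods (T : Multiset G) : Finset (ZMod q) :=
  Finset.univ.filter fun b => ∃ l : List G, (l : Multiset G) ≤ T ∧ C.a l.prod = 0 ∧ C.b l.prod = b

theorem mem_bSubprods {T : Multiset G} {b : ZMod q} :
    b ∈ C.bSubprods T ↔ ∃ l : List G, (l : Multiset G) ≤ T ∧ C.a l.prod = 0 ∧ C.b l.prod = b := by
  rw [bSubprods, Finset.mem_filter, and_iff_right (Finset.mem_univ b)]

theorem zero_mem_bSubprods (T : Multiset G) : 0 ∈ C.bSubprods T :=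
  C.mem_bSubprods.2 ⟨[], Multiset.zero_le T, C.a_one, C.b_one⟩

theorem min_le_card_bSubprods_add {A B : Multiset G} {m n : ℕ}
    (hA : min q (m + 1) ≤ (C.bSubprods A).card) (hB : min q (n + 1) ≤ (C.bSubprods B).card) :
    min q (m + n + 1) ≤ (C.bSubprods (A + B)).card := by
  refine min_le_card_of_add_mem hA hB fun x hx y hy => ?_
  obtain ⟨l, hl, ha, rfl⟩ := C.mem_bSubprods.1 hx
  obtain ⟨l', hl', ha', rfl⟩ := C.mem_bSubprods.1 hy
  refine C.mem_bSubprods.2 ⟨l ++ l', ?_, ?_, ?_⟩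
  · rw [← Multiset.coe_add]
    exact add_le_add hl hl'
  · rw [List.prod_append, C.a_mul, ha, ha', add_zero]
  · rw [List.prod_append, C.b_mul, ha', AddChar.map_zero_eq_one, mul_one]

-- Rotating an ordering of `U` so that a suffix with `a`-sum `c` comes first multiplies the
-- `b`-coordinate of the product by `σ (-c)`, and by minimality the suffixes have distinct sums.
theorem card_le_card_bProds_of_minimal {U : Multiset G}
    (hU : Minimal (fun U => U ≠ 0 ∧ C.aSum U = 0) U) (hU1 : ¬ IsOneProdSeq U) :
    U.card ≤ (C.bProds U).card := by
  obtain ⟨l, rfl⟩ := Quot.exists_rep U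
  have ha : C.a l.prod = 0 := (C.a_list_prod l).trans hU.1.2
  have hb : C.b l.prod ≠ 0 := fun hb => hU1 ⟨l, rfl, C.eq_one _ ha hb⟩
  have hmem : ∀ i ∈ Finset.range l.length,
      C.σ (-C.aSum (l.drop i : List G)) * C.b l.prod ∈ C.bProds (l : Multiset G) := by
    intro i _
    refine C.mem_bProds.2 ⟨l.drop i ++ l.take i, Multiset.coe_eq_coe.2 ?_, ?_⟩
    · exact List.perm_append_comm.trans (List.Perm.of_eq (List.take_append_drop i l))
    · have hl : l.prod = (l.take i).prod * (l.drop i).prod := by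
        rw [← List.prod_append, List.take_append_drop]
      rw [hl, C.a_mul] at ha
      have hσ : C.σ (C.a (l.take i).prod) * C.σ (C.a (l.drop i).prod) = 1 := by
        rw [← AddChar.map_add_eq_mul, ha, AddChar.map_zero_eq_one]
      rw [hl, List.prod_append, C.b_mul, C.b_mul, ← C.a_list_prod,
        ← eq_neg_of_add_eq_zero_left ha]
      linear_combination (-C.b (l.take i).prod) * hσ
  have hinj : Set.InjOn (fun i => C.σ (-C.aSum (l.drop i : List G)) * C.b l.prod)
      (Finset.range l.length) := by
    intro i hi j hj hij
    rw [Finset.coe_range, Set.mem_Iio] at hi hj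
    have hsum := neg_injective (C.σ_injective (mul_right_cancel₀ hb hij))
    rcases lt_trichotomy i j with h | h | h
    · exact absurd hsum (C.aSum_drop_ne hU h hj)
    · exact h
    · exact absurd hsum.symm (C.aSum_drop_ne hU h hi)
  exact (Finset.card_range _).symm.trans_le (Finset.card_le_card_of_injOn _ hmem hinj)

theorem card_lt_card_bSubprods_of_minimal {U : Multiset G}
    (hU : Minimal (fun U => U ≠ 0 ∧ C.aSum U = 0) U) (hU1 : ¬ IsOneProdSeq U) :
    U.card < (C.bSubprods U).card := by
  have h0 : 0 ∉ C.bProds U := fun h0 => hU1 (C.isOneProdSeq_of_zero_mem_bProds h0 hU.1.2)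
  have hsub : insert 0 (C.bProds U) ⊆ C.bSubprods U := by
    refine Finset.insert_subset (C.zero_mem_bSubprods U) fun b hb => ?_
    obtain ⟨l, rfl, rfl⟩ := C.mem_bProds.1 hb
    exact C.mem_bSubprods.2 ⟨l, le_rfl, (C.a_list_prod l).trans hU.1.2, rfl⟩
  have hcard := Finset.card_le_card hsub
  rw [Finset.card_insert_of_notMem h0] at hcard
  exact (C.card_le_card_bProds_of_minimal hU hU1).trans_lt hcard

theorem min_le_card_bSubprods_of_free {S : Multiset G} (hS : IsOneProdFree S) :
    min q (S.card + 1 - p + 1) ≤ (C.bSubprods S).card := by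
  induction S using Multiset.strongInductionOn with
  | _ S ih =>
    rcases lt_or_ge S.card p with hp | hp
    · have h0 := Finset.card_pos.2 ⟨0, C.zero_mem_bSubprods S⟩
      omega
    · obtain ⟨U, hUS, hU⟩ := C.exists_minimal_aSum_eq_zero hp
      have hU1 : ¬ IsOneProdSeq U := fun h => hU.1.1 (hS U hUS h)
      obtain ⟨R, rfl⟩ := Multiset.le_iff_exists_add.1 hUS
      have hR : R < U + R := lt_add_of_pos_left R (pos_iff_ne_zero.2 hU.1.1)
      refine le_trans ?_ (C.min_le_card_bSubprods_add
        ((min_le_right q _).trans (C.card_lt_card_bSubprods_of_minimal hU hU1))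
        (ih R hR (hS.mono hR.le)))
      rw [Multiset.card_add]
      omega

theorem card_add_one_lt_of_free (C : MetacyclicCoord p q G) {S : Multiset G}
    (hS : IsOneProdFree S) : S.card + 1 < p + q := by
  by_contra! hcard
  obtain ⟨U, hUS, hU⟩ := C.exists_minimal_aSum_eq_zero (S := S)
    (by have := (Fact.out : q.Prime).pos; omega)
  have hU0 := Multiset.card_pos.2 hU.1.1
  have hbU := C.card_le_card_bProds_of_minimal hU fun h => hU.1.1 (hS U hUS h)
  obtain ⟨R, rfl⟩ := Multiset.le_iff_exists_add.1 hUS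
  rw [Multiset.card_add] at hcard
  have huniv := min_le_card_of_add_mem (m := U.card - 1) (Z := {b ∈ Finset.univ | ∃ l l' : List G,
      (l : Multiset G) = U ∧ (l' : Multiset G) ≤ R ∧ C.a l'.prod = 0 ∧ C.b (l ++ l').prod = b})
    ((min_le_right _ _).trans ((Nat.sub_add_cancel hU0).trans_le hbU))
    (C.min_le_card_bSubprods_of_free (hS.mono (Multiset.le_add_left R U))) ?_
  · have h0 := Finset.mem_univ (0 : ZMod q)
    rw [← eq_univ_of_le_card (le_trans (by omega) huniv)] at h0
    obtain ⟨l, l', rfl, hl', ha', hb⟩ := (Finset.mem_filter.1 h0).2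
    have ha : C.a (l ++ l').prod = 0 := by
      rw [List.prod_append, C.a_mul, ha', C.a_list_prod, hU.1.2, add_zero]
    have hzero := hS (l + l') (add_le_add_right hl' _) ⟨l ++ l', rfl, C.eq_one _ ha hb⟩
    exact hU.1.1 (add_eq_zero.1 hzero).1
  · intro x hx y hy
    obtain ⟨l, hl, rfl⟩ := C.mem_bProds.1 hx
    obtain ⟨l', hl', ha', rfl⟩ := C.mem_bSubprods.1 hy
    refine Finset.mem_filter.2 ⟨Finset.mem_univ _, l, l', hl, hl', ha', ?_⟩
    rw [List.prod_append, C.b_mul, ha', AddChar.map_zero_eq_one, mul_one]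

theorem exists_le_card_le_isOneProdSeq (C : MetacyclicCoord p q G) {S : Multiset G}
    (hS : p + q - 1 ≤ S.card) :
    ∃ U ≤ S, U ≠ 0 ∧ U.card ≤ p + q - 1 ∧ IsOneProdSeq U := by
  obtain ⟨S', hS', hcard⟩ := exists_le_card_eq hS
  have hfree : ¬ IsOneProdFree S' := fun h => by
    have := C.card_add_one_lt_of_free h
    omega
  unfold IsOneProdFree at hfree
  push Not at hfree
  obtain ⟨U, hU, hU1, hU0⟩ := hfree
  exact ⟨U, hU.trans hS', hU0, hcard ▸ Multiset.card_le_card hU, hU1⟩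

end Davenport

section Length

variable {p q : ℕ} [Fact p.Prime] [Fact q.Prime] {G : Type*} [Group G] (C : MetacyclicCoord p q G)
  {S : Multiset G}

theorem hasOneProdOfCard_of_le_countP_commute {g : G} (hg : C.a g ≠ 0)
    (h : p * q + p ≤ S.countP (Commute · g) + 1) : HasOneProdOfCard (p * q) S := by
  rw [Multiset.countP_eq_card_filter, mul_comm] at h
  obtain ⟨T, hT, hcard, ha⟩ := exists_le_card_eq_mul_sum_map_eq_zero C.a h
  rw [Multiset.le_filter] at hT
  exact ⟨T, hT.1, hcard.trans (mul_comm q p), C.isOneProdSeq_of_commute hg hT.2 ha⟩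

theorem hasOneProdOfCard_of_le_count_of_a_ne_zero {g : G} (hg : C.a g ≠ 0)
    (h : p * q ≤ S.count g) : HasOneProdOfCard (p * q) S :=
  hasOneProdOfCard_of_le_count (by rw [pow_mul, C.pow_eq_one hg, one_pow]) h

-- The pairs in `M₂` make every `b`-coordinate reachable by reordering, and choosing one term from
-- each pair in `M₁` adjusts the sum of the `a`-coordinates.
theorem hasOneProdOfCard_of_pairTerms {M₁ M₂ : Multiset (G × G)} (h₁ : M₁.card + 1 = p)
    (h₂ : M₂.card + 1 = q) (hS : p * q + p ≤ S.card + 1) (hM : pairTerms M₁ + pairTerms M₂ ≤ S)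
    (hM₁ : ∀ m ∈ M₁, C.a m.1 ≠ C.a m.2) (hM₂ : ∀ m ∈ M₂, ¬ Commute m.1 m.2) :
    HasOneProdOfCard (p * q) S := by
  have hpq : 2 * q + p ≤ p * q + 2 := by
    nlinarith [(Fact.out : p.Prime).two_le, (Fact.out : q.Prime).two_le]
  obtain ⟨R, rfl⟩ := Multiset.le_iff_exists_add.1 hM
  simp only [Multiset.card_add, card_pairTerms] at hS
  obtain ⟨W, hW, hWcard⟩ := exists_le_card_eq
    (by omega : p * q - 2 * M₂.card - M₁.card ≤ R.card)
  obtain ⟨T, hT, hTcard, hTsum⟩ :=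
    exists_selection_sum_eq C.a h₁.ge hM₁ (-C.aSum (pairTerms M₂ + W))
  refine ⟨T + (pairTerms M₂ + W), ?_, ?_, ?_⟩
  · rw [add_assoc]
    exact add_le_add hT (add_le_add_right hW _)
  · simp only [Multiset.card_add, card_pairTerms]
    omega
  · refine C.isOneProdSeq_of_le (C.min_le_card_bProds_pairTerms hM₂) h₂.ge
      ((Multiset.le_add_right _ W).trans (Multiset.le_add_left _ T)) ?_
    rw [C.aSum_add, aSum, hTsum, neg_add_cancel]

-- A term off the normal subgroup and `q - 1` nontrivial terms in it make every `b`-coordinate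
-- reachable.
theorem hasOneProdOfCard_of_le_countP_a_ne_zero (hS : p * q + p + q ≤ S.card + 2)
    (hne : p ≤ S.countP (¬ C.a · = 0)) (hE : q ≤ S.countP (fun g => C.a g = 0 ∧ g ≠ 1) + 1)
    (hz : p + q ≤ S.countP (C.a · = 0) + 2) : HasOneProdOfCard (p * q) S := by
  have hq := (Fact.out : q.Prime).two_le
  have hpq : p + q ≤ p * q + 1 := by nlinarith [(Fact.out : p.Prime).two_le]
  have hcard := Multiset.card_eq_countP_add_countP (C.a · = 0) S
  rw [Multiset.countP_eq_card_filter (C.a · = 0)] at hz hcard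
  rw [Multiset.countP_eq_card_filter (¬ C.a · = 0)] at hne hcard
  obtain ⟨V, hV, hVa, hV1, hV2⟩ := C.exists_le_aSum_eq_zero_card_mem_Ico
    (L := max 1 (p * q - (S.filter (C.a · = 0)).card)) (S := S.filter (¬ C.a · = 0)) (by omega)
  obtain ⟨v, hv⟩ := Multiset.card_pos_iff_exists_mem.1 (by omega : 0 < V.card)
  obtain ⟨E, hES, hEcard, hE⟩ := exists_le_card_eq_forall (Nat.sub_le_of_le_add hE)
  obtain ⟨W, hEW, hW, hWcard⟩ := exists_le_le_card_eq
    (Multiset.le_filter.2 ⟨hES, fun g hg => (hE g hg).1⟩)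
    (by omega : E.card ≤ p * q - V.card) (by omega)
  refine ⟨V + W, ?_, ?_, ?_⟩
  · rw [← Multiset.filter_add_not (C.a · = 0) S, add_comm V]
    exact add_le_add hW hV
  · rw [Multiset.card_add]
    omega
  · have hva : C.a v ≠ 0 := (Multiset.mem_filter.1 (Multiset.mem_of_le hV hv)).2
    refine C.isOneProdSeq_of_le (C.min_le_card_bProds_cons hva hE) (by omega) ?_ ?_
    · rw [← Multiset.singleton_add]
      exact add_le_add (Multiset.singleton_le.2 hv) hEW
    · rw [C.aSum_add, hVa, zero_add,
        C.aSum_eq_zero fun g hg => (Multiset.mem_filter.1 (Multiset.mem_of_le hW hg)).2]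

theorem hasOneProdOfCard_of_le_countP_a_eq {c : ZMod p} (hc : c ≠ 0)
    (h : p * q + q ≤ S.countP (C.a · = c) + 2) : HasOneProdOfCard (p * q) S := by
  have hpq : 2 * q ≤ p * q := Nat.mul_le_mul_right q (Fact.out : p.Prime).two_le
  have hq := (Fact.out : q.Prime).two_le
  rw [Multiset.countP_eq_card_filter] at h
  by_cases hcount : ∀ g, (S.filter (C.a · = c)).count g + (q - 1) ≤ (S.filter (C.a · = c)).card
  · obtain ⟨M, hMcard, hM, hne⟩ := exists_pairs_ne id (S := S.filter (C.a · = c)) (r := q - 1)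
      (by omega) (by simpa only [Multiset.count, eq_comm, id] using hcount)
    obtain ⟨T, hMT, hT, hTcard⟩ := exists_le_le_card_eq hM (n := p * q)
      (by rw [card_pairTerms]; omega) (by omega)
    rw [Multiset.le_filter] at hT
    refine ⟨T, hT.1, hTcard, C.isOneProdSeq_of_le (C.min_le_card_bProds_pairTerms fun m hm => ?_)
      (by omega) hMT (C.aSum_eq_zero_of_forall_eq hTcard hT.2)⟩
    have hm1 := hT.2 m.1 (Multiset.mem_of_le hMT (fst_mem_pairTerms hm))
    have hm2 := hT.2 m.2 (Multiset.mem_of_le hMT (snd_mem_pairTerms hm))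
    exact fun hcomm => hne m hm
      (C.eq_of_commute (hm2.trans_ne hc) hcomm (Commute.refl _) (hm1.trans hm2.symm))
  · push Not at hcount
    obtain ⟨g, hg⟩ := hcount
    have hgS : g ∈ S.filter (C.a · = c) := Multiset.count_pos.1 (by omega)
    have hle : p * q ≤ (S.filter (C.a · = c)).count g := by omega
    refine HasOneProdOfCard.mono (Multiset.filter_le _ S)
      (C.hasOneProdOfCard_of_le_count_of_a_ne_zero ?_ hle)
    exact (Multiset.mem_filter.1 hgS).2.trans_ne hc

-- Pair `p + q - 2` copies of `g` with the other terms.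
theorem hasOneProdOfCard_of_le_count {g : G} (hg : C.a g ≠ 0) (hS : p * q + p + q ≤ S.card + 2)
    (hcount : p + q ≤ S.count g + 2) (hcomm : q ≤ S.countP (¬ Commute · g) + 1)
    (ha : p ≤ S.countP (C.a · ≠ C.a g) + 1) : HasOneProdOfCard (p * q) S := by
  have hp := (Fact.out : p.Prime).pos
  have hq := (Fact.out : q.Prime).pos
  rcases le_or_gt (p * q) (S.count g) with hle | hlt
  · exact C.hasOneProdOfCard_of_le_count_of_a_ne_zero hg hle
  have hsplit := replicate_count_add_filter_ne g S
  have hcard := congrArg Multiset.card hsplit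
  rw [Multiset.card_add, Multiset.card_replicate] at hcard
  have ha' : p - 1 ≤ (S.filter (· ≠ g)).countP (C.a · ≠ C.a g) := by
    rw [Multiset.countP_filter]
    exact (Nat.sub_le_of_le_add ha).trans
      (countP_le_countP fun x _ hx => ⟨hx, fun h => hx (h ▸ rfl)⟩)
  have hcomm' : q - 1 ≤ (S.filter (· ≠ g)).countP (¬ Commute · g) := by
    rw [Multiset.countP_filter]
    exact (Nat.sub_le_of_le_add hcomm).trans
      (countP_le_countP fun x _ hx => ⟨hx, fun h => hx (h ▸ Commute.refl g)⟩)
  have hor : ∀ x ∈ S.filter (· ≠ g), C.a x ≠ C.a g ∨ ¬ Commute x g := fun x hx =>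
    not_or_of_imp fun ha hcomm =>
      (Multiset.mem_filter.1 hx).2 (C.eq_of_commute hg hcomm (Commute.refl g) ha)
  obtain ⟨A, B, hAB, hA, hB, haA, hcB⟩ := exists_add_le_of_forall_or hor ha' hcomm' (by omega)
  refine C.hasOneProdOfCard_of_pairTerms (M₁ := A.map (·, g)) (M₂ := B.map (·, g))
    (by rw [Multiset.card_map]; omega) (by rw [Multiset.card_map]; omega) (by omega) ?_
    (Multiset.forall_mem_map_iff.2 haA) (Multiset.forall_mem_map_iff.2 hcB)
  rw [pairTerms_map_mk, pairTerms_map_mk, add_add_add_comm, ← Multiset.replicate_add, ← hsplit,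
    add_comm]
  exact add_le_add ((Multiset.replicate_le_replicate g).2 (by omega)) hAB

theorem hasOneProdOfCard_of_le_countP_commute_and_a_eq {k : G} {c : ZMod p} (hk : C.a k ≠ 0)
    (hc : c ≠ 0) (hS : p * q + p + q ≤ S.card + 2)
    (hcount : p + q ≤ S.countP (fun x => Commute x k ∧ C.a x = c) + 2)
    (hcomm : q ≤ S.countP (¬ Commute · k) + 1) (ha : p ≤ S.countP (C.a · ≠ c) + 1) :
    HasOneProdOfCard (p * q) S := by
  have hp := (Fact.out : p.Prime).two_le
  have hq := (Fact.out : q.Prime).pos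
  obtain ⟨g, -, hgk, rfl⟩ := Multiset.countP_pos.1
    (by omega : 0 < S.countP fun x => Commute x k ∧ C.a x = c)
  have hcount_le : S.countP (fun x => Commute x k ∧ C.a x = C.a g) ≤ S.count g :=
    countP_le_countP fun x _ hx => (C.eq_of_commute hk hx.1 hgk hx.2).symm
  have hcomm_le : S.countP (¬ Commute · k) ≤ S.countP (¬ Commute · g) :=
    countP_le_countP fun x _ hx hxg =>
      hx (C.commute_trans (fun h => hc (by rw [h, C.a_one])) hxg hgk)
  exact C.hasOneProdOfCard_of_le_count hc hS (by omega) (by omega) ha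

theorem hasOneProdOfCard_of_countP_not_commute_le (hp3 : 3 ≤ p) (hpq : p < q) {k : G}
    (hk : C.a k ≠ 0) (hS : p * q + p + q ≤ S.card + 2) (h1 : S.count 1 + 3 ≤ p + q)
    (hz : S.countP (C.a · = 0) + 4 < 2 * (p + q)) (ha : ∀ c, S.countP (C.a · = c) + p ≤ S.card + 1)
    (hF : S.countP (¬ Commute · k) + 4 ≤ q + 2 * p) : HasOneProdOfCard (p * q) S := by
  have hpq₁ : 3 * p + 2 * q ≤ p * q + 6 := by nlinarith
  have hpq₂ : 2 * p + 3 * q ≤ p * q + 6 := by nlinarith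
  have hcard := Multiset.card_eq_countP_add_countP (Commute · k) S
  rcases le_or_gt (p * q + p) (S.countP (Commute · k) + 1) with hK | hK
  · exact C.hasOneProdOfCard_of_le_countP_commute hk hK
  have hK1 : S.countP (Commute · k) ≤ S.count 1 + S.countP fun x => Commute x k ∧ x ≠ 1 :=
    countP_le_countP_add_countP fun x _ hx => (eq_or_ne 1 x).imp_right fun h => ⟨hx, h.symm⟩
  obtain ⟨M₂, R, rfl, hM₂card, hM₂, hRF⟩ := C.exists_pairTerms_add_eq
    (by omega : q - 1 ≤ S.countP (¬ Commute · k)) (by omega)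
  have hRcard : R.card + 2 * (q - 1) = (pairTerms M₂ + R).card := by
    rw [Multiset.card_add, card_pairTerms, hM₂card, add_comm]
  by_cases hR : ∀ c, R.countP (C.a · = c) + (p - 1) ≤ R.card
  · obtain ⟨M₁, hM₁card, hM₁R, hM₁⟩ := exists_pairs_ne C.a (by omega) hR
    refine C.hasOneProdOfCard_of_pairTerms (by omega) (by omega) (by omega) ?_ hM₁ hM₂
    rw [add_comm]
    exact add_le_add_right hM₁R _
  · push Not at hR
    obtain ⟨c, hc⟩ := hR
    have hRS := Multiset.le_add_left R (pairTerms M₂)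
    have hc0 : c ≠ 0 := by
      rintro rfl
      have := Multiset.countP_le_of_le (C.a · = 0) hRS
      omega
    have hRc : R.countP (C.a · = c) ≤
        R.countP (fun x => Commute x k ∧ C.a x = c) + R.countP (¬ Commute · k) :=
      countP_le_countP_add_countP fun x _ hx =>
        (em (Commute x k)).imp_left fun hcomm => ⟨hcomm, hx⟩
    have hSc := Multiset.card_eq_countP_add_countP (C.a · = c) (pairTerms M₂ + R)
    have hcount := Multiset.countP_le_of_le (fun x => Commute x k ∧ C.a x = c) hRS
    have hac := ha c
    exact C.hasOneProdOfCard_of_le_countP_commute_and_a_eq hk hc0 hS (by omega) (by omega)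
      (by simp only [ne_eq]; omega)

theorem hasOneProdOfCard_of_count_one_of_le_countP_a_eq_zero (hS : p * q + p + q ≤ S.card + 2)
    (h1 : S.count 1 + 3 ≤ p + q) (hz : 2 * (p + q) ≤ S.countP (C.a · = 0) + 4) :
    HasOneProdOfCard (p * q) S := by
  have hp := (Fact.out : p.Prime).pos
  have hcard := Multiset.card_eq_countP_add_countP (C.a · = 0) S
  rcases le_or_gt p (S.countP (¬ C.a · = 0)) with hne | hne
  · have hE : S.countP (C.a · = 0) ≤ S.count 1 + S.countP fun g => C.a g = 0 ∧ g ≠ 1 :=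
      countP_le_countP_add_countP fun x _ hx => (eq_or_ne 1 x).imp_right fun h => ⟨hx, h.symm⟩
    exact C.hasOneProdOfCard_of_le_countP_a_ne_zero hS hne (by omega) (by omega)
  · exact C.hasOneProdOfCard_of_le_countP_a_eq_zero (by omega)

theorem hasOneProdOfCard_of_forall_countP_le (hp3 : 3 ≤ p) (hpq : p < q)
    (hS : p * q + p + q ≤ S.card + 2) (h1 : S.count 1 + 3 ≤ p + q)
    (hz : S.countP (C.a · = 0) + 4 < 2 * (p + q))
    (ha : ∀ c, S.countP (C.a · = c) + p ≤ S.card + 1) : HasOneProdOfCard (p * q) S := by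
  have hpq₁ : 3 * p + 2 * q ≤ p * q + 5 := by nlinarith
  obtain ⟨M₁, hM₁card, hM₁S, hM₁⟩ := exists_pairs_ne C.a (S := S) (r := p - 1) (by omega)
    (fun c => by have := ha c; omega)
  obtain ⟨R, rfl⟩ := Multiset.le_iff_exists_add.1 hM₁S
  have hM₁terms : (pairTerms M₁).card = 2 * (p - 1) := by rw [card_pairTerms, hM₁card]
  have hRcard := Multiset.card_add (pairTerms M₁) R
  have hR1 := Multiset.count_le_of_le 1 (Multiset.le_add_left R (pairTerms M₁))
  have hRz := Multiset.countP_le_of_le (C.a · = 0) (Multiset.le_add_left R (pairTerms M₁))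
  have hRne := congrArg Multiset.card (replicate_count_add_filter_ne 1 R)
  rw [Multiset.card_add, Multiset.card_replicate, ← Multiset.countP_eq_card_filter] at hRne
  rcases C.exists_pairTerms_le_or (S := R) (r := q - 1) (by omega) with
    ⟨M₂, hM₂card, hM₂R, hM₂⟩ | ⟨k, hk1, hk⟩
  · exact C.hasOneProdOfCard_of_pairTerms (by omega) (by omega) (by omega)
      (add_le_add_right hM₂R _) hM₁ hM₂
  · have hk0 : C.a k ≠ 0 := by
      intro hk0
      have hcz : R.countP (Commute · k) ≤ R.countP (C.a · = 0) :=
        countP_le_countP fun x _ hx => by_contra fun hax =>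
          hk1 (C.eq_one_of_commute hx.symm hax hk0)
      have hRk := Multiset.card_eq_countP_add_countP (Commute · k) R
      omega
    refine C.hasOneProdOfCard_of_countP_not_commute_le hp3 hpq hk0 hS h1 hz ha ?_
    have hle := Multiset.countP_le_card (¬ Commute · k) (pairTerms M₁)
    rw [Multiset.countP_add]
    omega

theorem hasOneProdOfCard_of_le_card (C : MetacyclicCoord p q G) (hp3 : 3 ≤ p) (hpq : p < q)
    (hS : p * q + p + q ≤ S.card + 2) : HasOneProdOfCard (p * q) S := by
  have hpq₁ : 3 * p + 2 * q ≤ p * q + 5 := by nlinarith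
  rcases le_or_gt (p + q) (S.count 1 + 2) with h1 | h1
  · exact hasOneProdOfCard_of_le_count_one (fun S => C.exists_le_card_le_isOneProdSeq) (by omega)
      (by omega)
  rcases le_or_gt (2 * (p + q)) (S.countP (C.a · = 0) + 4) with hz | hz
  · exact C.hasOneProdOfCard_of_count_one_of_le_countP_a_eq_zero hS (by omega) hz
  by_cases ha : ∀ c, S.countP (C.a · = c) + p ≤ S.card + 1
  · exact C.hasOneProdOfCard_of_forall_countP_le hp3 hpq hS (by omega) hz ha
  · push Not at ha
    obtain ⟨c, hc⟩ := ha
    refine C.hasOneProdOfCard_of_le_countP_a_eq (c := c) ?_ (by omega)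
    rintro rfl
    omega

end Length

section Blocks

variable {p q : ℕ} {G : Type*} [Group G] {S : Multiset G}

theorem hasOneProdOfCard_mul_of_le_card [Fact p.Prime] [Fact q.Prime] (C : MetacyclicCoord p q G)
    (hp3 : 3 ≤ p) (hpq : p < q) {r : ℕ} (hS : r * (p * q) + p + q ≤ S.card + 2) :
    HasOneProdOfCard (r * (p * q)) S := by
  have hpq_le : p + q ≤ p * q + 2 := by nlinarith
  obtain ⟨B, rfl, hBS, hB⟩ := exists_disjoint_blocks (N := p * q + p + q - 2) (r := r) (S := S)
    (fun S' hS' => C.hasOneProdOfCard_of_le_card hp3 hpq (S := S') (by omega)) (by omega)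
  exact ⟨B.sum, hBS, card_sum_of_forall_card_eq fun b hb => (hB b hb).1,
    Multiset.sum_induction _ B (fun _ _ => IsOneProdSeq.add_s5) isOneProdSeq_zero
      fun b hb => (hB b hb).2⟩

-- Cut `S` into blocks of length `p` whose products are powers of `y`; the Davenport constant of
-- `ZMod k × ZMod q` then bounds the number of blocks needed.
theorem exists_dvd_card_isOneProdSeq_of_mul_le_card [NeZero p] [NeZero q]
    (C : MetacyclicCoord p q G) {k : ℕ} (hk : 0 < k) (hS : k * q * p + p ≤ S.card + 1) :
    ∃ T ≤ S, T ≠ 0 ∧ k * p ∣ T.card ∧ IsOneProdSeq T := by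
  have : NeZero k := ⟨hk.ne'⟩
  obtain ⟨B, hBcard, hBS, hB⟩ := exists_blocks_sum_map_eq_zero C.a hS
  obtain ⟨U, hU, hU0, -, hsum⟩ := exists_le_card_le_sum_map_eq_zero
    (fun b : Multiset G => ((1 : ZMod k), C.b b.toList.prod)) (S := B)
    (by rw [Fintype.card_prod, ZMod.card, ZMod.card, hBcard])
  have hUB : ∀ b ∈ U, b.card = p ∧ C.aSum b = 0 := fun b hb => hB b (Multiset.mem_of_le hU hb)
  have hcard := card_sum_of_forall_card_eq fun b hb => (hUB b hb).1
  have hkU : (U.card : ZMod k) = 0 := by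
    simpa [Multiset.fst_sum] using congrArg Prod.fst hsum
  have hbU : ((U.map (·.toList.prod)).map C.b).sum = 0 := by
    simpa [Multiset.snd_sum] using congrArg Prod.snd hsum
  refine ⟨U.sum, (sum_le_sum_of_le hU).trans hBS, ?_, ?_, ?_⟩
  · rw [← Multiset.card_pos, hcard]
    exact Nat.mul_pos (Multiset.card_pos.2 hU0) (NeZero.pos p)
  · rw [hcard]
    exact Nat.mul_dvd_mul_right ((ZMod.natCast_eq_zero_iff _ _).1 hkU) p
  · refine .sum_of_map_prod (C.isOneProdSeq_of_a_eq_zero (Multiset.forall_mem_map_iff.2 ?_) hbU)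
    intro b hb
    rw [C.a_list_prod, Multiset.coe_toList, (hUB b hb).2]

theorem exists_dvd_card_isOneProdSeq [Fact p.Prime] [Fact q.Prime] (C : MetacyclicCoord p q G)
    (hp3 : 3 ≤ p) (hpq : p < q) {k : ℕ} (hk : 0 < k)
    (hS : (k * p).lcm q + p - 2 + (k * p).gcd q ≤ S.card) :
    ∃ T ≤ S, T ≠ 0 ∧ k * p ∣ T.card ∧ IsOneProdSeq T := by
  have hp : p.Prime := Fact.out
  have hq : q.Prime := Fact.out
  rcases Nat.coprime_or_dvd_of_prime hq (k * p) with hco | hdvd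
  · rw [hco.symm.lcm_eq_mul, hco.symm.gcd_eq_one, mul_right_comm] at hS
    exact C.exists_dvd_card_isOneProdSeq_of_mul_le_card hk (by omega)
  · rw [Nat.lcm_eq_left hdvd, Nat.gcd_eq_right hdvd] at hS
    obtain ⟨r, rfl⟩ : q ∣ k := ((Nat.coprime_primes hq hp).2 hpq.ne').dvd_of_dvd_mul_right hdvd
    have hr : q * r * p = r * (p * q) := by ring
    obtain ⟨T, hT, hcard, h1⟩ := C.hasOneProdOfCard_mul_of_le_card hp3 hpq (r := r) (S := S)
      (by omega)
    refine ⟨T, hT, Multiset.card_pos.1 ?_, by rw [hcard, hr], h1⟩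
    rw [hcard, ← hr]
    exact Nat.mul_pos hk hp.pos

end Blocks

section LowerBound

variable {p q : ℕ} {G : Type*} [Group G] (C : MetacyclicCoord p q G)

theorem aSum_eq_zero_of_isOneProdSeq {T : Multiset G} (h : IsOneProdSeq T) : C.aSum T = 0 := by
  obtain ⟨l, rfl, hl⟩ := h
  rw [← C.a_list_prod, hl, C.a_one]

theorem sum_map_b_eq_zero_of_isOneProdSeq {T : Multiset G} (ha : ∀ g ∈ T, C.a g = 0)
    (h : IsOneProdSeq T) : (T.map C.b).sum = 0 := by
  obtain ⟨l, rfl, hl⟩ := h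
  rw [Multiset.map_coe, Multiset.sum_coe, ← C.b_list_prod ha, hl, C.b_one]

theorem dvd_of_isOneProdSeq {x y : G} (hxa : C.a x = 1) (hya : C.a y = 0) (hyb : C.b y = 1)
    {i j k : ℕ} (h : IsOneProdSeq
      (Multiset.replicate i 1 + Multiset.replicate j y + Multiset.replicate k x)) :
    p ∣ k ∧ (k = 0 → q ∣ j) := by
  constructor
  · simpa [aSum, C.a_one, hxa, hya, ZMod.natCast_eq_zero_iff] using
      C.aSum_eq_zero_of_isOneProdSeq h
  · rintro rfl
    have hb := C.sum_map_b_eq_zero_of_isOneProdSeq (fun g hg => ?_) h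
    · simpa [C.b_one, hyb, ZMod.natCast_eq_zero_iff] using hb
    · rcases Multiset.mem_add.1 (by simpa using hg) with hg | hg
      · rw [Multiset.eq_of_mem_replicate hg, C.a_one]
      · rw [Multiset.eq_of_mem_replicate hg, hya]

theorem eq_zero_of_dvd_card_of_isOneProdSeq {x y : G} (hxa : C.a x = 1) (hya : C.a y = 0)
    (hyb : C.b y = 1) (hp : 0 < p) (hq : 0 < q) {d : ℕ} (hd : 0 < d) {T : Multiset G}
    (hT : T ≤ Multiset.replicate (d.gcd q - 1) 1 + Multiset.replicate (d.lcm q - 1) y +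
      Multiset.replicate (p - 1) x)
    (hdT : d ∣ T.card) (h1 : IsOneProdSeq T) : T = 0 := by
  have hgcd := Nat.gcd_pos_of_pos_left q hd
  have hlcm := Nat.lcm_pos hd hq
  obtain ⟨_, hA, _, hX, rfl⟩ := exists_le_le_eq_add_of_le_add hT
  obtain ⟨_, hI, _, hY, rfl⟩ := exists_le_le_eq_add_of_le_add hA
  obtain ⟨i, hi, rfl⟩ := Multiset.le_replicate_iff.1 hI
  obtain ⟨j, hj, rfl⟩ := Multiset.le_replicate_iff.1 hY
  obtain ⟨k, hk, rfl⟩ := Multiset.le_replicate_iff.1 hX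
  obtain ⟨hpk, hqj⟩ := C.dvd_of_isOneProdSeq hxa hya hyb h1
  obtain rfl : k = 0 := Nat.eq_zero_of_dvd_of_lt hpk (by omega)
  rw [Multiset.card_add, Multiset.card_add, Multiset.card_replicate, Multiset.card_replicate,
    Multiset.card_replicate, add_zero] at hdT
  have hgi : d.gcd q ∣ i := (Nat.dvd_add_left ((Nat.gcd_dvd_right d q).trans (hqj rfl))).1
    ((Nat.gcd_dvd_left d q).trans hdT)
  obtain rfl : i = 0 := Nat.eq_zero_of_dvd_of_lt hgi (by omega)
  rw [zero_add] at hdT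
  obtain rfl : j = 0 := Nat.eq_zero_of_dvd_of_lt (Nat.lcm_dvd hdT (hqj rfl)) (by omega)
  rfl

theorem le_of_forall_exists_dvd_card_isOneProdSeq {x y : G} (hxa : C.a x = 1) (hya : C.a y = 0)
    (hyb : C.b y = 1) (hp : 0 < p) (hq : 0 < q) {d ℓ : ℕ} (hd : 0 < d)
    (hℓ : ∀ S : Multiset G, ℓ ≤ S.card → ∃ T ≤ S, T ≠ 0 ∧ d ∣ T.card ∧ IsOneProdSeq T) :
    d.lcm q + p - 2 + d.gcd q ≤ ℓ := by
  have hgcd := Nat.gcd_pos_of_pos_left q hd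
  have hlcm := Nat.lcm_pos hd hq
  by_contra! hlt
  obtain ⟨T, hT, hT0, hdT, h1⟩ := hℓ (Multiset.replicate (d.gcd q - 1) 1 +
    Multiset.replicate (d.lcm q - 1) y + Multiset.replicate (p - 1) x) (by
      simp only [Multiset.card_add, Multiset.card_replicate]
      omega)
  exact hT0 (C.eq_zero_of_dvd_card_of_isOneProdSeq hxa hya hyb hp hq hd hT hdT h1)

end LowerBound

end MetacyclicCoord

section Presentation

theorem semiconjBy_pow_left {M : Type*} [Monoid M] {x y : M} {s : ℕ} (h : SemiconjBy x (y ^ s) y)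
    (n : ℕ) : SemiconjBy (x ^ n) (y ^ s ^ n) y := by
  induction n with
  | zero => simp
  | succ n ih =>
    rw [pow_succ', pow_succ, pow_mul]
    exact h.mul_left (ih.pow_right s)

variable {G : Type*} [Group G]

theorem pow_val_natCast {g : G} {n : ℕ} (hg : orderOf g = n) (m : ℕ) :
    g ^ (m : ZMod n).val = g ^ m := by
  rw [ZMod.val_natCast, ← hg, pow_mod_orderOf]

variable {p q : ℕ} [NeZero p] [NeZero q] {x y : G}

theorem injective_pow_val_mul_pow_val (hpq : p.Coprime q) (hx : orderOf x = p)
    (hy : orderOf y = q) :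
    Function.Injective fun t : ZMod p × ZMod q => x ^ t.1.val * y ^ t.2.val := by
  rintro ⟨i, j⟩ ⟨i', j'⟩ h
  have hdisj : Disjoint (Subgroup.zpowers x) (Subgroup.zpowers y) :=
    Subgroup.disjoint_of_coprime_natCard (by rwa [Nat.card_zpowers, Nat.card_zpowers, hx, hy])
  have hinj := Subgroup.mul_injective_of_disjoint hdisj
    (a₁ := (⟨_, Subgroup.npow_mem_zpowers x i.val⟩, ⟨_, Subgroup.npow_mem_zpowers y j.val⟩))
    (a₂ := (⟨_, Subgroup.npow_mem_zpowers x i'.val⟩, ⟨_, Subgroup.npow_mem_zpowers y j'.val⟩)) h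
  rw [Prod.mk.injEq, Subtype.mk.injEq, Subtype.mk.injEq] at hinj
  have hval {g : G} {n : ℕ} [NeZero n] (hg : orderOf g = n) (u : ZMod n) :
      u.val ∈ Set.Iio (orderOf g) := hg ▸ u.val_lt
  exact Prod.ext (ZMod.val_injective p (pow_injOn_Iio_orderOf (hval hx i) (hval hx i') hinj.1))
    (ZMod.val_injective q (pow_injOn_Iio_orderOf (hval hy j) (hval hy j') hinj.2))

theorem pow_val_mul_pow_val_mul {s : ℕ} (hx : orderOf x = p) (hy : orderOf y = q)
    (hrel : y * x = x * y ^ s) (i i' : ZMod p) (j j' : ZMod q) :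
    x ^ i.val * y ^ j.val * (x ^ i'.val * y ^ j'.val) =
      x ^ (i + i').val * y ^ (j * (s : ZMod q) ^ i'.val + j').val := by
  have hi : i + i' = (i.val + i'.val : ℕ) := by simp
  have hj : j * (s : ZMod q) ^ i'.val + j' = (s ^ i'.val * j.val + j'.val : ℕ) := by
    simp [mul_comm]
  have hswap := (semiconjBy_pow_left (x := x) (y := y) hrel.symm i'.val).pow_right j.val
  rw [hi, hj, pow_val_natCast hx, pow_val_natCast hy, pow_add, pow_add, pow_mul, mul_assoc,
    ← mul_assoc (y ^ j.val), ← hswap.eq]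
  simp only [mul_assoc]

theorem exists_metacyclicCoord {s : ℕ} (hpq : p.Coprime q) (hs : orderOf (s : ZMod q) = p)
    (hx : orderOf x = p) (hy : orderOf y = q) (hrel : y * x = x * y ^ s)
    (hcard : Nat.card G = p * q) :
    ∃ C : MetacyclicCoord p q G, ∀ i j : ℕ, C.a (x ^ i * y ^ j) = i ∧ C.b (x ^ i * y ^ j) = j := by
  have hG : Finite G := Nat.finite_of_card_ne_zero (hcard ▸ NeZero.ne (p * q))
  have hbij : Function.Bijective fun t : ZMod p × ZMod q => x ^ t.1.val * y ^ t.2.val :=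
    (Nat.bijective_iff_injective_and_card _).2
      ⟨injective_pow_val_mul_pow_val hpq hx hy, by simp [hcard]⟩
  let e := Equiv.ofBijective _ hbij
  have hsp : (s : ZMod q) ^ p = 1 := hs ▸ pow_orderOf_eq_one _
  have hmul (t u : ZMod p × ZMod q) :
      e.symm (e t * e u) = (t.1 + u.1, t.2 * (s : ZMod q) ^ u.1.val + u.2) :=
    e.symm_apply_eq.2 (pow_val_mul_pow_val_mul hx hy hrel t.1 u.1 t.2 u.2)
  have hsymm (g h : G) := by simpa only [Equiv.apply_symm_apply] using hmul (e.symm g) (e.symm h)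
  let C : MetacyclicCoord p q G :=
    { a := fun g => (e.symm g).1
      b := fun g => (e.symm g).2
      σ := AddChar.zmodChar p hsp
      a_mul := fun g h => congrArg Prod.fst (hsymm g h)
      b_mul := fun g h => congrArg Prod.snd (hsymm g h)
      σ_injective := fun u v h => ZMod.val_injective p <|
        pow_injOn_Iio_orderOf (hs ▸ u.val_lt) (hs ▸ v.val_lt) h
      eq_one := fun g ha hb => by
        rw [← e.apply_symm_apply g, show e.symm g = (0, 0) from Prod.ext ha hb]
        simp [e] }
  refine ⟨C, fun i j => Prod.mk.inj (e.symm_apply_eq.2 ?_ : _ = ((i : ZMod p), (j : ZMod q)))⟩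
  exact (congrArg₂ (· * ·) (pow_val_natCast hx i) (pow_val_natCast hy j)).symm

end Presentation

/-- Let `p, q` be primes with `p ≥ 3` and `p ∣ q − 1`, let `s` have multiplicative order
`p` modulo `q`, and let `G = G_{pq} = ⟨x, y : x^p = y^q = 1, yx = xy^s⟩` be the
corresponding nonabelian metacyclic group of order `pq`.  Then for every positive
integer `k`, `s_{kpℕ}(G_{pq}) = lcm(kp, q) + p − 2 + gcd(kp, q)`. -/
theorem stmt5 {G : Type*} [Group G] [Fintype G] (p q s k : ℕ)
    (hp : p.Prime) (hq : q.Prime) (hp3 : 3 ≤ p) (hpq : p ∣ q - 1)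
    (hs : orderOf (s : ZMod q) = p)
    (x y : G) (hx : orderOf x = p) (hy : orderOf y = q)
    (hrel : y * x = x * y ^ s)
    (hgen : Subgroup.closure {x, y} = (⊤ : Subgroup G))
    (hcard : Fintype.card G = p * q)
    (hk : 0 < k) :
    IsLeast {ℓ : ℕ | ∀ S : Multiset G, ℓ ≤ Multiset.card S →
        ∃ T, T ≤ S ∧ T ≠ 0 ∧ (k * p) ∣ Multiset.card T ∧ IsOneProdSeq T}
      (Nat.lcm (k * p) q + p - 2 + Nat.gcd (k * p) q) := by
  have : Fact p.Prime := ⟨hp⟩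
  have : Fact q.Prime := ⟨hq⟩
  have hlt : p < q := by
    have := Nat.le_of_dvd (Nat.sub_pos_of_lt hq.one_lt) hpq
    omega
  have hco : p.Coprime q := (Nat.coprime_primes hp hq).2 hlt.ne
  obtain ⟨C, hC⟩ :=
    exists_metacyclicCoord hco hs hx hy hrel (Nat.card_eq_fintype_card.trans hcard)
  have hxa : C.a x = 1 := by simpa using (hC 1 0).1
  have hya : C.a y = 0 := by simpa using (hC 0 1).1
  have hyb : C.b y = 1 := by simpa using (hC 0 1).2
  constructor
  · exact fun S hS => C.exists_dvd_card_isOneProdSeq hp3 hlt hk hS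
  · exact fun ℓ hℓ => C.le_of_forall_exists_dvd_card_isOneProdSeq hxa hya hyb hp.pos hq.pos
      (Nat.mul_pos hk hp.pos) hℓ
end

section
/- Let G be a finite abelian group and let S be a 1-product free sequence over G of length m ≥ 1 such that |Σ(S)| = m. Then S = g^{[m]} (the element g repeated m times) for some g ∈ G whose order is greater than m. -/
/-!
In a cancellative commutative monoid, nested subsequences `U < V` of a 1-product free sequence `S`
have different products, so every maximal chain of subsequences of `S` contributes `|S|` elements to
`Σ(S)`. If `S` contains two different elements `a` and `b`, write `S = a b R`. Then `a R`, `b R` and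
`a b R` have three different products, and none of them lies in `Σ(R)`, since all three sequences
properly contain `R`. Hence `|Σ(S)| ≥ |R| + 3 > |S|`. So `|Σ(S)| = |S|` forces `S` to be a constant
sequence `g^{[m]}`, and an order `k ≤ m` of `g` would make `g^{[k]}` a 1-product subsequence.
-/

section CommMonoid

variable {M : Type*} [CommMonoid M] {S T : Multiset M}

/-- The set `Σ(S)` of products of nonempty subsequences of the sequence `S`. Sequences are encoded
as multisets, and subsequences as smaller multisets. -/
def subproducts (S : Multiset M) : Set M :=
  {g | ∃ T ≤ S, T ≠ 0 ∧ T.prod = g}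

/-- A sequence is 1-product free if no nonempty subsequence has product `1`. -/
def IsOneProductFree (S : Multiset M) : Prop :=
  ∀ T ≤ S, T ≠ 0 → T.prod ≠ 1

theorem subproducts_mono (h : S ≤ T) : subproducts S ⊆ subproducts T :=
  fun _ ⟨U, hU, hU₀, hprod⟩ => ⟨U, hU.trans h, hU₀, hprod⟩

theorem finite_subproducts (S : Multiset M) : (subproducts S).Finite :=
  (S.powerset.map Multiset.prod).finite_toSet.subset fun _ ⟨T, hT, _, hprod⟩ =>
    Multiset.mem_map.2 ⟨T, Multiset.mem_powerset.2 hT, hprod⟩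

theorem prod_mem_subproducts_of_lt {U V : Multiset M} (hUV : U < V) (hVS : V ≤ S) :
    V.prod ∈ subproducts S :=
  ⟨V, hVS, (bot_le.trans_lt hUV).ne', rfl⟩

namespace IsOneProductFree

theorem mono (hT : IsOneProductFree T) (h : S ≤ T) : IsOneProductFree S :=
  fun U hU => hT U (hU.trans h)

theorem lt_orderOf_of_replicate {g : M} {m : ℕ}
    (h : IsOneProductFree (Multiset.replicate m g)) (hg : IsOfFinOrder g) : m < orderOf g := by
  by_contra! hle
  have hne : Multiset.replicate (orderOf g) g ≠ 0 := by
    rw [← Multiset.card_pos, Multiset.card_replicate]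
    exact hg.orderOf_pos
  exact h _ ((Multiset.replicate_le_replicate g).2 hle) hne
    (by rw [Multiset.prod_replicate, pow_orderOf_eq_one])

end IsOneProductFree

end CommMonoid

section CancelCommMonoid

variable {M : Type*} [CancelCommMonoid M] {S U V : Multiset M}

namespace IsOneProductFree

theorem prod_ne_prod_of_lt (hV : IsOneProductFree V) (hUV : U < V) : U.prod ≠ V.prod := by
  obtain ⟨W, rfl⟩ := Multiset.le_iff_exists_add.1 hUV.le
  have hW : W ≠ 0 := (pos_of_lt_add_right hUV).ne'
  rw [Multiset.prod_add, Ne, left_eq_mul]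
  exact hV W (Multiset.le_add_left W U) hW

theorem prod_notMem_subproducts_of_lt (hV : IsOneProductFree V) (hUV : U < V) :
    V.prod ∉ subproducts U :=
  fun ⟨_, hT, _, hprod⟩ => hV.prod_ne_prod_of_lt (hT.trans_lt hUV) hprod

theorem card_le_ncard_subproducts (hS : IsOneProductFree S) :
    S.card ≤ (subproducts S).ncard := by
  induction S using Multiset.induction with
  | empty => exact Nat.zero_le _
  | cons a R ih =>
    have hlt : R < a ::ₘ R := Multiset.lt_cons_self R a
    have hssubset : subproducts R ⊂ subproducts (a ::ₘ R) :=
      (Set.ssubset_iff_of_subset (subproducts_mono hlt.le)).2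
        ⟨_, prod_mem_subproducts_of_lt hlt le_rfl, hS.prod_notMem_subproducts_of_lt hlt⟩
    rw [Multiset.card_cons]
    exact (ih (hS.mono hlt.le)).trans_lt (Set.ncard_lt_ncard hssubset (finite_subproducts _))

theorem card_add_three_le_ncard_subproducts {a b : M} {R : Multiset M}
    (hS : IsOneProductFree (a ::ₘ b ::ₘ R)) (hab : a ≠ b) :
    R.card + 3 ≤ (subproducts (a ::ₘ b ::ₘ R)).ncard := by
  have hRa : R < a ::ₘ R := Multiset.lt_cons_self R a
  have hRb : R < b ::ₘ R := Multiset.lt_cons_self R b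
  have haS : a ::ₘ R < a ::ₘ b ::ₘ R := Multiset.cons_lt_cons_iff.2 hRb
  have hbS : b ::ₘ R < a ::ₘ b ::ₘ R := Multiset.lt_cons_self _ a
  have hRS : R < a ::ₘ b ::ₘ R := hRa.trans haS
  let P : Set M := {(a ::ₘ R).prod, (b ::ₘ R).prod, (a ::ₘ b ::ₘ R).prod}
  have hne : (a ::ₘ R).prod ≠ (b ::ₘ R).prod := by
    simpa only [Multiset.prod_cons, Ne, mul_left_inj] using hab
  have hPcard : P.ncard = 3 := Set.ncard_eq_three.2
    ⟨_, _, _, hne, hS.prod_ne_prod_of_lt haS, hS.prod_ne_prod_of_lt hbS, rfl⟩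
  have hdisj : Disjoint (subproducts R) P := by
    rw [Set.disjoint_right]
    rintro _ (rfl | rfl | rfl)
    · exact (hS.mono haS.le).prod_notMem_subproducts_of_lt hRa
    · exact (hS.mono hbS.le).prod_notMem_subproducts_of_lt hRb
    · exact hS.prod_notMem_subproducts_of_lt hRS
  have hsubset : subproducts R ∪ P ⊆ subproducts (a ::ₘ b ::ₘ R) := by
    refine Set.union_subset (subproducts_mono hRS.le) ?_
    rintro _ (rfl | rfl | rfl)
    · exact prod_mem_subproducts_of_lt hRa haS.le
    · exact prod_mem_subproducts_of_lt hRb hbS.le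
    · exact prod_mem_subproducts_of_lt hRS le_rfl
  calc
    R.card + 3 ≤ (subproducts R).ncard + P.ncard :=
      Nat.add_le_add (hS.mono hRS.le).card_le_ncard_subproducts hPcard.ge
    _ = (subproducts R ∪ P).ncard :=
      (Set.ncard_union_eq hdisj (finite_subproducts R) (Set.toFinite P)).symm
    _ ≤ (subproducts (a ::ₘ b ::ₘ R)).ncard := Set.ncard_le_ncard hsubset (finite_subproducts _)

theorem eq_of_mem_of_ncard_subproducts_le (hS : IsOneProductFree S)
    (hcard : (subproducts S).ncard ≤ S.card) {a b : M} (ha : a ∈ S) (hb : b ∈ S) : a = b := by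
  by_contra hab
  obtain ⟨Q, rfl⟩ := Multiset.exists_cons_of_mem ha
  have hbQ : b ∈ Q := (Multiset.mem_cons.1 hb).resolve_left (Ne.symm hab)
  obtain ⟨R, rfl⟩ := Multiset.exists_cons_of_mem hbQ
  have hlower := hS.card_add_three_le_ncard_subproducts hab
  simp only [Multiset.card_cons] at hcard
  omega

theorem exists_eq_replicate (hS : IsOneProductFree S)
    (hcard : (subproducts S).ncard ≤ S.card) : ∃ g, S = Multiset.replicate S.card g := by
  obtain rfl | ⟨g, hg⟩ := S.empty_or_exists_mem
  · exact ⟨1, rfl⟩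
  · exact ⟨g, Multiset.eq_replicate_card.2 fun b hb =>
      hS.eq_of_mem_of_ncard_subproducts_le hcard hb hg⟩

end IsOneProductFree

theorem stmt7_general (hS : IsOneProductFree S) (hcard : (subproducts S).ncard ≤ S.card) :
    ∃ g : M, S = Multiset.replicate S.card g ∧ (IsOfFinOrder g → S.card < orderOf g) := by
  obtain ⟨g, hg⟩ := hS.exists_eq_replicate hcard
  have hfree : IsOneProductFree (Multiset.replicate S.card g) := hg ▸ hS
  exact ⟨g, hg, hfree.lt_orderOf_of_replicate⟩

end CancelCommMonoid

/-- Let `G` be a finite abelian group and `S` a 1-product free sequence over `G` of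
length `m ≥ 1` with `|Σ(S)| = m`.  Then `S = g^{[m]}` for some `g ∈ G` of order
greater than `m`. -/
theorem stmt7 {G : Type*} [CommGroup G] [Fintype G] (S : Multiset G) (m : ℕ)
    (hm : 1 ≤ m) (hlen : Multiset.card S = m)
    (hfree : ∀ T, T ≤ S → T ≠ 0 → T.prod ≠ 1)
    (hsig : Set.ncard {g : G | ∃ T, T ≤ S ∧ T ≠ 0 ∧ T.prod = g} = m) :
    ∃ g : G, S = Multiset.replicate m g ∧ m < orderOf g := by
  subst hlen
  obtain ⟨g, hg, horder⟩ := stmt7_general hfree hsig.le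
  exact ⟨g, hg, horder (isOfFinOrder_of_finite g)⟩
end
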